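/- arXiv:1305.2720 — 4 statements merged into one kernel-verified Lean document; each statement's English description precedes it below -/
import Mathlib

section
/- Let G be a finite group. If T(G) > (1/2)·|G|, then G is supersolvable. -/
open CategoryTheory

/-- `χ : G → ℂ` is an irreducible complex character of the group `G`, i.e. the character of
an irreducible (simple) finite-dimensional complex representation of `G`. -/
def IsIrrChar (G : Type) [Group G] (χ : G → ℂ) : Prop :=
  ∃ V : FDRep ℂ G, Simple V ∧ χ = FDRep.character V

/-- `charDegSum G` is `T(G)`, the sum of the degrees `χ(1)` of the irreducible complex
characters of `G`. -/
noncomputable def charDegSum (G : Type) [Group G] : ℝ :=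
  ∑ᶠ χ ∈ {χ : G → ℂ | IsIrrChar G χ}, (χ 1).re

/-- A group `G` is supersolvable if it has a chain of subgroups
`⊥ = H₀ ≤ H₁ ≤ ⋯ ≤ Hₙ = ⊤`, each normal in `G`, with all quotients `H_{i+1}/H_i` cyclic. -/
def IsSupersolvable (G : Type*) [Group G] : Prop :=
  ∃ (n : ℕ) (H : Fin (n + 1) → Subgroup G),
    H 0 = ⊥ ∧ H (Fin.last n) = ⊤ ∧
    (∀ i : Fin n, H i.castSucc ≤ H i.succ) ∧
    (∀ i : Fin (n + 1), (H i).Normal) ∧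
    (∀ i : Fin n, ∃ _ : ((H i.castSucc).subgroupOf (H i.succ)).Normal,
      IsCyclic (↥(H i.succ) ⧸ (H i.castSucc).subgroupOf (H i.succ)))

/-!
Since `∑ χ(1)² ≤ |G|`, the hypothesis `T(G) > |G| / 2` gives `∑ (χ(1)² - 2 χ(1)) < 0`, where only
the linear characters contribute negative terms, `-1` each. Linear characters act on `Irr(G)` by
twisting, and comparing the orbit of an irreducible `χ` of degree `d ≥ 2` with that of the trivial
character shows that the stabilizer of `χ` has order `s > d² - 2d`.

Each `l` in the stabilizer yields an intertwiner from the twist of `ρ` by `l` to `ρ`. Intertwiners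
for distinct `l` are linearly independent, and all of them commute with `ρ c` for `c` in the
commutator subgroup. If `ρ c` is not scalar, its centralizer preserves a decomposition
`d = a + b` with `a, b ≥ 1`, so `d² - 2d < s ≤ a² + b²`, which leaves only `s = (d - 1)²` and
`s = (d - 1)² + 1`. Taking determinants of intertwiners shows that every prime divisor of `s`
divides `d`, which is impossible for `d ≥ 3`. Hence commutators act by scalars when `d ≥ 3`.

For `d = 2`, let `G` act by conjugation on the three-dimensional space of traceless endomorphisms.
If this representation is irreducible, the previous case applies to it. Otherwise it has a weight
vector `P` of some weight `l`, and the kernel of `ρ`, the scalars, the kernel of `l` and `G` form a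
chain whose quotients are cyclic or abelian. So `G / ker ρ` is supersolvable for every irreducible
`ρ`, and `G` embeds in the product of these quotients.
-/

open Representation Module

section CyclicSeries

variable {G : Type*} [Group G]

/-- `A ≤ B` are normal subgroups of the ambient group and `B / A` is cyclic: one link of a chain
witnessing supersolvability. -/
structure IsCyclicStep (A B : Subgroup G) : Prop where
  le : A ≤ B
  normal_left : A.Normal
  normal_right : B.Normal
  isCyclic : IsCyclic (B ⧸ A.subgroupOf B)

/-- `IsSupersolvableMod N` means that `N` is normal and `G / N` is supersolvable, expressed by a
chain of normal subgroups from `N` up to `G`. -/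
def IsSupersolvableMod (N : Subgroup G) : Prop :=
  Relation.ReflTransGen IsCyclicStep N ⊤

theorem isCyclic_quotient_of_ker_eq {H : Type*} [Group H] (f : G →* H) [IsCyclic f.range]
    {N : Subgroup G} [N.Normal] (hf : f.ker = N) : IsCyclic (G ⧸ N) := by
  subst hf
  exact isCyclic_of_surjective _ (QuotientGroup.quotientKerEquivRange f).symm.surjective

theorem IsCyclicStep.inf {A B : Subgroup G} (h : IsCyclicStep A B) (M : Subgroup G) [M.Normal] :
    IsCyclicStep (A ⊓ M) (B ⊓ M) := by
  have := h.normal_left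
  have := h.normal_right
  have := h.isCyclic
  refine ⟨inf_le_inf_right M h.le, inferInstance, inferInstance, isCyclic_quotient_of_ker_eq
    ((QuotientGroup.mk' (A.subgroupOf B)).comp (Subgroup.inclusion inf_le_left)) ?_⟩
  ext x
  simp [MonoidHom.mem_ker, Subgroup.mem_subgroupOf, (Subgroup.mem_inf.1 x.2).2]

theorem isCyclicStep_of_ker_eq [Finite G] {R : Type*} [CommRing R] [IsDomain R]
    {A B : Subgroup G} [A.Normal] [B.Normal] (h : A ≤ B) (f : B →* Rˣ)
    (hf : f.ker = A.subgroupOf B) : IsCyclicStep A B :=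
  have : Finite f.range := Finite.of_surjective _ f.rangeRestrict_surjective
  ⟨h, inferInstance, inferInstance, isCyclic_quotient_of_ker_eq f hf⟩

theorem isCyclicStep_sup_zpowers {A : Subgroup G} (h : commutator G ≤ A) (x : G) :
    IsCyclicStep A (A ⊔ Subgroup.zpowers x) := by
  have hA : A.Normal := .of_commutator_le G h
  have : IsCyclic (Subgroup.zpowers x ⧸ A.subgroupOf (Subgroup.zpowers x)) :=
    isCyclic_of_surjective _ (QuotientGroup.mk'_surjective _)
  refine ⟨le_sup_left, hA, .of_commutator_le G (h.trans le_sup_left), ?_⟩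
  rw [sup_comm]
  exact isCyclic_of_surjective _
    (QuotientGroup.quotientInfEquivProdNormalQuotient (Subgroup.zpowers x) A).surjective

theorem isSupersolvableMod_top : IsSupersolvableMod (⊤ : Subgroup G) :=
  .refl

theorem IsSupersolvableMod.normal {N : Subgroup G} (h : IsSupersolvableMod N) : N.Normal := by
  obtain rfl | ⟨M, hNM, -⟩ := h.cases_head
  exacts [inferInstance, hNM.normal_left]

theorem IsSupersolvableMod.of_step {A B : Subgroup G} (hAB : IsCyclicStep A B)
    (hB : IsSupersolvableMod B) : IsSupersolvableMod A :=
  .head hAB hB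

theorem IsSupersolvableMod.inf {N M : Subgroup G} (hN : IsSupersolvableMod N)
    (hM : IsSupersolvableMod M) : IsSupersolvableMod (N ⊓ M) := by
  have := hM.normal
  have hNM : Relation.ReflTransGen IsCyclicStep (N ⊓ M) (⊤ ⊓ M) :=
    Relation.ReflTransGen.lift (· ⊓ M) (fun _ _ h => h.inf M) _ _ hN
  exact (top_inf_eq M ▸ hNM).trans hM

theorem isSupersolvableMod_of_commutator_le [Finite G] {N : Subgroup G} (h : commutator G ≤ N) :
    IsSupersolvableMod N := by
  induction N using WellFoundedGT.induction with
  | _ N ih =>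
    obtain rfl | hN := eq_or_ne N ⊤
    · exact isSupersolvableMod_top
    obtain ⟨x, -, hx⟩ := SetLike.exists_of_lt hN.lt_top
    refine .of_step (isCyclicStep_sup_zpowers h x) (ih _ ?_ (h.trans le_sup_left))
    exact left_lt_sup.2 fun hle => hx (hle (Subgroup.mem_zpowers x))

theorem isSupersolvableMod_bot_of_residually [Finite G]
    (h : ∀ g : G, g ≠ 1 → ∃ N : Subgroup G, IsSupersolvableMod N ∧ g ∉ N) :
    IsSupersolvableMod (⊥ : Subgroup G) := by
  classical
  cases nonempty_fintype G
  choose! N hN hgN using h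
  have hinf : IsSupersolvableMod ((Finset.univ.filter (· ≠ (1 : G))).inf N) :=
    Finset.inf_induction isSupersolvableMod_top (fun _ h₁ _ h₂ => h₁.inf h₂)
      fun g hg => hN g (Finset.mem_filter.1 hg).2
  convert hinf
  refine (eq_bot_iff.2 fun g hg => ?_).symm
  by_contra hne
  exact hgN g hne (Finset.inf_le (f := N) (Finset.mem_filter.2 ⟨Finset.mem_univ g, hne⟩) hg)

theorem exists_relSeries_of_reflTransGen {α : Type*} {r : α → α → Prop} {a b : α}
    (h : Relation.ReflTransGen r a b) :
    ∃ s : RelSeries {(x, y) : α × α | r x y}, s.head = a ∧ s.last = b := by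
  induction h using Relation.ReflTransGen.head_induction_on with
  | refl => exact ⟨RelSeries.singleton _ b, rfl, rfl⟩
  | head hac _ ih =>
    obtain ⟨s, rfl, hs⟩ := ih
    exact ⟨s.cons _ hac, s.head_cons _ _, (s.last_cons _ _).trans hs⟩

theorem IsSupersolvableMod.isSupersolvable (h : IsSupersolvableMod (⊥ : Subgroup G)) :
    IsSupersolvable G := by
  obtain ⟨s, hbot, htop⟩ := exists_relSeries_of_reflTransGen h
  have hstep (i : Fin s.length) : IsCyclicStep (s i.castSucc) (s i.succ) := s.step i
  refine ⟨s.length, s, hbot, htop, fun i => (hstep i).le, ?_, fun i => ?_⟩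
  · refine Fin.cases ?_ fun i => (hstep i).normal_right
    rw [s.apply_zero, hbot]
    infer_instance
  · have := (hstep i).normal_left
    exact ⟨inferInstance, (hstep i).isCyclic⟩

end CyclicSeries

section WeightVectors

variable {k G V : Type*} [Field k] [Group G] [AddCommGroup V] [Module k V]

/-- A weight vector (semi-invariant) of weight `l` is a common eigenvector on which the group acts
through the linear character `l`. -/
def IsWeightVector (ρ : Representation k G V) (l : G →* kˣ) (v : V) : Prop :=
  v ≠ 0 ∧ ∀ g, ρ g v = (l g : k) • v

theorem exists_isWeightVector_of_apply_mem_span {ρ : Representation k G V} {v : V} (hv : v ≠ 0)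
    (h : ∀ g, ρ g v ∈ k ∙ v) : ∃ l, IsWeightVector ρ l v := by
  choose a ha using fun g => Submodule.mem_span_singleton.1 (h g)
  have hinj := smul_left_injective k hv
  let f : G →* k :=
    { toFun := a
      map_one' := hinj (by simp [ha])
      map_mul' := fun x y => hinj (by simp [ha, mul_comm (a x), mul_smul, ← map_smul]) }
  exact ⟨f.toHomUnits, hv, fun g => (ha g).symm⟩

theorem linearIndependent_of_isWeightVector {ρ : Representation k G V} {ι : Type*}
    {l : ι → G →* kˣ} (hl : Function.Injective l) {w : ι → V}
    (hw : ∀ i, IsWeightVector ρ (l i) (w i)) : LinearIndependent k w := by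
  rw [linearIndependent_iff']
  intro s a hsum i hi
  have hchar : LinearIndependent k fun i => (fun g => (l i g : k) : G → k) :=
    (linearIndependent_monoidHom G k).comp (fun i => (Units.coeHom k).comp (l i)) fun i j hij =>
      hl (MonoidHom.ext fun g => Units.ext (DFunLike.congr_fun hij g))
  suffices a i • w i = 0 from (smul_eq_zero.1 this).resolve_right (hw i).1
  rw [← forall_dual_apply_eq_zero_iff k]
  intro φ
  rw [map_smul, smul_eq_mul]
  refine linearIndependent_iff'.1 hchar s (fun i => a i * φ (w i)) (funext fun g => ?_) i hi
  have := congrArg (fun v => φ (ρ g v)) hsum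
  simpa [(hw _).2, mul_assoc, mul_left_comm, mul_comm] using this

end WeightVectors

section Scalars

variable {k G V : Type*} [Field k] [Group G] [AddCommGroup V] [Module k V]

/-- The subgroup of elements acting by scalars, written `Z(χ)` when `χ` is the character of the
representation. -/
def scalarSubgroup (ρ : Representation k G V) : Subgroup G :=
  (Units.map (algebraMap k (End k V)).toMonoidHom).range.comap ρ.toHomUnits

variable {ρ : Representation k G V}

theorem mem_scalarSubgroup [Nontrivial V] {g : G} :
    g ∈ scalarSubgroup ρ ↔ ∃ a : k, ρ g = algebraMap k (End k V) a := by
  simp only [scalarSubgroup, Subgroup.mem_comap, MonoidHom.mem_range, Units.ext_iff]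
  refine ⟨fun ⟨a, ha⟩ => ⟨a, ha.symm⟩, fun ⟨a, ha⟩ => ?_⟩
  have ha0 : a ≠ 0 := by
    rintro rfl
    exact (ρ.toHomUnits g).ne_zero (ha.trans (map_zero _))
  exact ⟨Units.mk0 a ha0, ha.symm⟩

instance normal_scalarSubgroup : (scalarSubgroup ρ).Normal := by
  refine ⟨fun g ⟨a, ha⟩ h => ⟨a, ?_⟩⟩
  rw [map_mul, map_mul, map_inv, ← ha, eq_mul_inv_iff_mul_eq]
  exact Units.ext (Algebra.commutes (a : k) (ρ h))

theorem ker_le_scalarSubgroup : ρ.ker ≤ scalarSubgroup ρ :=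
  fun g hg => ⟨1, Units.ext (by simpa using (MonoidHom.mem_ker.1 hg).symm)⟩

theorem isCyclicStep_ker_scalarSubgroup [Finite G] [Nontrivial V] (ρ : Representation k G V) :
    IsCyclicStep ρ.ker (scalarSubgroup ρ) := by
  obtain ⟨v, hv⟩ := exists_ne (0 : V)
  have hscalar (g : scalarSubgroup ρ) : ∃ a : k, ρ g = algebraMap k (End k V) a :=
    mem_scalarSubgroup.1 g.2
  obtain ⟨l, -, hl⟩ := exists_isWeightVector_of_apply_mem_span
    (ρ := ρ.comp (scalarSubgroup ρ).subtype) hv fun g => by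
      obtain ⟨a, ha⟩ := hscalar g
      simp [ha, Submodule.mem_span_singleton]
  refine isCyclicStep_of_ker_eq ker_le_scalarSubgroup l (Subgroup.ext fun g => ?_)
  obtain ⟨a, ha⟩ := hscalar g
  have hla : a = l g := smul_left_injective k hv (by simpa [ha] using hl g)
  simp [MonoidHom.mem_ker, Subgroup.mem_subgroupOf, ha, hla]

theorem isSupersolvableMod_ker_of_commutator_le_scalarSubgroup [Finite G] [Nontrivial V]
    (h : commutator G ≤ scalarSubgroup ρ) : IsSupersolvableMod ρ.ker :=
  .of_step (isCyclicStep_ker_scalarSubgroup ρ) (isSupersolvableMod_of_commutator_le h)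

theorem scalarSubgroup_eq_top_of_finrank_eq_one (h : finrank k V = 1) :
    scalarSubgroup ρ = ⊤ := by
  have := Module.nontrivial_of_finrank_pos (h ▸ one_pos)
  refine eq_top_iff.2 fun g _ => mem_scalarSubgroup.2 ?_
  obtain ⟨a, ha, -⟩ := LinearMap.existsUnique_eq_smul_id_of_finrank_eq_one h (ρ g)
  exact ⟨a, ha⟩

end Scalars

section Centralizer

variable {k V : Type*} [Field k] [AddCommGroup V] [Module k V]

theorem isSemisimple_of_pow_eq_one {T : End k V} {n : ℕ} (hn : (n : k) ≠ 0) (hT : T ^ n = 1) :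
    T.IsSemisimple :=
  End.isSemisimple_of_squarefree_aeval_eq_zero
    (Polynomial.separable_X_pow_sub_C 1 hn one_ne_zero).squarefree (by simp [hT])

variable [FiniteDimensional k V]

theorem card_le_of_forall_mem_invtSubmodule {E F : Submodule k V} (hEF : IsCompl E F) {ι : Type*}
    [Fintype ι] {w : ι → End k V} (hw : LinearIndependent k w)
    (hE : ∀ i, E ∈ (w i).invtSubmodule) (hF : ∀ i, F ∈ (w i).invtSubmodule) :
    Fintype.card ι ≤ finrank k E ^ 2 + finrank k F ^ 2 := by
  let f : End k E × End k F →ₗ[k] End k V := LinearMap.ofIsComplProd hEF ∘ₗ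
    (E.subtype.compRight k).prodMap (F.subtype.compRight k)
  have hrange : Submodule.span k (Set.range w) ≤ f.range := by
    rw [Submodule.span_le, Set.range_subset_iff]
    refine fun i => ⟨((w i).restrict (hE i), (w i).restrict (hF i)), ?_⟩
    exact LinearMap.ofIsCompl_eq hEF (fun _ => rfl) fun _ => rfl
  calc Fintype.card ι = finrank k (Submodule.span k (Set.range w)) :=
        (finrank_span_eq_card hw).symm
    _ ≤ finrank k f.range := Submodule.finrank_mono hrange
    _ ≤ finrank k (End k E × End k F) := LinearMap.finrank_range_le f
    _ = finrank k E ^ 2 + finrank k F ^ 2 := by simp [finrank_linearMap, sq]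

theorem exists_isCompl_invariant_of_isSemisimple [IsAlgClosed k] {T : End k V}
    (hT : T.IsSemisimple) (hscalar : ∀ a, T ≠ algebraMap k (End k V) a) :
    ∃ E F : Submodule k V, IsCompl E F ∧ E ≠ ⊥ ∧ F ≠ ⊥ ∧
      ∀ S : End k V, Commute T S → E ∈ S.invtSubmodule ∧ F ∈ S.invtSubmodule := by
  have : Nontrivial V := by
    by_contra hV
    rw [not_nontrivial_iff_subsingleton] at hV
    exact hscalar 0 (Subsingleton.elim _ _)
  obtain ⟨c, hc⟩ := End.exists_eigenvalue T
  have hcompl : IsCompl (T.eigenspace c) (⨆ (c') (_ : c' ≠ c), T.eigenspace c') := by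
    refine ⟨T.eigenspaces_iSupIndep c, codisjoint_iff.2 ?_⟩
    rw [← iSup_split_single, hT.iSup_eigenspace_eq_top]
  have hmaps {S : End k V} (hS : Commute T S) (c' : k) : T.eigenspace c' ∈ S.invtSubmodule :=
    End.mapsTo_genEigenspace_of_comm hS c' 1
  refine ⟨_, _, hcompl, hc, fun hbot => ?_, fun S hS => ⟨hmaps hS c, ?_⟩⟩
  · refine hscalar c (LinearMap.ext fun v => End.mem_eigenspace_iff.1 ?_)
    exact eq_top_of_isCompl_bot (hbot ▸ hcompl) ▸ Submodule.mem_top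
  · exact iSup₂_le fun c' hc' => (hmaps hS c').trans <|
      Submodule.comap_mono (le_iSup₂ (f := fun c' _ => T.eigenspace c') c' hc')

theorem exists_card_le_of_commute [IsAlgClosed k] {T : End k V} (hT : T.IsSemisimple)
    (hscalar : ∀ a, T ≠ algebraMap k (End k V) a) {ι : Type*} [Fintype ι] {w : ι → End k V}
    (hw : LinearIndependent k w) (hcomm : ∀ i, Commute T (w i)) :
    ∃ a b, 0 < a ∧ 0 < b ∧ a + b = finrank k V ∧ Fintype.card ι ≤ a ^ 2 + b ^ 2 := by
  obtain ⟨E, F, hEF, hE, hF, hinv⟩ := exists_isCompl_invariant_of_isSemisimple hT hscalar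
  exact ⟨finrank k E, finrank k F, Submodule.one_le_finrank_iff.2 hE,
    Submodule.one_le_finrank_iff.2 hF, Submodule.finrank_add_eq_of_isCompl hEF,
    card_le_of_forall_mem_invtSubmodule hEF hw
      (fun i => (hinv _ (hcomm i)).1) fun i => (hinv _ (hcomm i)).2⟩

end Centralizer

section Arithmetic

theorem exists_prime_dvd_sq_not_dvd_succ {e : ℕ} (he : e ≠ 1) :
    ∃ p, p.Prime ∧ p ∣ e ^ 2 ∧ ¬ p ∣ e + 1 := by
  obtain ⟨p, hp, hpe⟩ := Nat.exists_prime_and_dvd he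
  exact ⟨p, hp, dvd_pow hpe two_ne_zero, fun h =>
    hp.one_lt.ne' (Nat.dvd_one.1 ((Nat.dvd_add_right hpe).1 h))⟩

theorem not_four_dvd_sq_add_one (e : ℕ) : ¬ 4 ∣ e ^ 2 + 1 := by
  rw [Nat.dvd_iff_mod_eq_zero, Nat.add_mod, Nat.pow_mod]
  have := Nat.mod_lt e four_pos
  interval_cases e % 4 <;> simp

theorem exists_prime_dvd_sq_add_one_not_dvd_succ {e : ℕ} (he : 2 ≤ e) :
    ∃ p, p.Prime ∧ p ∣ e ^ 2 + 1 ∧ ¬ p ∣ e + 1 := by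
  by_contra! h
  have hpow : e ^ 2 + 1 = 2 ^ (e ^ 2 + 1).primeFactorsList.length := by
    refine Nat.eq_prime_pow_of_unique_prime_dvd (Nat.succ_ne_zero _) fun {p} hp hpe => ?_
    have hdvd : p ∣ (e + 1) * (e - 1) + 2 := by
      convert hpe using 1
      rw [← Nat.sq_sub_sq, one_pow]
      have := Nat.one_le_pow 2 e (by lia)
      lia
    exact (Nat.prime_dvd_prime_iff_eq hp Nat.prime_two).1
      ((Nat.dvd_add_right (dvd_mul_of_dvd_left (h p hp hpe) _)).1 hdvd)
  obtain hlen | hlen := lt_or_ge (e ^ 2 + 1).primeFactorsList.length 2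
  · have := Nat.pow_le_pow_right two_pos (Nat.le_of_lt_succ hlen)
    nlinarith
  · exact not_four_dvd_sq_add_one e (hpow ▸ pow_dvd_pow 2 hlen)

theorem exists_prime_dvd_not_dvd_of_sq_lt {a b s : ℕ} (ha : 0 < a) (hb : 0 < b) (hab : 3 ≤ a + b)
    (hlt : (a + b) ^ 2 < s + 2 * (a + b)) (hle : s ≤ a ^ 2 + b ^ 2) :
    ∃ p, p.Prime ∧ p ∣ s ∧ ¬ p ∣ a + b := by
  obtain ⟨e, he⟩ : ∃ e, a + b = e + 1 := ⟨a + b - 1, by lia⟩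
  have hmul : a + b ≤ a * b + 1 := by nlinarith
  have hs : s = e ^ 2 ∨ s = e ^ 2 + 1 := by
    have hsq : (a + b) ^ 2 = e ^ 2 + 2 * e + 1 := by rw [he]; ring
    have : (a + b) ^ 2 = a ^ 2 + b ^ 2 + 2 * (a * b) := by ring
    lia
  rw [he]
  obtain rfl | rfl := hs
  exacts [exists_prime_dvd_sq_not_dvd_succ (by lia),
    exists_prime_dvd_sq_add_one_not_dvd_succ (by lia)]

end Arithmetic

section Twists

variable {k G V : Type*} [Field k] [Group G] [AddCommGroup V] [Module k V]

/-- The tensor product of `ρ` with the linear character `l`. -/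
def twist (l : G →* kˣ) (ρ : Representation k G V) : Representation k G V where
  toFun g := (l g : k) • ρ g
  map_one' := by simp
  map_mul' g h := by simp [smul_smul, mul_comm]

/-- Linear characters act on functions by pointwise multiplication; on characters of
representations this is the action by twists. -/
instance linearCharMulAction : MulAction (G →* kˣ) (G → k) where
  smul l χ g := l g * χ g
  one_smul χ := funext fun g => one_mul (χ g)
  mul_smul l l' χ := funext fun g => mul_assoc (l g : k) (l' g) (χ g)

theorem linearChar_smul_apply (l : G →* kˣ) (χ : G → k) (g : G) : (l • χ) g = l g * χ g :=
  rfl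

theorem character_twist (l : G →* kˣ) (ρ : Representation k G V) :
    (twist l ρ).character = l • ρ.character :=
  funext fun g => map_smul (LinearMap.trace k V) (l g : k) (ρ g)

variable {ρ : Representation k G V} {l : G →* kˣ} {P : End k V}

theorem linHom_apply_eq_smul_iff {g : G} {a : k} :
    linHom ρ ρ g P = a • P ↔ ρ g * P = a • (P * ρ g) := by
  have hunit : IsUnit (ρ g) := (ρ.toHomUnits g).isUnit
  rw [linHom_apply, ← hunit.mul_left_inj]
  simp [← Module.End.mul_eq_comp, mul_assoc, ← map_mul]

theorem isWeightVector_linHom_iff :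
    IsWeightVector (linHom ρ ρ) l P ↔ P ≠ 0 ∧ ∀ g, ρ g * P = (l g : k) • (P * ρ g) := by
  simp only [IsWeightVector, linHom_apply_eq_smul_iff]

theorem IsWeightVector.exists_intertwiningMap (hP : IsWeightVector (linHom ρ ρ) l P) :
    ∃ f : IntertwiningMap (twist l ρ) ρ, f.toLinearMap = P :=
  ⟨⟨P, fun g => by
    simpa [twist, ← Module.End.mul_eq_comp] using ((isWeightVector_linHom_iff.1 hP).2 g).symm⟩, rfl⟩

theorem isWeightVector_of_intertwiningMap {f : IntertwiningMap (twist l ρ) ρ} (hf : f ≠ 0) :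
    IsWeightVector (linHom ρ ρ) l f.toLinearMap :=
  isWeightVector_linHom_iff.2 ⟨fun h => hf (IntertwiningMap.ext h), fun g => by
    simpa [twist, ← Module.End.mul_eq_comp] using (f.isIntertwining' g).symm⟩

theorem IsWeightVector.commute_of_apply_eq_one (hP : IsWeightVector (linHom ρ ρ) l P) {g : G}
    (hg : l g = 1) : Commute (ρ g) P := by
  simpa [hg, commute_iff_eq] using (isWeightVector_linHom_iff.1 hP).2 g

theorem apply_eq_one_of_mem_commutator {A : Type*} [CommGroup A] (f : G →* A) {c : G}
    (hc : c ∈ commutator G) : f c = 1 :=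
  Abelianization.commutator_subset_ker f hc

variable [FiniteDimensional k V] [IsIrreducible ρ]

theorem IsWeightVector.isUnit_of_isIrreducible (hP : IsWeightVector (linHom ρ ρ) l P) :
    IsUnit P := by
  obtain ⟨f, rfl⟩ := hP.exists_intertwiningMap
  have hsurj : Function.Surjective f.toLinearMap :=
    (IsIrreducible.surjective_or_eq_zero f).resolve_right fun hf => hP.1 (by simp [hf])
  exact (Module.End.isUnit_iff _).2 ⟨LinearMap.injective_iff_surjective.2 hsurj, hsurj⟩

theorem IsWeightVector.pow_finrank_eq_one (hP : IsWeightVector (linHom ρ ρ) l P) :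
    l ^ finrank k V = 1 := by
  ext g
  have hdetP : LinearMap.det P ≠ 0 :=
    (hP.isUnit_of_isIrreducible.map LinearMap.det).ne_zero
  have hdetg : LinearMap.det (ρ g) ≠ 0 :=
    ((ρ.toHomUnits g).isUnit.map LinearMap.det).ne_zero
  have hdet := congrArg LinearMap.det ((isWeightVector_linHom_iff.1 hP).2 g)
  rw [LinearMap.det_smul, map_mul, map_mul, mul_comm (LinearMap.det P)] at hdet
  simpa using (mul_eq_right₀ (mul_ne_zero hdetg hdetP)).1 hdet.symm

variable [Finite G] [NeZero (Nat.card G : k)] [IsAlgClosed k]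

theorem exists_isWeightVector_linHom_of_mem_stabilizer
    (hl : l ∈ MulAction.stabilizer (G →* kˣ) ρ.character) :
    ∃ P, IsWeightVector (linHom ρ ρ) l P := by
  have := Fintype.ofFinite G
  have := invertibleOfNonzero (NeZero.ne (Nat.card G : k))
  have hrank : (finrank k (IntertwiningMap (twist l ρ) ρ) : k) = 1 := by
    rw [← card_inv_mul_sum_char_mul_char_eq_finrank, character_twist,
      MulAction.mem_stabilizer_iff.1 hl, card_inv_mul_sum_char_mul_char_eq_finrank,
      IsIrreducible.finrank_intertwiningMap_self, Nat.cast_one]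
  have : Nontrivial (IntertwiningMap (twist l ρ) ρ) := by
    by_contra h
    rw [not_nontrivial_iff_subsingleton] at h
    simp [finrank_zero_of_subsingleton] at hrank
  obtain ⟨f, hf⟩ := exists_ne (0 : IntertwiningMap (twist l ρ) ρ)
  exact ⟨f.toLinearMap, isWeightVector_of_intertwiningMap hf⟩

theorem prime_dvd_finrank_of_dvd_card_stabilizer {p : ℕ} (hp : p.Prime)
    (hdvd : p ∣ Nat.card (MulAction.stabilizer (G →* kˣ) ρ.character)) : p ∣ finrank k V := by
  have := Fact.mk hp
  obtain ⟨l, hl⟩ := exists_prime_orderOf_dvd_card' p hdvd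
  obtain ⟨P, hP⟩ := exists_isWeightVector_linHom_of_mem_stabilizer l.2
  rw [← hl]
  exact orderOf_dvd_of_pow_eq_one (Subtype.ext hP.pow_finrank_eq_one)

theorem commutator_le_scalarSubgroup_of_sq_lt (hV : 3 ≤ finrank k V)
    (hcard : finrank k V ^ 2 <
      Nat.card (MulAction.stabilizer (G →* kˣ) ρ.character) + 2 * finrank k V) :
    commutator G ≤ scalarSubgroup ρ := by
  have : Nontrivial V := Module.nontrivial_of_finrank_pos (R := k) (by lia)
  have := Fintype.ofFinite (MulAction.stabilizer (G →* kˣ) ρ.character)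
  choose w hw using fun l : MulAction.stabilizer (G →* kˣ) ρ.character =>
    exists_isWeightVector_linHom_of_mem_stabilizer l.2
  intro c hc
  rw [mem_scalarSubgroup]
  by_contra! hscalar
  have hss : End.IsSemisimple (ρ c) :=
    isSemisimple_of_pow_eq_one (NeZero.ne (Nat.card G : k)) (by
      rw [← map_pow, pow_card_eq_one', map_one])
  obtain ⟨a, b, ha, hb, hab, hle⟩ := exists_card_le_of_commute hss hscalar
    (linearIndependent_of_isWeightVector Subtype.val_injective hw) fun l =>
      (hw l).commute_of_apply_eq_one (apply_eq_one_of_mem_commutator l.1 hc)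
  rw [← Nat.card_eq_fintype_card] at hle
  rw [← hab] at hV hcard
  obtain ⟨p, hp, hdvd, hndvd⟩ := exists_prime_dvd_not_dvd_of_sq_lt ha hb hV hcard hle
  exact hndvd (hab ▸ prime_dvd_finrank_of_dvd_card_stabilizer hp hdvd)

end Twists

section Subrepresentations

variable {k G V : Type*} [Field k] [Group G] [AddCommGroup V] [Module k V]
  {ρ : Representation k G V}

theorem isCompl_toSubmodule {S S' : Subrepresentation ρ} (h : IsCompl S S') :
    IsCompl S.toSubmodule S'.toSubmodule := by
  rw [isCompl_iff, disjoint_iff, codisjoint_iff]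
  exact ⟨congrArg (·.toSubmodule) h.inf_eq_bot, congrArg (·.toSubmodule) h.sup_eq_top⟩

theorem toSubmodule_ne_bot {S : Subrepresentation ρ} (h : S ≠ ⊥) : S.toSubmodule ≠ ⊥ :=
  fun h' => h (Subrepresentation.toSubmodule_injective h')

theorem exists_isCompl_of_not_isIrreducible [Nontrivial V] [IsSemisimpleRepresentation ρ]
    (h : ¬ IsIrreducible ρ) : ∃ S S' : Subrepresentation ρ,
      IsCompl S.toSubmodule S'.toSubmodule ∧ S.toSubmodule ≠ ⊥ ∧ S'.toSubmodule ≠ ⊥ := by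
  have : Nontrivial (Subrepresentation ρ) :=
    ⟨⊥, ⊤, fun h => bot_ne_top (α := Submodule k V) (congrArg (·.toSubmodule) h)⟩
  obtain ⟨S, hbot, htop⟩ : ∃ S : Subrepresentation ρ, S ≠ ⊥ ∧ S ≠ ⊤ := by
    by_contra! hS
    exact h ⟨fun S => or_iff_not_imp_left.2 (hS S)⟩
  obtain ⟨S', hS'⟩ := exists_isCompl S
  refine ⟨S, S', isCompl_toSubmodule hS', toSubmodule_ne_bot hbot, toSubmodule_ne_bot ?_⟩
  rintro rfl
  exact htop (eq_top_of_isCompl_bot hS')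

theorem exists_isWeightVector_of_finrank_eq_one {S : Subrepresentation ρ}
    (hS : finrank k S.toSubmodule = 1) : ∃ l, ∃ v ∈ S, IsWeightVector ρ l v := by
  obtain ⟨v, hv, hspan⟩ := finrank_eq_one_iff'.1 hS
  have hv0 : (v : V) ≠ 0 := fun h => hv (Subtype.ext h)
  obtain ⟨l, hl⟩ := exists_isWeightVector_of_apply_mem_span (ρ := ρ) hv0 fun g => by
    obtain ⟨a, ha⟩ := hspan ⟨ρ g v, S.apply_mem_toSubmodule g v.2⟩
    exact Submodule.mem_span_singleton.2 ⟨a, congrArg Subtype.val ha⟩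
  exact ⟨l, v, v.2, hl⟩

theorem exists_isWeightVector_of_finrank_eq_three [IsSemisimpleRepresentation ρ]
    (hV : finrank k V = 3) (h : ¬ IsIrreducible ρ) : ∃ l v, IsWeightVector ρ l v := by
  have : Nontrivial V := Module.nontrivial_of_finrank_pos (R := k) (by lia)
  have : FiniteDimensional k V := Module.finite_of_finrank_pos (by lia)
  obtain ⟨S, S', hcompl, hS, hS'⟩ := exists_isCompl_of_not_isIrreducible h
  have hsum := Submodule.finrank_add_eq_of_isCompl hcompl
  have := Submodule.one_le_finrank_iff.2 hS
  have := Submodule.one_le_finrank_iff.2 hS'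
  obtain h1 | h1 : finrank k S.toSubmodule = 1 ∨ finrank k S'.toSubmodule = 1 := by lia
  all_goals
    obtain ⟨l, v, -, hv⟩ := exists_isWeightVector_of_finrank_eq_one h1
    exact ⟨l, v, hv⟩

end Subrepresentations

section Traceless

variable {k G V : Type*} [Field k] [Group G] [AddCommGroup V] [Module k V]

/-- The representation by conjugation on the space of endomorphisms of trace zero. -/
noncomputable def tracelessSubrepresentation (ρ : Representation k G V) :
    Subrepresentation (linHom ρ ρ) where
  toSubmodule := (LinearMap.trace k V).ker
  apply_mem_toSubmodule g T hT := by
    rw [LinearMap.mem_ker] at hT ⊢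
    rw [linHom_apply, ← Module.End.mul_eq_comp, ← Module.End.mul_eq_comp, LinearMap.trace_mul_comm,
      mul_assoc, ← map_mul, inv_mul_cancel, map_one, mul_one, hT]

variable [FiniteDimensional k V]

theorem finrank_ker_trace_add_one [Nontrivial V] :
    finrank k (LinearMap.trace k V).ker + 1 = finrank k V ^ 2 := by
  obtain ⟨v, hv⟩ := exists_ne (0 : V)
  obtain ⟨φ, hφ⟩ := Projective.exists_dual_ne_zero k hv
  have htrace : LinearMap.trace k V ≠ 0 := fun h =>
    hφ (by rw [← LinearMap.trace_smulRight, h, LinearMap.zero_apply])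
  rw [Dual.finrank_ker_add_one_of_ne_zero htrace, finrank_linearMap, sq]

theorem finrank_traceless_of_finrank_eq_two (ρ : Representation k G V) (hV : finrank k V = 2) :
    finrank k (tracelessSubrepresentation ρ).toSubmodule = 3 := by
  have : Nontrivial V := Module.nontrivial_of_finrank_pos (R := k) (by lia)
  have htrace := finrank_ker_trace_add_one (k := k) (V := V)
  rw [hV] at htrace
  exact Nat.succ_injective htrace

theorem exists_add_algebraMap_of_finrank_ne_zero (hV : (finrank k V : k) ≠ 0) (T : End k V) :
    ∃ T₀ a, LinearMap.trace k V T₀ = 0 ∧ T = T₀ + algebraMap k (End k V) a := by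
  refine ⟨T - algebraMap k _ (LinearMap.trace k V T / finrank k V), _, ?_,
    (sub_add_cancel _ _).symm⟩
  rw [Algebra.algebraMap_eq_smul_one, map_sub, map_smul, LinearMap.trace_one, smul_eq_mul,
    div_mul_cancel₀ _ hV, sub_self]

variable {ρ : Representation k G V}

theorem scalarSubgroup_traceless_le (hV : (finrank k V : k) ≠ 0)
    [Nontrivial (tracelessSubrepresentation ρ).toSubmodule] :
    scalarSubgroup (tracelessSubrepresentation ρ).toRepresentation ≤ scalarSubgroup ρ := by
  have : Nontrivial V := Module.nontrivial_of_finrank_pos (R := k) (Nat.pos_of_ne_zero fun h =>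
    hV (by rw [h, Nat.cast_zero]))
  intro g hg
  obtain ⟨a, ha⟩ := mem_scalarSubgroup.1 hg
  have hmul {X : End k V} (hX : LinearMap.trace k V X = 0) : ρ g * X = a • (X * ρ g) :=
    linHom_apply_eq_smul_iff.1 (congrArg Subtype.val (LinearMap.congr_fun ha ⟨X, hX⟩))
  obtain ⟨T₀, b, hT₀, hT⟩ := exists_add_algebraMap_of_finrank_ne_zero hV (ρ g)
  rw [mem_scalarSubgroup]
  by_cases h0 : T₀ = 0
  · exact ⟨b, by rw [hT, h0, zero_add]⟩
  have ha1 : a = 1 := by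
    have hunit : IsUnit (ρ g) := (ρ.toHomUnits g).isUnit
    have hcomm : ρ g * T₀ = T₀ * ρ g := by
      rw [hT, add_mul, mul_add, Algebra.commutes]
    have h1 : (1 - a) • T₀ = 0 := by
      rw [← hunit.mul_left_eq_zero, smul_mul_assoc, sub_smul, one_smul, ← hmul hT₀, hcomm, sub_self]
    exact (sub_eq_zero.1 ((smul_eq_zero.1 h1).resolve_right h0)).symm
  refine (Algebra.IsCentral.mem_center_iff k).1 (Subalgebra.mem_center_iff.2 fun X => ?_)
  obtain ⟨X₀, x, hX₀, rfl⟩ := exists_add_algebraMap_of_finrank_ne_zero hV X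
  rw [add_mul, mul_add, hmul hX₀, ha1, one_smul, Algebra.commutes]

end Traceless

section DegreeTwo

variable {k G V : Type*} [Field k] [Group G] [AddCommGroup V] [Module k V]

theorem finrank_eigenspace_eq_one_of_ne (hV : finrank k V = 2) {T : End k V} {c c' : k}
    (hc : T.HasEigenvalue c) (hc' : T.HasEigenvalue c') (hne : c ≠ c') :
    finrank k (T.eigenspace c) = 1 := by
  have : FiniteDimensional k V := Module.finite_of_finrank_pos (by lia)
  have hle := Submodule.finrank_add_finrank_le_of_disjoint
    (T.eigenspaces_iSupIndep.pairwiseDisjoint hne)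
  have h1 : 1 ≤ finrank k (T.eigenspace c) := Submodule.one_le_finrank_iff.2 hc
  have h2 : 1 ≤ finrank k (T.eigenspace c') := Submodule.one_le_finrank_iff.2 hc'
  lia

theorem apply_mem_span_of_commute {T S : End k V} {c : k} {v : V} (hv : T.HasEigenvector c v)
    (hc : finrank k (T.eigenspace c) = 1) (hTS : Commute T S) : S v ∈ k ∙ v := by
  have hSv : S v ∈ T.eigenspace c := End.mapsTo_genEigenspace_of_comm hTS c 1 hv.1
  obtain ⟨a, ha⟩ := (finrank_eq_one_iff_of_nonzero' (⟨v, hv.1⟩ : T.eigenspace c)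
    fun h => hv.2 (congrArg Subtype.val h)).1 hc ⟨S v, hSv⟩
  exact Submodule.mem_span_singleton.2 ⟨a, congrArg Subtype.val ha⟩

theorem exists_eq_algebraMap_iff_of_apply_eq_smul {S : End k V} {v v' : V}
    (hspan : Submodule.span k {v, v'} = ⊤) (hv0 : v ≠ 0) (hv0' : v' ≠ 0) {a a' : k}
    (hv : S v = a • v) (hv' : S v' = a' • v') :
    (∃ b, S = algebraMap k (End k V) b) ↔ a = a' := by
  refine ⟨fun ⟨b, hb⟩ => ?_, fun h => ⟨a, LinearMap.ext_on hspan ?_⟩⟩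
  · rw [hb, algebraMap_end_apply] at hv hv'
    rw [← smul_left_injective k hv0 hv, ← smul_left_injective k hv0' hv']
  · rintro x (rfl | rfl)
    · exact hv
    · exact hv'.trans (h ▸ rfl)

variable {ρ : Representation k G V} {l : G →* kˣ} {P : End k V}

theorem IsWeightVector.hasEigenvector_apply (hP : IsWeightVector (linHom ρ ρ) l P) {c : k} {v : V}
    (hv : P.HasEigenvector c v) (g : G) : P.HasEigenvector ((l g : k)⁻¹ * c) (ρ g v) := by
  rw [End.hasEigenvector_iff, End.mem_eigenspace_iff]
  refine ⟨?_, fun h => hv.2 ((ρ.apply_bijective g).1 (h.trans (map_zero _).symm))⟩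
  have h : ρ g (P v) = (l g : k) • P (ρ g v) :=
    LinearMap.congr_fun ((isWeightVector_linHom_iff.1 hP).2 g) v
  rw [hv.apply_eq_smul, map_smul] at h
  rw [mul_smul, h, inv_smul_smul₀ (l g).ne_zero]

theorem IsWeightVector.scalarSubgroup_le_ker [Nontrivial V]
    (hP : IsWeightVector (linHom ρ ρ) l P) : scalarSubgroup ρ ≤ l.ker := by
  intro g hg
  obtain ⟨a, ha⟩ := mem_scalarSubgroup.1 hg
  have hg1 : linHom ρ ρ g P = (1 : k) • P := by
    rw [linHom_apply_eq_smul_iff, one_smul, ha, Algebra.commutes]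
  exact Units.ext (smul_left_injective k hP.1 ((hP.2 g).symm.trans hg1))

theorem isCyclicStep_scalarSubgroup_of_isWeightVector [Finite G] {N : Subgroup G} [N.Normal]
    (hN : scalarSubgroup ρ ≤ N) {v v' : V} (hspan : Submodule.span k {v, v'} = ⊤)
    {χ χ' : N →* kˣ} (hv : IsWeightVector (ρ.comp N.subtype) χ v)
    (hv' : IsWeightVector (ρ.comp N.subtype) χ' v') : IsCyclicStep (scalarSubgroup ρ) N := by
  have : Nontrivial V := ⟨v, 0, hv.1⟩
  refine isCyclicStep_of_ker_eq hN (χ / χ') (Subgroup.ext fun g => ?_)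
  rw [MonoidHom.mem_ker, MonoidHom.div_apply, div_eq_one, Subgroup.mem_subgroupOf,
    mem_scalarSubgroup, Units.ext_iff]
  exact (exists_eq_algebraMap_iff_of_apply_eq_smul hspan hv.1 hv'.1 (hv.2 g) (hv'.2 g)).symm

variable [FiniteDimensional k V]

theorem span_pair_eq_top_of_hasEigenvector (hV : finrank k V = 2) {T : End k V} {c c' : k}
    (hne : c ≠ c') {v v' : V} (hv : T.HasEigenvector c v) (hv' : T.HasEigenvector c' v') :
    Submodule.span k {v, v'} = ⊤ := by
  have hli : LinearIndependent k ![v, v'] :=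
    End.eigenvectors_linearIndependent' T ![c, c']
      (by simp [Function.Injective, Fin.forall_fin_two, hne, hne.symm]) _
      (Fin.forall_fin_two.2 ⟨hv, hv'⟩)
  simpa [Set.pair_comm] using hli.span_eq_top_of_card_eq_finrank' (by simp [hV])

variable [IsAlgClosed k] [IsIrreducible ρ]

theorem IsWeightVector.ne_one_of_trace_eq_zero (hV : (finrank k V : k) ≠ 0)
    (hP : IsWeightVector (linHom ρ ρ) l P) (htrace : LinearMap.trace k V P = 0) : l ≠ 1 := by
  rintro rfl
  let f : IntertwiningMap ρ ρ := ⟨P, fun g => ((hP.commute_of_apply_eq_one rfl).eq.symm :)⟩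
  obtain ⟨a, ha⟩ := IsIrreducible.algebraMap_intertwiningMap_bijective_of_isAlgClosed.2 f
  have hPa : a • (1 : End k V) = P := congrArg (·.toLinearMap) ha
  rw [← hPa, map_smul, LinearMap.trace_one, smul_eq_mul, mul_eq_zero, or_iff_left hV] at htrace
  exact hP.1 (by rw [← hPa, htrace, zero_smul])

variable [Finite G]

/-- Every element of `l.ker` is diagonal in a basis of eigenvectors of `P`. -/
theorem IsWeightVector.isSupersolvableMod_ker (hV : finrank k V = 2) (hl : l ≠ 1)
    (hP : IsWeightVector (linHom ρ ρ) l P) : IsSupersolvableMod ρ.ker := by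
  have : Nontrivial V := Module.nontrivial_of_finrank_pos (R := k) (by lia)
  obtain ⟨c, hc⟩ := End.exists_eigenvalue P
  obtain ⟨v, hv⟩ := hc.exists_hasEigenvector
  have hc0 : c ≠ 0 := by
    rintro rfl
    have hinj := ((Module.End.isUnit_iff P).1 hP.isUnit_of_isIrreducible).1
    exact hv.2 (hinj (by rw [hv.apply_eq_smul, zero_smul, map_zero]))
  obtain ⟨g, hg⟩ := DFunLike.ne_iff.1 hl
  have hv' := hP.hasEigenvector_apply hv g
  have hne : c ≠ (l g : k)⁻¹ * c := fun h =>
    hg (Units.ext (inv_eq_one.1 (mul_eq_right₀ hc0 |>.1 h.symm)))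
  have hcomm (h : l.ker) : Commute P (ρ.comp l.ker.subtype h) :=
    (hP.commute_of_apply_eq_one h.2).symm
  obtain ⟨χ, hχ⟩ := exists_isWeightVector_of_apply_mem_span hv.2 fun h =>
    apply_mem_span_of_commute hv (finrank_eigenspace_eq_one_of_ne hV hc
      (End.hasEigenvalue_of_hasEigenvector hv') hne) (hcomm h)
  obtain ⟨χ', hχ'⟩ := exists_isWeightVector_of_apply_mem_span hv'.2 fun h =>
    apply_mem_span_of_commute hv' (finrank_eigenspace_eq_one_of_ne hV
      (End.hasEigenvalue_of_hasEigenvector hv') hc hne.symm) (hcomm h)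
  have hspan := span_pair_eq_top_of_hasEigenvector hV hne hv hv'
  exact .of_step (isCyclicStep_ker_scalarSubgroup ρ) <|
    .of_step (isCyclicStep_scalarSubgroup_of_isWeightVector hP.scalarSubgroup_le_ker hspan hχ hχ')
      (isSupersolvableMod_of_commutator_le (Abelianization.commutator_subset_ker l))

theorem isSupersolvableMod_ker_of_finrank_eq_two [NeZero (Nat.card G : k)]
    (hV : finrank k V = 2) (h2 : (2 : k) ≠ 0)
    (h : IsIrreducible (tracelessSubrepresentation ρ).toRepresentation →
      commutator G ≤ scalarSubgroup (tracelessSubrepresentation ρ).toRepresentation) :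
    IsSupersolvableMod ρ.ker := by
  have : Nontrivial V := Module.nontrivial_of_finrank_pos (R := k) (by lia)
  have hV0 : (finrank k V : k) ≠ 0 := by rwa [hV, Nat.cast_ofNat]
  have hthree : finrank k (tracelessSubrepresentation ρ).toSubmodule = 3 :=
    finrank_traceless_of_finrank_eq_two ρ hV
  have := Module.nontrivial_of_finrank_pos (R := k) (hthree ▸ three_pos)
  by_cases hirr : IsIrreducible (tracelessSubrepresentation ρ).toRepresentation
  · exact isSupersolvableMod_ker_of_commutator_le_scalarSubgroup
      ((h hirr).trans (scalarSubgroup_traceless_le hV0))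
  · obtain ⟨l, P, hP0, hP⟩ := exists_isWeightVector_of_finrank_eq_three hthree hirr
    have hw : IsWeightVector (linHom ρ ρ) l P :=
      ⟨fun h => hP0 (Subtype.ext h), fun g => congrArg Subtype.val (hP g)⟩
    exact hw.isSupersolvableMod_ker hV (hw.ne_one_of_trace_eq_zero hV0 P.2)

end DegreeTwo

section Detection

variable {k G : Type*} [Field k] [Group G]

theorem eq_one_of_toRepresentation_apply_eq_one {V : Type*} [AddCommGroup V] [Module k V]
    {ρ : Representation k G V} {S S' : Subrepresentation ρ}
    (h : IsCompl S.toSubmodule S'.toSubmodule) {g : G} (hS : S.toRepresentation g = 1)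
    (hS' : S'.toRepresentation g = 1) : ρ g = 1 := by
  refine LinearMap.ext fun v => ?_
  obtain ⟨x, hx, y, hy, rfl⟩ :=
    Submodule.mem_sup.1 (h.sup_eq_top ▸ Submodule.mem_top (x := v))
  have hρx : ρ g x = x := congrArg Subtype.val (LinearMap.congr_fun hS ⟨x, hx⟩)
  have hρy : ρ g y = y := congrArg Subtype.val (LinearMap.congr_fun hS' ⟨y, hy⟩)
  rw [map_add, hρx, hρy, Module.End.one_apply]

variable [Finite G] [NeZero (Nat.card G : k)]

theorem exists_isIrreducible_apply_ne_one_of_apply_ne_one (V : FDRep k G) {g : G}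
    (hg : V.ρ g ≠ 1) : ∃ W : FDRep k G, IsIrreducible W.ρ ∧ W.ρ g ≠ 1 := by
  induction hn : finrank k V using Nat.strong_induction_on generalizing V with
  | h n ih =>
    by_cases hirr : IsIrreducible (V := V) V.ρ
    · exact ⟨V, hirr, hg⟩
    have : Nontrivial V := by
      by_contra hV
      rw [not_nontrivial_iff_subsingleton] at hV
      exact hg (Subsingleton.elim _ _)
    obtain ⟨S, S', hcompl, hS, hS'⟩ := exists_isCompl_of_not_isIrreducible hirr
    have hsum := Submodule.finrank_add_eq_of_isCompl hcompl
    have := Submodule.one_le_finrank_iff.2 hS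
    have := Submodule.one_le_finrank_iff.2 hS'
    by_cases hSg : S.toRepresentation g = 1
    · exact ih _ (by lia) (FDRep.of S'.toRepresentation)
        (fun h => hg (eq_one_of_toRepresentation_apply_eq_one hcompl hSg h)) rfl
    · exact ih _ (by lia) (FDRep.of S.toRepresentation) hSg rfl

end Detection

theorem exists_isIrreducible_apply_ne_one {k G : Type} [Field k] [Group G] [Finite G]
    [NeZero (Nat.card G : k)] {g : G} (hg : g ≠ 1) :
    ∃ V : FDRep k G, IsIrreducible V.ρ ∧ V.ρ g ≠ 1 := by
  refine exists_isIrreducible_apply_ne_one_of_apply_ne_one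
    (FDRep.of (leftRegular k G)) fun h => hg ?_
  have hsingle := LinearMap.congr_fun h (MonoidAlgebra.single 1 1)
  rw [FDRep.of_ρ'] at hsingle
  exact (MonoidAlgebra.single_left_inj one_ne_zero).1
    (by simpa [leftRegular, ofMulAction_single] using hsingle)

section Trace

variable {k V : Type*} [Field k] [AddCommGroup V] [Module k V]

theorem exists_basis_hasEigenvector_of_isSemisimple [IsAlgClosed k] [FiniteDimensional k V]
    {T : End k V} (hT : T.IsSemisimple) :
    ∃ (b : Basis (Fin (finrank k V)) k V) (c : Fin (finrank k V) → k),
      ∀ i, T.HasEigenvector (c i) (b i) := by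
  have hspan : ⊤ ≤ Submodule.span k (⋃ c, (T.eigenspace c : Set V)) := by
    rw [Submodule.span_iUnion]
    simp [hT.iSup_eigenspace_eq_top]
  have hb (v : V) (hv : v ∈ Set.range (Basis.ofSpan hspan)) : ∃ c : k, v ∈ T.eigenspace c :=
    Set.mem_iUnion.1 (Basis.ofSpan_subset hspan hv)
  let e := (Basis.ofSpan hspan).indexEquiv (finBasis k V)
  choose c hc using fun i =>
    hb ((Basis.ofSpan hspan).reindex e i) ⟨e.symm i, (Basis.reindex_apply ..).symm⟩
  exact ⟨_, c, fun i => ⟨hc i, Basis.ne_zero _ i⟩⟩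

theorem trace_eq_sum_of_basis_apply_eq_smul {ι : Type*} [Fintype ι] (b : Basis ι k V) {T : End k V}
    {c : ι → k} (h : ∀ i, T (b i) = c i • b i) : LinearMap.trace k V T = ∑ i, c i := by
  classical
  rw [LinearMap.trace_eq_matrix_trace k b, Matrix.trace]
  simp [LinearMap.toMatrix_apply, h]

theorem character_inv_eq_conj {G V : Type*} [Group G] [Finite G] [AddCommGroup V] [Module ℂ V]
    [FiniteDimensional ℂ V] (ρ : Representation ℂ G V) (g : G) :
    ρ.character g⁻¹ = starRingEnd ℂ (ρ.character g) := by
  have hpow : ρ g ^ Nat.card G = 1 := by rw [← map_pow, pow_card_eq_one', map_one]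
  obtain ⟨b, c, hc⟩ := exists_basis_hasEigenvector_of_isSemisimple
    (isSemisimple_of_pow_eq_one (Nat.cast_ne_zero.2 Nat.card_pos.ne') hpow)
  have hcone (i) : c i ^ Nat.card G = 1 :=
    smul_left_injective ℂ (b.ne_zero i) (by simp [← (hc i).pow_apply, hpow])
  have hinv (i) : ρ g⁻¹ (b i) = (c i)⁻¹ • b i := by
    rw [eq_inv_smul_iff₀ (IsUnit.of_pow_eq_one (hcone i) Nat.card_pos.ne').ne_zero, ← map_smul,
      ← (hc i).apply_eq_smul, inv_self_apply]
  have hnorm (i) : ‖c i‖ = 1 := Complex.norm_eq_one_of_pow_eq_one (hcone i) Nat.card_pos.ne'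
  rw [character, character, trace_eq_sum_of_basis_apply_eq_smul b hinv,
    trace_eq_sum_of_basis_apply_eq_smul b fun i => (hc i).apply_eq_smul, map_sum]
  exact Finset.sum_congr rfl fun i _ => RCLike.inv_eq_conj (hnorm i)

end Trace

theorem exists_character_eq_of_finrank_eq_one {k G V : Type*} [Field k] [Group G]
    [AddCommGroup V] [Module k V] {ρ : Representation k G V} (hV : finrank k V = 1) :
    ∃ l : G →* kˣ, ρ.character = l • (1 : G → k) := by
  have := Module.nontrivial_of_finrank_pos (hV ▸ one_pos)
  have := Module.finite_of_finrank_pos (hV ▸ one_pos)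
  obtain ⟨v, hv⟩ := exists_ne (0 : V)
  obtain ⟨l, -, hl⟩ := exists_isWeightVector_of_apply_mem_span (ρ := ρ) hv fun g => by
    rw [(finrank_eq_one_iff_of_nonzero v hv).1 hV]
    exact Submodule.mem_top
  refine ⟨l, funext fun g => ?_⟩
  obtain ⟨a, ha, -⟩ := LinearMap.existsUnique_eq_smul_id_of_finrank_eq_one hV (ρ g)
  have hal : a = l g := smul_left_injective k hv (by simpa [ha] using hl g)
  rw [character, ha, map_smul, ← Module.End.one_eq_id, LinearMap.trace_one, hV]
  simp [linearChar_smul_apply, hal]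

section Orthogonality

variable {G : Type} [Group G] {χ ψ : G → ℂ}

theorem IsIrrChar.map_inv [Finite G] (hχ : IsIrrChar G χ) (g : G) :
    χ g⁻¹ = starRingEnd ℂ (χ g) := by
  obtain ⟨V, -, rfl⟩ := hχ
  exact character_inv_eq_conj V.ρ g

variable [Fintype G]

theorem IsIrrChar.sum_mul_inv (hχ : IsIrrChar G χ) : ∑ g, χ g * χ g⁻¹ = Nat.card G := by
  obtain ⟨V, hV, rfl⟩ := hχ
  exact (FDRep.simple_iff_char_is_norm_one V).1 hV

theorem IsIrrChar.sum_mul_conj (hχ : IsIrrChar G χ) (hψ : IsIrrChar G ψ) [Decidable (χ = ψ)] :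
    ∑ g, χ g * starRingEnd ℂ (ψ g) = if χ = ψ then (Nat.card G : ℂ) else 0 := by
  simp only [← hψ.map_inv]
  split_ifs with h
  · rw [← h, hχ.sum_mul_inv]
  · obtain ⟨V, hV, rfl⟩ := hχ
    obtain ⟨W, hW, rfl⟩ := hψ
    have := invertibleOfNonzero (NeZero.ne (Nat.card G : ℂ))
    have horth := FDRep.char_orthonormal V W
    rw [if_neg fun ⟨i⟩ => h (FDRep.char_iso i)] at horth
    exact (mul_eq_zero.1 horth).resolve_left (inv_ne_zero (NeZero.ne _))

theorem isIrrChar_character_of_sum_eq {V : Type} [AddCommGroup V] [Module ℂ V]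
    [FiniteDimensional ℂ V] {ρ : Representation ℂ G V}
    (h : ∑ g, ρ.character g * ρ.character g⁻¹ = Nat.card G) : IsIrrChar G ρ.character :=
  ⟨FDRep.of ρ, (FDRep.simple_iff_char_is_norm_one _).2 h, rfl⟩

theorem sum_norm_sq_sum_mul {s : Finset (G → ℂ)} (hs : ∀ χ ∈ s, IsIrrChar G χ)
    (a : (G → ℂ) → ℂ) :
    ∑ g, ‖∑ χ ∈ s, a χ * χ g‖ ^ 2 = Nat.card G * ∑ χ ∈ s, ‖a χ‖ ^ 2 := by
  classical
  have hinner (χ : G → ℂ) (hχ : χ ∈ s) :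
      ∑ ψ ∈ s, ∑ g, a χ * χ g * starRingEnd ℂ (a ψ * ψ g) = Nat.card G * ‖a χ‖ ^ 2 := by
    have hterm (ψ : G → ℂ) (hψ : ψ ∈ s) : ∑ g, a χ * χ g * starRingEnd ℂ (a ψ * ψ g) =
        if χ = ψ then a χ * starRingEnd ℂ (a ψ) * Nat.card G else 0 := by
      rw [← mul_ite_zero, ← (hs χ hχ).sum_mul_conj (hs ψ hψ), Finset.mul_sum]
      exact Finset.sum_congr rfl fun g _ => by rw [map_mul, mul_mul_mul_comm]
    rw [Finset.sum_congr rfl hterm, Finset.sum_ite_eq s χ, if_pos hχ, Complex.mul_conj', mul_comm]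
  rw [← Complex.ofReal_inj]
  push_cast
  simp only [← Complex.mul_conj', map_sum, Finset.sum_mul_sum]
  rw [Finset.sum_comm, Finset.mul_sum]
  refine Finset.sum_congr rfl fun χ hχ => ?_
  rw [Finset.sum_comm, hinner χ hχ, Complex.mul_conj']

end Orthogonality

section Characters

variable {G : Type} [Group G] {χ ψ : G → ℂ}

theorem IsIrrChar.exists_natCast (hχ : IsIrrChar G χ) : ∃ n : ℕ, χ 1 = n := by
  obtain ⟨V, -, rfl⟩ := hχ
  exact ⟨_, FDRep.char_one V⟩

theorem IsIrrChar.mem_orbit_one_of_apply_one_eq_one (hχ : IsIrrChar G χ) (h : χ 1 = 1) :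
    χ ∈ MulAction.orbit (G →* ℂˣ) (1 : G → ℂ) := by
  obtain ⟨V, -, rfl⟩ := hχ
  rw [FDRep.char_one, Nat.cast_eq_one] at h
  obtain ⟨l, hl⟩ := exists_character_eq_of_finrank_eq_one (ρ := V.ρ) h
  exact ⟨l, hl.symm⟩

theorem linearChar_apply_one_of_mem_orbit (h : ψ ∈ MulAction.orbit (G →* ℂˣ) χ) : ψ 1 = χ 1 := by
  obtain ⟨l, rfl⟩ := h
  simp [linearChar_smul_apply]

theorem card_linearChar_eq_ncard_orbit_one :
    Nat.card (G →* ℂˣ) = (MulAction.orbit (G →* ℂˣ) (1 : G → ℂ)).ncard := by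
  have hstab : MulAction.stabilizer (G →* ℂˣ) (1 : G → ℂ) = ⊥ := by
    refine eq_bot_iff.2 fun l hl => Subgroup.mem_bot.2 (MonoidHom.ext fun g => Units.ext ?_)
    simpa [linearChar_smul_apply] using congrFun (MulAction.mem_stabilizer_iff.1 hl) g
  rw [← MulAction.index_stabilizer, hstab, Subgroup.index_bot]

variable [Finite G]

theorem isIrrChar_character {V : Type} [AddCommGroup V] [Module ℂ V] [FiniteDimensional ℂ V]
    (ρ : Representation ℂ G V) [IsIrreducible ρ] : IsIrrChar G ρ.character := by
  have := Fintype.ofFinite G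
  have := invertibleOfNonzero (NeZero.ne (Nat.card G : ℂ))
  refine isIrrChar_character_of_sum_eq ?_
  have hrank := card_inv_mul_sum_char_mul_char_eq_finrank ρ ρ
  rw [IsIrreducible.finrank_intertwiningMap_self, Nat.cast_one] at hrank
  exact ((inv_mul_eq_one₀ (NeZero.ne _)).1 hrank).symm

theorem isIrrChar_one : IsIrrChar G 1 := by
  have := Fintype.ofFinite G
  have htriv : (trivial ℂ G ℂ).character = 1 := funext fun g => by
    simp [character]
  exact htriv ▸ isIrrChar_character_of_sum_eq (by simp [htriv])

theorem IsIrrChar.smul (hχ : IsIrrChar G χ) (l : G →* ℂˣ) : IsIrrChar G (l • χ) := by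
  have := Fintype.ofFinite G
  have hsum := hχ.sum_mul_inv
  obtain ⟨V, -, rfl⟩ := hχ
  have htwist : (twist l V.ρ).character = l • V.character := character_twist l V.ρ
  rw [← htwist]
  refine isIrrChar_character_of_sum_eq ?_
  rw [← hsum, htwist]
  refine Finset.sum_congr rfl fun g _ => ?_
  rw [linearChar_smul_apply, linearChar_smul_apply, mul_mul_mul_comm, ← Units.val_mul, ← map_mul,
    mul_inv_cancel, map_one, Units.val_one, one_mul]

theorem IsIrrChar.apply_one_ne_zero (hχ : IsIrrChar G χ) : χ 1 ≠ 0 := by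
  have := Fintype.ofFinite G
  have hsum := hχ.sum_mul_inv
  obtain ⟨V, -, rfl⟩ := hχ
  rw [FDRep.char_one, Nat.cast_ne_zero]
  intro h
  have := finrank_zero_iff.1 h
  have hzero (g : G) : V.character g = 0 := by
    rw [FDRep.character, Subsingleton.elim (V.ρ g) 0, map_zero]
  refine NeZero.ne (Nat.card G : ℂ) ?_
  rw [← hsum]
  simp [hzero]

theorem sum_sq_degree_le {s : Finset (G → ℂ)} (hs : ∀ χ ∈ s, IsIrrChar G χ) :
    ∑ χ ∈ s, ‖χ 1‖ ^ 2 ≤ Nat.card G := by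
  have := Fintype.ofFinite G
  set D := ∑ χ ∈ s, ‖χ 1‖ ^ 2 with hD
  have hone : ∑ χ ∈ s, starRingEnd ℂ (χ 1) * χ 1 = (D : ℂ) := by
    simp [hD, Complex.conj_mul']
  have hle : D ^ 2 ≤ Nat.card G * D :=
    calc D ^ 2 = ‖∑ χ ∈ s, starRingEnd ℂ (χ 1) * χ 1‖ ^ 2 := by rw [hone]; simp
      _ ≤ ∑ g, ‖∑ χ ∈ s, starRingEnd ℂ (χ 1) * χ g‖ ^ 2 :=
        Finset.single_le_sum (f := fun g => ‖∑ χ ∈ s, starRingEnd ℂ (χ 1) * χ g‖ ^ 2)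
          (fun g _ => by positivity) (Finset.mem_univ 1)
      _ = Nat.card G * D := by simp [sum_norm_sq_sum_mul hs, hD]
  by_contra! hlt
  nlinarith [(Nat.cast_nonneg (Nat.card G) : (0 : ℝ) ≤ _)]

theorem finite_setOf_isIrrChar : {χ : G → ℂ | IsIrrChar G χ}.Finite := by
  by_contra hinf
  obtain ⟨s, hs, hcard⟩ := Set.Infinite.exists_subset_card_eq hinf (Nat.card G + 1)
  have hle : (Nat.card G + 1 : ℝ) ≤ Nat.card G :=
    calc (Nat.card G + 1 : ℝ) = ∑ χ ∈ s, 1 := by simp [hcard]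
      _ ≤ ∑ χ ∈ s, ‖χ 1‖ ^ 2 := Finset.sum_le_sum fun χ hχ => by
        obtain ⟨n, hn⟩ := (hs hχ).exists_natCast
        have hn0 : n ≠ 0 := fun h => (hs hχ).apply_one_ne_zero (by simp [hn, h])
        rw [hn, Complex.norm_natCast]
        exact_mod_cast Nat.one_le_pow _ _ (Nat.pos_of_ne_zero hn0)
      _ ≤ Nat.card G := sum_sq_degree_le hs
  linarith

variable (G) in
/-- The set `Irr(G)` of irreducible complex characters of the finite group `G`. -/
noncomputable def irrChars : Finset (G → ℂ) :=
  (finite_setOf_isIrrChar (G := G)).toFinset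

theorem mem_irrChars : χ ∈ irrChars G ↔ IsIrrChar G χ :=
  Set.Finite.mem_toFinset _

theorem IsIrrChar.mem_irrChars_of_mem_orbit (hχ : IsIrrChar G χ)
    (h : ψ ∈ MulAction.orbit (G →* ℂˣ) χ) : ψ ∈ irrChars G := by
  obtain ⟨l, rfl⟩ := h
  exact mem_irrChars.2 (hχ.smul l)

theorem charDegSum_eq_sum_irrChars : charDegSum G = ∑ χ ∈ irrChars G, ‖χ 1‖ := by
  rw [charDegSum, finsum_mem_eq_finite_toFinset_sum _ finite_setOf_isIrrChar]
  refine Finset.sum_congr rfl fun χ hχ => ?_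
  obtain ⟨n, hn⟩ := (mem_irrChars.1 hχ).exists_natCast
  simp [hn]

theorem sum_sq_sub_two_mul_degree_neg (h : charDegSum G > (1 / 2 : ℝ) * Nat.card G) :
    ∑ χ ∈ irrChars G, (‖χ 1‖ ^ 2 - 2 * ‖χ 1‖) < 0 := by
  have hsq := sum_sq_degree_le (s := irrChars G) fun χ => mem_irrChars.1
  rw [Finset.sum_sub_distrib, ← Finset.mul_sum, ← charDegSum_eq_sum_irrChars]
  linarith

theorem IsIrrChar.sq_sub_two_mul_degree_nonneg (hχ : IsIrrChar G χ)
    (h : χ ∉ MulAction.orbit (G →* ℂˣ) (1 : G → ℂ)) : 0 ≤ ‖χ 1‖ ^ 2 - 2 * ‖χ 1‖ := by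
  obtain ⟨n, hn⟩ := hχ.exists_natCast
  have hn0 : n ≠ 0 := fun h0 => hχ.apply_one_ne_zero (by simp [hn, h0])
  have hn1 : n ≠ 1 := fun h1 => h (hχ.mem_orbit_one_of_apply_one_eq_one (by simp [hn, h1]))
  have hn2 : (2 : ℝ) ≤ n := by
    norm_cast
    lia
  rw [hn, Complex.norm_natCast]
  nlinarith

theorem IsIrrChar.ncard_orbit_mul_lt (hχ : IsIrrChar G χ) (hχ1 : χ 1 ≠ 1)
    (h : charDegSum G > (1 / 2 : ℝ) * Nat.card G) :
    (MulAction.orbit (G →* ℂˣ) χ).ncard * (‖χ 1‖ ^ 2 - 2 * ‖χ 1‖) < Nat.card (G →* ℂˣ) := by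
  classical
  have hfin (ψ : G → ℂ) : (MulAction.orbit (G →* ℂˣ) ψ).Finite := Set.finite_range _
  have hmem {φ ψ : G → ℂ} : φ ∈ (hfin ψ).toFinset ↔ φ ∈ MulAction.orbit (G →* ℂˣ) ψ :=
    Set.Finite.mem_toFinset _
  have hdisj : Disjoint (hfin χ).toFinset (hfin 1).toFinset :=
    Finset.disjoint_left.2 fun ψ hψχ hψ1 => hχ1 <|
      (linearChar_apply_one_of_mem_orbit (hmem.1 hψχ)).symm.trans
        (linearChar_apply_one_of_mem_orbit (hmem.1 hψ1))
  have hsub : (hfin χ).toFinset ∪ (hfin 1).toFinset ⊆ irrChars G :=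
    Finset.union_subset (fun ψ hψ => hχ.mem_irrChars_of_mem_orbit (hmem.1 hψ))
      fun ψ hψ => isIrrChar_one.mem_irrChars_of_mem_orbit (hmem.1 hψ)
  have hsum (ψ : G → ℂ) : ∑ φ ∈ (hfin ψ).toFinset, (‖φ 1‖ ^ 2 - 2 * ‖φ 1‖) =
      (MulAction.orbit (G →* ℂˣ) ψ).ncard * (‖ψ 1‖ ^ 2 - 2 * ‖ψ 1‖) := by
    rw [Finset.sum_congr rfl fun φ hφ => by rw [linearChar_apply_one_of_mem_orbit (hmem.1 hφ)],
      Finset.sum_const, Set.ncard_eq_toFinset_card _ (hfin ψ), nsmul_eq_mul]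
  have hlt := (Finset.sum_le_sum_of_subset_of_nonneg hsub fun ψ hψ hnot =>
    (mem_irrChars.1 hψ).sq_sub_two_mul_degree_nonneg fun hψ1 =>
      hnot (Finset.mem_union_right _ (hmem.2 hψ1))).trans_lt (sum_sq_sub_two_mul_degree_neg h)
  rw [Finset.sum_union hdisj, hsum, hsum, ← card_linearChar_eq_ncard_orbit_one] at hlt
  rw [Pi.one_apply, norm_one] at hlt
  linarith

theorem sq_finrank_lt_card_stabilizer {V : Type} [AddCommGroup V] [Module ℂ V]
    [FiniteDimensional ℂ V] (ρ : Representation ℂ G V) [IsIrreducible ρ] (hV : 2 ≤ finrank ℂ V)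
    (h : charDegSum G > (1 / 2 : ℝ) * Nat.card G) :
    finrank ℂ V ^ 2 <
      Nat.card (MulAction.stabilizer (G →* ℂˣ) ρ.character) + 2 * finrank ℂ V := by
  have hlt := (isIrrChar_character ρ).ncard_orbit_mul_lt
    (by rw [char_one, Nat.cast_ne_one]; lia) h
  rw [← Subgroup.index_mul_card (MulAction.stabilizer (G →* ℂˣ) ρ.character),
    MulAction.index_stabilizer, Nat.cast_mul, char_one, Complex.norm_natCast] at hlt
  have hlt' := lt_of_mul_lt_mul_left hlt (Nat.cast_nonneg _)
  rw [sub_lt_iff_lt_add] at hlt'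
  exact_mod_cast hlt'

theorem isSupersolvableMod_ker_of_isIrreducible {V : Type} [AddCommGroup V] [Module ℂ V]
    [FiniteDimensional ℂ V] (ρ : Representation ℂ G V) [IsIrreducible ρ]
    (h : charDegSum G > (1 / 2 : ℝ) * Nat.card G) : IsSupersolvableMod ρ.ker := by
  have hne : finrank ℂ V ≠ 0 := by
    simpa [char_one] using (isIrrChar_character ρ).apply_one_ne_zero
  have := nontrivial_of_finrank_pos (Nat.pos_of_ne_zero hne)
  obtain h1 | h2 | h3 : finrank ℂ V = 1 ∨ finrank ℂ V = 2 ∨ 3 ≤ finrank ℂ V := by lia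
  · refine isSupersolvableMod_ker_of_commutator_le_scalarSubgroup ?_
    rw [scalarSubgroup_eq_top_of_finrank_eq_one h1]
    exact le_top
  · refine isSupersolvableMod_ker_of_finrank_eq_two h2 two_ne_zero fun _ => ?_
    have hdim := finrank_traceless_of_finrank_eq_two ρ h2
    exact commutator_le_scalarSubgroup_of_sq_lt hdim.ge (sq_finrank_lt_card_stabilizer _ (by lia) h)
  · exact isSupersolvableMod_ker_of_commutator_le_scalarSubgroup
      (commutator_le_scalarSubgroup_of_sq_lt h3 (sq_finrank_lt_card_stabilizer ρ (by lia) h))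

end Characters

/-- If `T(G) > (1/2)·|G|`, then the finite group `G` is supersolvable. -/
theorem degree_sum_supersolvable (G : Type) [Group G] [Fintype G]
    (h : charDegSum G > (1 / 2 : ℝ) * Nat.card G) :
    IsSupersolvable G := by
  refine (isSupersolvableMod_bot_of_residually fun g hg => ?_).isSupersolvable
  obtain ⟨V, hirr, hVg⟩ := exists_isIrreducible_apply_ne_one (k := ℂ) hg
  exact ⟨_, isSupersolvableMod_ker_of_isIrreducible V.ρ h, hVg⟩
end

section
/- Let q ≥ 5 be an odd prime power and let G = PSL(2,q) be the projective special linear group of degree 2 over the field with q elements. Then d(G) = (q+5)/((q²−1)q), and d(G) < 3/p² for every prime p dividing |G|. -/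
/-!
Let `χ` be the quadratic character of a field of odd order `q`. Two elements of `PSL(2,q)` commute
exactly when their lifts `A`, `B` to `SL(2,q)` satisfy `AB = ±BA`, so the class number comes from
counting commuting and anticommuting pairs in `SL(2,q)`. There are `q² + qχ(t² - 4)` matrices of
trace `t`, and the centralizer of a noncentral one consists of the matrices `x + yA` of determinant
one. These form the conic `x² + txy + y² = 1`, which has `q - χ(t² - 4)` points when `t² ≠ 4` and
`2q` points when `t² = 4`. As `χ² = 1` off zero, every trace with `t² ≠ 4` contributes exactly
`|SL(2,q)|` commuting pairs. Anticommuting partners exist only for `A` of trace zero and then form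
a coset of its centralizer, which gives another `|SL(2,q)|` pairs. The inequality follows since a
prime dividing `q(q² - 1)` is at most `q`, and `(q + 5)/(q(q² - 1)) < 3/q²` for `q > 3`.
-/

namespace PSLTwo

open Matrix
open scoped MatrixGroups

section Counting

variable {α β : Type*} [Fintype α]

theorem card_subtype_prod_eq_sum [Finite β] (r : α → β → Prop) :
    Nat.card {p : α × β // r p.1 p.2} = ∑ a, Nat.card {b // r a b} := by
  rw [Nat.card_congr (Equiv.subtypeProdEquivSigmaSubtype r), Nat.card_sigma]

theorem sum_comp_eq_sum_card_fiber_mul {R : Type*} [NonAssocSemiring R] [Fintype β]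
    (g : α → β) (f : β → R) : ∑ a, f (g a) = ∑ b, (Nat.card {a // g a = b} : R) * f b := by
  classical
  rw [← Fintype.sum_fiberwise' g f]
  simp only [Finset.sum_const, Finset.card_univ, nsmul_eq_mul, Nat.card_eq_fintype_card]

theorem sum_ite_zero_eq_card_mul {R : Type*} [NonAssocSemiring R] (p : α → Prop)
    [DecidablePred p] (c : R) :
    ∑ a, (if p a then c else 0) = (Nat.card {a // p a} : R) * c := by
  rw [← Finset.sum_filter, Finset.sum_const, nsmul_eq_mul, Nat.card_eq_fintype_card,
    Fintype.card_subtype]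

theorem card_mul_eq {F : Type*} [Field F] [Finite F] [DecidableEq F] (k : F) :
    (Nat.card {p : F × F // p.1 * p.2 = k} : ℤ) =
      Nat.card F - 1 + if k = 0 then (Nat.card F : ℤ) else 0 := by
  cases nonempty_fintype F
  have hfiber (x : F) : (Nat.card {y // x * y = k} : ℤ) =
      1 + if x = 0 then (if k = 0 then (Nat.card F : ℤ) else 0) - 1 else 0 := by
    split_ifs with hx hk
    · simp [hx, hk]
    · simp [hx, Ne.symm hk]
    · have hunique (y : F) : x * y = k ↔ y = k / x := by rw [eq_div_iff hx, mul_comm]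
      simp [hunique]
  rw [card_subtype_prod_eq_sum fun x y : F ↦ x * y = k]
  push_cast
  simp only [hfiber, Finset.sum_add_distrib, Finset.sum_ite_eq', Finset.mem_univ, if_true,
    Finset.sum_const, Finset.card_univ, nsmul_eq_mul, mul_one, ← Nat.card_eq_fintype_card]
  ring

end Counting

section Groups

theorem card_preimage_of_surjective {G H : Type*} [Group G] [Group H] {f : G →* H}
    (hf : Function.Surjective f) (s : Set H) :
    Nat.card (f ⁻¹' s) = Nat.card f.ker * Nat.card s := by
  rw [mul_comm, ← Nat.card_prod]
  refine Nat.card_congr ?_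
  calc f ⁻¹' s ≃ Σ h : s, {g : f ⁻¹' s // (⟨f g, g.2⟩ : s) = h} :=
        (Equiv.sigmaFiberEquiv fun g : f ⁻¹' s ↦ (⟨f g, g.2⟩ : s)).symm
    _ ≃ Σ _ : s, f.ker := Equiv.sigmaCongrRight fun h ↦
        (show {g : f ⁻¹' s // (⟨f g, g.2⟩ : s) = h} ≃ f ⁻¹' {h.1} from
          { toFun g := ⟨g.1, congrArg Subtype.val g.2⟩
            invFun g := ⟨⟨g, (congrArg (· ∈ s) g.2).mpr h.2⟩, Subtype.ext g.2⟩ }).trans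
          (MonoidHom.fiberEquivKerOfSurjective hf h)
    _ ≃ s × f.ker := Equiv.sigmaEquivProd _ _

theorem card_commute_quotient {G : Type*} [Group G] (N : Subgroup G) [N.Normal] :
    Nat.card {p : G × G // Commute (p.1 : G ⧸ N) (p.2 : G ⧸ N)} =
      Nat.card N ^ 2 * Nat.card {p : (G ⧸ N) × (G ⧸ N) // Commute p.1 p.2} := by
  have hsurj : Function.Surjective ((QuotientGroup.mk' N).prodMap (QuotientGroup.mk' N)) :=
    (QuotientGroup.mk'_surjective N).prodMap (QuotientGroup.mk'_surjective N)
  have hker : Nat.card ((QuotientGroup.mk' N).prodMap (QuotientGroup.mk' N)).ker =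
      Nat.card N ^ 2 := by
    rw [MonoidHom.ker_prodMap, QuotientGroup.ker_mk', sq, ← Nat.card_prod]
    exact Nat.card_congr (N.prodEquiv N).toEquiv
  rw [← hker]
  exact card_preimage_of_surjective hsurj {p | Commute p.1 p.2}

end Groups

section QuadraticCharacter

variable {F : Type*} [Field F] [Fintype F] [DecidableEq F]

theorem card_sq_eq (hF : ringChar F ≠ 2) (a : F) :
    (Nat.card {x : F // x ^ 2 = a} : ℤ) = quadraticChar F a + 1 := by
  rw [← quadraticChar_card_sqrts hF a, Set.toFinset_card, Nat.card_eq_fintype_card]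
  rfl

theorem card_quadratic_eq_zero (hF : ringChar F ≠ 2) {a : F} (ha : a ≠ 0) (b c : F) :
    (Nat.card {x : F // a * (x * x) + b * x + c = 0} : ℤ) =
      quadraticChar F (discrim a b c) + 1 := by
  have : NeZero (2 : F) := ⟨Ring.two_ne_zero hF⟩
  have h2a : 2 * a ≠ 0 := mul_ne_zero two_ne_zero ha
  rw [← card_sq_eq hF, Nat.card_congr]
  refine ((Equiv.mulLeft₀ (2 * a) h2a).trans (Equiv.addRight b)).subtypeEquiv fun x ↦ ?_
  rw [quadratic_eq_zero_iff_discrim_eq_sq ha, eq_comm]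
  rfl

theorem quadraticChar_mul_sq (a : F) {b : F} (hb : b ≠ 0) :
    quadraticChar F (a * b ^ 2) = quadraticChar F a := by
  rw [map_mul, quadraticChar_sq_one' hb, mul_one]

theorem sum_quadraticChar_mul_add (hF : ringChar F ≠ 2) {a : F} (ha : a ≠ 0) (b : F) :
    ∑ x, quadraticChar F (a * x + b) = 0 := by
  rw [← quadraticChar_sum_zero hF]
  exact ((Equiv.mulLeft₀ a ha).trans (Equiv.addRight b)).sum_comp (quadraticChar F)

theorem sum_quadraticChar_mul_quadraticChar_mul_add (hF : ringChar F ≠ 2) {a b : F} (ha : a ≠ 0)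
    (hb : b ≠ 0) : ∑ x, quadraticChar F x * quadraticChar F (a * x + b) = -quadraticChar F a := by
  have hJacobi : jacobiSum (quadraticChar F) (quadraticChar F) = -quadraticChar F (-1) := by
    simpa only [(quadraticChar_isQuadratic F).inv] using
      jacobiSum_nontrivial_inv (quadraticChar_ne_one hF)
  have hterm (y : F) : quadraticChar F (-b / a * y) * quadraticChar F (a * (-b / a * y) + b) =
      quadraticChar F (-a) * (quadraticChar F y * quadraticChar F (1 - y)) := by
    have e : (-b / a * y) * (a * (-b / a * y) + b) = -a * (y * (1 - y)) * (b / a) ^ 2 := by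
      field_simp; ring
    rw [← map_mul, e, quadraticChar_mul_sq _ (div_ne_zero hb ha), map_mul, map_mul]
  calc ∑ x, quadraticChar F x * quadraticChar F (a * x + b)
      = ∑ y, quadraticChar F (-b / a * y) * quadraticChar F (a * (-b / a * y) + b) :=
        (Equiv.sum_comp (Equiv.mulLeft₀ (-b / a) (div_ne_zero (neg_ne_zero.mpr hb) ha))
          fun x ↦ quadraticChar F x * quadraticChar F (a * x + b)).symm
    _ = quadraticChar F (-a) * jacobiSum (quadraticChar F) (quadraticChar F) := by
        simp only [hterm, jacobiSum, Finset.mul_sum]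
    _ = -quadraticChar F a := by
        rw [hJacobi, mul_neg, ← map_mul, neg_mul_neg, mul_one]

theorem sum_quadraticChar_mul_sq_add (hF : ringChar F ≠ 2) {a b : F} (ha : a ≠ 0) (hb : b ≠ 0) :
    ∑ x, quadraticChar F (a * x ^ 2 + b) = -quadraticChar F a := by
  rw [sum_comp_eq_sum_card_fiber_mul (fun x : F ↦ x ^ 2) fun u ↦ quadraticChar F (a * u + b)]
  simp only [card_sq_eq hF, add_mul, one_mul, Finset.sum_add_distrib,
    sum_quadraticChar_mul_add hF ha, sum_quadraticChar_mul_quadraticChar_mul_add hF ha hb, add_zero]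

end QuadraticCharacter

theorem four_ne_zero_of_ringChar_ne_two {R : Type*} [Ring R] [IsDomain R]
    (hR : ringChar R ≠ 2) : (4 : R) ≠ 0 := by
  rw [show (4 : R) = 2 ^ 2 by norm_num]
  exact pow_ne_zero 2 (Ring.two_ne_zero hR)

section NormOneConic

variable {F : Type*} [Field F]

/-- The conic of pairs `(x, y)` for which `x + yα` has norm one in `F[α]/(α² - tα + 1)`. -/
def normOneConic (t : F) : Set (F × F) := {p | p.1 ^ 2 + t * p.1 * p.2 + p.2 ^ 2 = 1}

variable [Fintype F] [DecidableEq F]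

theorem card_normOneConic_eq_sum (hF : ringChar F ≠ 2) (t : F) :
    (Nat.card (normOneConic t) : ℤ) =
      Nat.card F + ∑ y, quadraticChar F ((t ^ 2 - 4) * y ^ 2 + 4) := by
  have hfiber (y : F) : (Nat.card {x : F // (x, y) ∈ normOneConic t} : ℤ) =
      quadraticChar F ((t ^ 2 - 4) * y ^ 2 + 4) + 1 := by
    have hdiscrim : discrim 1 (t * y) (y ^ 2 - 1) = (t ^ 2 - 4) * y ^ 2 + 4 := by
      rw [discrim]; ring
    rw [← hdiscrim, ← card_quadratic_eq_zero hF one_ne_zero]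
    refine congrArg _ (Nat.card_congr (Equiv.subtypeEquivRight fun x ↦ ?_))
    rw [normOneConic, Set.mem_ofPred_eq, ← sub_eq_zero]
    ring_nf
  have hswap : Nat.card (normOneConic t) = Nat.card {p : F × F // (p.2, p.1) ∈ normOneConic t} :=
    Nat.card_congr ((Equiv.prodComm F F).subtypeEquiv fun _ ↦ Iff.rfl)
  rw [hswap, card_subtype_prod_eq_sum fun y x ↦ (x, y) ∈ normOneConic t]
  push_cast
  simp only [hfiber, Finset.sum_add_distrib, Finset.sum_const, Finset.card_univ, nsmul_eq_mul,
    mul_one, Nat.card_eq_fintype_card, add_comm]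

theorem quadraticChar_four (hF : ringChar F ≠ 2) : quadraticChar F 4 = 1 := by
  rw [show (4 : F) = 2 ^ 2 by norm_num, quadraticChar_sq_one' (Ring.two_ne_zero hF)]

theorem card_normOneConic_of_sq_ne_four (hF : ringChar F ≠ 2) {t : F} (ht : t ^ 2 ≠ 4) :
    (Nat.card (normOneConic t) : ℤ) = Nat.card F - quadraticChar F (t ^ 2 - 4) := by
  rw [card_normOneConic_eq_sum hF, sum_quadraticChar_mul_sq_add hF (sub_ne_zero.mpr ht)
    (four_ne_zero_of_ringChar_ne_two hF), ← sub_eq_add_neg]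

end NormOneConic

theorem card_normOneConic_of_sq_eq_four {F : Type*} [Field F] [Finite F]
    (hF : ringChar F ≠ 2) {t : F} (ht : t ^ 2 = 4) :
    (Nat.card (normOneConic t) : ℤ) = 2 * Nat.card F := by
  classical
  cases nonempty_fintype F
  rw [card_normOneConic_eq_sum hF, ht]
  simp only [sub_self, zero_mul, zero_add, quadraticChar_four hF, Finset.sum_const,
    Finset.card_univ, nsmul_eq_mul, mul_one, Nat.card_eq_fintype_card, two_mul]

section Matrices

theorem det_smul_one_add_smul_fin_two {R : Type*} [CommRing R] (A : Matrix (Fin 2) (Fin 2) R)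
    (x y : R) :
    (x • (1 : Matrix (Fin 2) (Fin 2) R) + y • A).det =
      x ^ 2 + A.trace * x * y + A.det * y ^ 2 := by
  simp only [det_fin_two, Matrix.add_apply, Matrix.smul_apply, one_apply_eq, smul_eq_mul, mul_one,
    ne_eq, zero_ne_one, not_false_eq_true, one_apply_ne, mul_zero, zero_add, one_ne_zero,
    trace_fin_two]
  ring

theorem commute_smul_one_add_smul {n R : Type*} [Fintype n] [DecidableEq n] [CommRing R]
    (A : Matrix n n R) (x y : R) : Commute A (x • 1 + y • A) :=
  ((Commute.one_right A).smul_right x).add_right ((Commute.refl A).smul_right y)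

variable {F : Type*} [Field F]

theorem smul_one_add_smul_injective {n : Type*} [Fintype n] [DecidableEq n]
    {A : Matrix n n F} (hA : A ∉ Set.range (scalar n)) :
    Function.Injective fun p : F × F ↦ p.1 • (1 : Matrix n n F) + p.2 • A := by
  rintro ⟨x, y⟩ ⟨x', y'⟩ h
  have h_smul : (x - x') • (1 : Matrix n n F) = (y' - y) • A := by
    rw [sub_smul, sub_smul, sub_eq_sub_iff_add_eq_add, add_comm (y' • A)]
    exact h
  have hy : y = y' := by
    by_contra hne
    refine hA ⟨(y' - y)⁻¹ * (x - x'), ?_⟩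
    rw [scalar_apply, ← smul_one_eq_diagonal, mul_smul, h_smul,
      inv_smul_smul₀ (sub_ne_zero.mpr (Ne.symm hne))]
  have : Nonempty n := by
    by_contra hn
    rw [not_nonempty_iff] at hn
    exact hA ⟨0, Subsingleton.elim _ _⟩
  rw [hy, sub_self, zero_smul, smul_eq_zero_iff_left one_ne_zero, sub_eq_zero] at h_smul
  rw [h_smul, hy]

theorem exists_eq_smul_one_add_smul_of_commute {A B : Matrix (Fin 2) (Fin 2) F}
    (hA : A ∉ Set.range (scalar (Fin 2))) (hAB : Commute A B) :
    ∃ x y : F, x • (1 : Matrix (Fin 2) (Fin 2) F) + y • A = B := by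
  -- `A` and `B` commute iff the triples `(X 0 1, X 1 0, X 0 0 - X 1 1)`, `X = A, B`, are parallel.
  have hmul (i j) := congrFun₂ hAB.eq i j
  simp only [mul_apply, Fin.sum_univ_two] at hmul
  have h₁ : A 0 1 * B 1 0 = B 0 1 * A 1 0 := by linear_combination hmul 0 0
  have h₂ : A 0 1 * (B 0 0 - B 1 1) = B 0 1 * (A 0 0 - A 1 1) := by
    linear_combination -hmul 0 1
  have h₃ : A 1 0 * (B 0 0 - B 1 1) = B 1 0 * (A 0 0 - A 1 1) := by
    linear_combination hmul 1 0
  suffices ∃ y, B 0 1 = y * A 0 1 ∧ B 1 0 = y * A 1 0 ∧ B 0 0 - B 1 1 = y * (A 0 0 - A 1 1) by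
    obtain ⟨y, h01, h10, hdiag⟩ := this
    have h11 : B 0 0 - y * A 0 0 + y * A 1 1 = B 1 1 := by linear_combination hdiag
    refine ⟨B 0 0 - y * A 0 0, y, ?_⟩
    ext i j
    fin_cases i <;> fin_cases j <;> simp [h01, h10, h11]
  by_cases h01 : A 0 1 = 0
  · by_cases h10 : A 1 0 = 0
    · have hdiag : A 0 0 - A 1 1 ≠ 0 := by
        refine fun h ↦ hA ⟨A 0 0, ?_⟩
        ext i j
        fin_cases i <;> fin_cases j <;> simp [h01, h10, sub_eq_zero.mp h]
      refine ⟨(B 0 0 - B 1 1) / (A 0 0 - A 1 1), ?_, ?_, ?_⟩ <;> field_simp <;> grind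
    · refine ⟨B 1 0 / A 1 0, ?_, ?_, ?_⟩ <;> field_simp <;> grind
  · refine ⟨B 0 1 / A 0 1, ?_, ?_, ?_⟩ <;> field_simp <;> grind

theorem exists_det_eq_neg_one_mul_eq_neg_mul {A : Matrix (Fin 2) (Fin 2) F} (hA : A.trace = 0) :
    ∃ C : Matrix (Fin 2) (Fin 2) F, C.det = -1 ∧ A * C = -(C * A) := by
  have h11 : A 1 1 = -A 0 0 := by
    rw [trace_fin_two] at hA
    exact eq_neg_of_add_eq_zero_right hA
  obtain ⟨a, b, c, rfl⟩ : ∃ a b c, A = !![a, b; c, -a] :=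
    ⟨A 0 0, A 0 1, A 1 0, by rw [← h11]; exact eta_fin_two A⟩
  by_cases hb : b = 0
  · by_cases hc : c = 0
    · exact ⟨!![0, 1; 1, 0], by simp, by simp [hb, hc]⟩
    · refine ⟨!![1, -2 * a / c; 0, -1], by simp, ?_⟩
      simp only [mul_fin_two, neg_of, neg_cons, neg_empty, hb]
      congrm !![?_, ?_; ?_, ?_] <;> grind
  · refine ⟨!![1, 0; -2 * a / b, -1], by simp, ?_⟩
    simp only [mul_fin_two, neg_of, neg_cons, neg_empty]
    congrm !![?_, ?_; ?_, ?_] <;> grind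

end Matrices

section SpecialLinear

theorem coe_commute_iff {n R : Type*} [Fintype n] [DecidableEq n] [CommRing R]
    {A B : Matrix.SpecialLinearGroup n R} : Commute A.1 B.1 ↔ Commute A B :=
  Subtype.coe_injective.eq_iff (a := A * B) (b := B * A)

theorem mem_center_iff_mem_range_scalar {n R : Type*} [Fintype n] [DecidableEq n] [Nonempty n]
    [CommRing R] {A : Matrix.SpecialLinearGroup n R} :
    A ∈ Subgroup.center (Matrix.SpecialLinearGroup n R) ↔ A.1 ∈ Set.range (scalar n) := by
  rw [Matrix.SpecialLinearGroup.mem_center_iff]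
  refine ⟨fun ⟨r, _, hr⟩ ↦ ⟨r, hr⟩, fun ⟨r, hr⟩ ↦ ⟨r, ?_, hr⟩⟩
  rw [← A.2, ← hr, scalar_apply, det_diagonal, Finset.prod_const, Finset.card_univ]

theorem mem_center_SL_two_iff {R : Type*} [CommRing R] [IsDomain R] {A : SL(2, R)} :
    A ∈ Subgroup.center SL(2, R) ↔ A = 1 ∨ A = -1 := by
  rw [Matrix.SpecialLinearGroup.mem_center_iff, Fintype.card_fin]
  constructor
  · rintro ⟨r, hr, hA⟩
    rcases sq_eq_one_iff.mp hr with rfl | rfl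
    · exact .inl (Subtype.ext (by rw [← hA, map_one]; rfl))
    · exact .inr (Subtype.ext (by rw [← hA, map_neg, map_one]; rfl))
  · rintro (rfl | rfl)
    · exact ⟨1, one_pow 2, by rw [map_one]; rfl⟩
    · exact ⟨-1, neg_one_sq, by rw [map_neg, map_one]; rfl⟩

theorem commute_mk_iff {R : Type*} [CommRing R] [IsDomain R] {A B : SL(2, R)} :
    Commute (A : PSL(2, R)) (B : PSL(2, R)) ↔ Commute A B ∨ A * B = -(B * A) := by
  have hmk : Commute (A : PSL(2, R)) (B : PSL(2, R)) ↔
      (B * A)⁻¹ * (A * B) ∈ Subgroup.center SL(2, R) := by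
    rw [← QuotientGroup.eq, eq_comm]
    rfl
  rw [hmk, mem_center_SL_two_iff, inv_mul_eq_iff_eq_mul, inv_mul_eq_iff_eq_mul, mul_one,
    mul_neg_one]
  rfl

theorem trace_sq_eq_four_of_mem_center {R : Type*} [CommRing R] [IsDomain R] {A : SL(2, R)}
    (hA : A ∈ Subgroup.center SL(2, R)) : A.1.trace ^ 2 = 4 := by
  rcases mem_center_SL_two_iff.mp hA with rfl | rfl
  · rw [Matrix.SpecialLinearGroup.coe_one, trace_one, Fintype.card_fin]
    norm_num
  · rw [Matrix.SpecialLinearGroup.coe_neg, Matrix.SpecialLinearGroup.coe_one, trace_neg, trace_one,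
      Fintype.card_fin]
    norm_num

theorem trace_eq_zero_of_mul_eq_neg_mul {R : Type*} [CommRing R] [IsDomain R]
    (hR : ringChar R ≠ 2) {A B : SL(2, R)} (hAB : A * B = -(B * A)) : A.1.trace = 0 := by
  have hconj : A = -(B * A * B⁻¹) := by rw [← neg_mul, ← hAB, mul_inv_cancel_right]
  have htrace : A.1.trace = -A.1.trace := by
    conv_lhs => rw [hconj]
    rw [Matrix.SpecialLinearGroup.coe_neg, trace_neg, Matrix.SpecialLinearGroup.coe_mul,
      trace_mul_comm, ← Matrix.SpecialLinearGroup.coe_mul, inv_mul_cancel_left]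
  exact (Ring.eq_self_iff_eq_zero_of_char_ne_two hR).mp htrace.symm

theorem ne_neg_of_ringChar_ne_two {R : Type*} [CommRing R] [IsDomain R]
    (hR : ringChar R ≠ 2) (A : SL(2, R)) : A ≠ -A := by
  intro hA
  have htrace := trace_eq_zero_of_mul_eq_neg_mul hR
    (show 1 * A = -(A * 1) by rwa [one_mul, mul_one])
  rw [Matrix.SpecialLinearGroup.coe_one, trace_one, Fintype.card_fin] at htrace
  exact Ring.two_ne_zero hR (mod_cast htrace)

theorem card_center_SL_two {R : Type*} [CommRing R] [IsDomain R] (hR : ringChar R ≠ 2) :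
    Nat.card (Subgroup.center SL(2, R)) = 2 := by
  have hcenter : (Subgroup.center SL(2, R) : Set SL(2, R)) = {1, -1} :=
    Set.ext fun _ ↦ mem_center_SL_two_iff
  rw [← SetLike.coe_sort_coe, hcenter, Nat.card_coe_set_eq,
    Set.ncard_pair (ne_neg_of_ringChar_ne_two hR 1)]

theorem card_PSL_two_mul_two {R : Type*} [CommRing R] [IsDomain R] (hR : ringChar R ≠ 2) :
    Nat.card PSL(2, R) * 2 = Nat.card SL(2, R) := by
  have hindex := Subgroup.card_eq_card_quotient_mul_card_subgroup (Subgroup.center SL(2, R))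
  rw [card_center_SL_two hR] at hindex
  exact hindex.symm

variable {F : Type*} [Field F]

theorem card_commute_eq_card_normOneConic {A : SL(2, F)} (hA : A ∉ Subgroup.center SL(2, F)) :
    Nat.card {B // Commute A B} = Nat.card (normOneConic A.1.trace) := by
  rw [mem_center_iff_mem_range_scalar] at hA
  have hdet (x y : F) : (x • (1 : Matrix (Fin 2) (Fin 2) F) + y • A.1).det = 1 ↔
      (x, y) ∈ normOneConic A.1.trace := by
    rw [det_smul_one_add_smul_fin_two, A.2, one_mul]
    rfl
  let e (p : normOneConic A.1.trace) : {B // Commute A B} :=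
    ⟨⟨p.1.1 • 1 + p.1.2 • A.1, (hdet _ _).mpr p.2⟩,
      coe_commute_iff.mp (commute_smul_one_add_smul A.1 _ _)⟩
  refine (Nat.card_eq_of_bijective e ⟨fun p p' h ↦ ?_, fun B ↦ ?_⟩).symm
  · exact Subtype.ext (smul_one_add_smul_injective hA congr(($h).1.1))
  · obtain ⟨x, y, hB⟩ := exists_eq_smul_one_add_smul_of_commute hA (coe_commute_iff.mpr B.2)
    exact ⟨⟨(x, y), (hdet x y).mp (hB ▸ B.1.2)⟩, Subtype.ext (Subtype.ext hB)⟩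

theorem exists_mul_eq_neg_mul [Finite F] {A : SL(2, F)} (hA : A.1.trace = 0) :
    ∃ B : SL(2, F), A * B = -(B * A) := by
  obtain ⟨C, hC, hAC⟩ := exists_det_eq_neg_one_mul_eq_neg_mul hA
  -- Left multiplication of `C` by `x + yA` corrects its determinant to `1`.
  obtain ⟨x, y, hxy⟩ : ∃ x y : F, x ^ 2 + y ^ 2 = -1 := by
    have : NeZero (ringChar F) := ⟨CharP.ringChar_ne_zero_of_finite F⟩
    obtain ⟨x, y, hxy⟩ := CharP.sq_add_sq F (ringChar F) (-1)
    exact ⟨x, y, by simpa using hxy⟩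
  have hdet : ((x • (1 : Matrix (Fin 2) (Fin 2) F) + y • A.1) * C).det = 1 := by
    rw [det_mul, det_smul_one_add_smul_fin_two, hA, A.2, hC, zero_mul, zero_mul, add_zero, one_mul,
      hxy, neg_one_mul, neg_neg]
  refine ⟨⟨_, hdet⟩, Subtype.ext ?_⟩
  calc A.1 * ((x • 1 + y • A.1) * C) = (x • 1 + y • A.1) * (A.1 * C) :=
        (commute_smul_one_add_smul A.1 x y).left_comm C
    _ = -((x • 1 + y • A.1) * C * A.1) := by rw [hAC, mul_neg, mul_assoc]

theorem card_mul_eq_neg_mul_of_trace_eq_zero [Finite F] {A : SL(2, F)} (hA : A.1.trace = 0) :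
    Nat.card {B // A * B = -(B * A)} = Nat.card {B // Commute A B} := by
  obtain ⟨B₀, hB₀⟩ := exists_mul_eq_neg_mul hA
  refine (Nat.card_congr ((Equiv.mulLeft B₀).subtypeEquiv fun B ↦ ?_)).symm
  rw [Equiv.coe_mulLeft, ← mul_assoc, hB₀, neg_mul, neg_inj, mul_assoc, mul_assoc, mul_right_inj]
  rfl

end SpecialLinear

section Trace

theorem card_trace_eq_card_mul_eq {R : Type*} [CommRing R] (t : R) :
    Nat.card {A : SL(2, R) // A.1.trace = t} =
      Nat.card {p : R × R × R // p.2.1 * p.2.2 = p.1 * (t - p.1) - 1} := by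
  have h11 (A : {A : SL(2, R) // A.1.trace = t}) : t - A.1.1 0 0 = A.1.1 1 1 := by
    rw [sub_eq_iff_eq_add', ← trace_fin_two, A.2]
  exact Nat.card_congr
    { toFun A := ⟨(A.1.1 0 0, A.1.1 0 1, A.1.1 1 0), by
        rw [h11, eq_sub_iff_add_eq', ← eq_sub_iff_add_eq, ← det_fin_two, A.1.2]⟩
      invFun p := ⟨⟨!![p.1.1, p.1.2.1; p.1.2.2, t - p.1.1], by
        rw [det_fin_two_of, p.2, sub_sub_cancel]⟩, by
        rw [trace_fin_two_of, add_sub_cancel]⟩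
      left_inv A := Subtype.ext <| Subtype.ext <|
        (congrArg (fun d ↦ !![A.1.1 0 0, A.1.1 0 1; A.1.1 1 0, d]) (h11 A)).trans
          (eta_fin_two A.1.1).symm
      right_inv _ := rfl }

variable {F : Type*} [Field F] [Fintype F] [DecidableEq F]

theorem card_trace_eq (hF : ringChar F ≠ 2) (t : F) :
    (Nat.card {A : SL(2, F) // A.1.trace = t} : ℤ) =
      (Nat.card F : ℤ) ^ 2 + Nat.card F * quadraticChar F (t ^ 2 - 4) := by
  have hdiagonal : (Nat.card {a : F // a * (t - a) - 1 = 0} : ℤ) =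
      quadraticChar F (t ^ 2 - 4) + 1 := by
    have hdiscrim : discrim (-1) t (-1) = t ^ 2 - 4 := by rw [discrim]; ring
    rw [← hdiscrim, ← card_quadratic_eq_zero hF (neg_ne_zero.mpr one_ne_zero)]
    refine congrArg _ (Nat.card_congr (Equiv.subtypeEquivRight fun a ↦ ?_))
    ring_nf
  rw [card_trace_eq_card_mul_eq,
    card_subtype_prod_eq_sum fun (a : F) (p : F × F) ↦ p.1 * p.2 = a * (t - a) - 1]
  push_cast
  simp only [card_mul_eq, Finset.sum_add_distrib, sum_ite_zero_eq_card_mul, hdiagonal,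
    Finset.sum_const, Finset.card_univ, nsmul_eq_mul, ← Nat.card_eq_fintype_card]
  ring

end Trace

section CommutingPairs

variable {F : Type*} [Field F] [Finite F]

theorem card_SL_two (hF : ringChar F ≠ 2) :
    (Nat.card SL(2, F) : ℤ) = Nat.card F ^ 3 - Nat.card F := by
  classical
  cases nonempty_fintype F
  have h4 : -4 ≠ (0 : F) := neg_ne_zero.mpr (four_ne_zero_of_ringChar_ne_two hF)
  have hsum : ∑ t : F, quadraticChar F (t ^ 2 - 4) = -1 := by
    simpa only [one_mul, ← sub_eq_add_neg, map_one] using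
      sum_quadraticChar_mul_sq_add hF one_ne_zero h4
  have hfiber := sum_comp_eq_sum_card_fiber_mul (fun A : SL(2, F) ↦ A.1.trace) fun _ ↦ (1 : ℤ)
  simp only [card_trace_eq hF, mul_one, Finset.sum_add_distrib, ← Finset.mul_sum, hsum,
    Finset.sum_const, Finset.card_univ, nsmul_eq_mul, ← Nat.card_eq_fintype_card] at hfiber
  rw [hfiber]
  ring

theorem card_trace_mul_card_normOneConic [DecidableEq F] (hF : ringChar F ≠ 2) (t : F) :
    (Nat.card {A : SL(2, F) // A.1.trace = t} : ℤ) * Nat.card (normOneConic t) =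
      Nat.card SL(2, F) +
        if t ^ 2 = 4 then 2 * (Nat.card F : ℤ) ^ 3 - Nat.card SL(2, F) else 0 := by
  cases nonempty_fintype F
  split_ifs with ht
  · rw [card_trace_eq hF, card_normOneConic_of_sq_eq_four hF ht, ht, sub_self,
      quadraticChar_zero]
    ring
  · rw [card_trace_eq hF, card_normOneConic_of_sq_ne_four hF ht, card_SL_two hF]
    linear_combination -(Nat.card F : ℤ) * quadraticChar_sq_one (sub_ne_zero.mpr ht)

theorem card_anticommuting_pairs (hF : ringChar F ≠ 2) :
    Nat.card {p : SL(2, F) × SL(2, F) // p.1 * p.2 = -(p.2 * p.1)} = Nat.card SL(2, F) := by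
  classical
  cases nonempty_fintype F
  have h04 : (0 : F) ^ 2 ≠ 4 := by
    rw [zero_pow two_ne_zero]
    exact (four_ne_zero_of_ringChar_ne_two hF).symm
  have hfiber (A : SL(2, F)) : Nat.card {B // A * B = -(B * A)} =
      if A.1.trace = 0 then Nat.card (normOneConic (0 : F)) else 0 := by
    split_ifs with hA
    · have hcenter : A ∉ Subgroup.center SL(2, F) := fun h ↦
        h04 (hA ▸ trace_sq_eq_four_of_mem_center h)
      rw [card_mul_eq_neg_mul_of_trace_eq_zero hA, card_commute_eq_card_normOneConic hcenter, hA]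
    · have : IsEmpty {B // A * B = -(B * A)} :=
        ⟨fun B ↦ hA (trace_eq_zero_of_mul_eq_neg_mul hF B.2)⟩
      exact Nat.card_of_isEmpty
  rw [card_subtype_prod_eq_sum fun A B : SL(2, F) ↦ A * B = -(B * A)]
  simp only [hfiber, sum_ite_zero_eq_card_mul, Nat.cast_id]
  simpa only [if_neg h04, add_zero, ← Nat.cast_mul, Nat.cast_inj] using
    card_trace_mul_card_normOneConic hF 0

theorem card_commuting_pairs (hF : ringChar F ≠ 2) :
    (Nat.card {p : SL(2, F) × SL(2, F) // Commute p.1 p.2} : ℤ) =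
      (Nat.card F + 4) * Nat.card SL(2, F) := by
  classical
  cases nonempty_fintype F
  have hfiber (A : SL(2, F)) : (Nat.card {B // Commute A B} : ℤ) =
      Nat.card (normOneConic A.1.trace) +
        if A ∈ Subgroup.center SL(2, F) then (Nat.card SL(2, F) : ℤ) - 2 * Nat.card F else 0 := by
    split_ifs with hA
    · have hcomm (B : SL(2, F)) : Commute A B := (Subgroup.mem_center_iff.mp hA B).symm
      rw [card_normOneConic_of_sq_eq_four hF (trace_sq_eq_four_of_mem_center hA), add_sub_cancel,
        Nat.card_congr (Equiv.subtypeUnivEquiv hcomm)]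
    · rw [card_commute_eq_card_normOneConic hA, add_zero]
  have htrace : ∑ A : SL(2, F), (Nat.card (normOneConic A.1.trace) : ℤ) =
      Nat.card F * Nat.card SL(2, F) + 2 * (2 * Nat.card F ^ 3 - Nat.card SL(2, F)) := by
    rw [sum_comp_eq_sum_card_fiber_mul (fun A : SL(2, F) ↦ A.1.trace) fun t ↦
      (Nat.card (normOneConic t) : ℤ)]
    simp only [card_trace_mul_card_normOneConic hF, Finset.sum_add_distrib,
      sum_ite_zero_eq_card_mul, card_sq_eq hF, quadraticChar_four hF, Finset.sum_const,
      Finset.card_univ, nsmul_eq_mul, ← Nat.card_eq_fintype_card]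
    ring
  have hcenter : (Nat.card {A // A ∈ Subgroup.center SL(2, F)} : ℤ) = 2 :=
    mod_cast card_center_SL_two hF
  rw [card_subtype_prod_eq_sum fun A B : SL(2, F) ↦ Commute A B]
  push_cast
  simp only [hfiber, Finset.sum_add_distrib, htrace, sum_ite_zero_eq_card_mul, hcenter,
    card_SL_two hF]
  ring

theorem two_mul_card_conjClasses_PSL_two (hF : ringChar F ≠ 2) :
    2 * Nat.card (ConjClasses PSL(2, F)) = Nat.card F + 5 := by
  classical
  have hdisjoint : Disjoint (fun p : SL(2, F) × SL(2, F) ↦ Commute p.1 p.2)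
      (fun p ↦ p.1 * p.2 = -(p.2 * p.1)) :=
    Pi.disjoint_iff.mpr fun p ↦ Prop.disjoint_iff.mpr fun ⟨hcomm, hanti⟩ ↦
      ne_neg_of_ringChar_ne_two hF (p.2 * p.1) (hcomm.eq.symm.trans hanti)
  have hpairs : Nat.card {p : SL(2, F) × SL(2, F) //
      Commute (p.1 : PSL(2, F)) (p.2 : PSL(2, F))} = (Nat.card F + 5) * Nat.card SL(2, F) := by
    simp only [commute_mk_iff]
    rw [Nat.card_congr (subtypeOrEquiv _ _ hdisjoint), Nat.card_sum, card_anticommuting_pairs hF]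
    zify
    rw [card_commuting_pairs hF]
    ring
  have hpos : 0 < Nat.card SL(2, F) := Nat.card_pos
  have hquotient := card_commute_quotient (Subgroup.center SL(2, F))
  rw [hpairs, card_center_SL_two hF, card_comm_eq_card_conjClasses_mul_card] at hquotient
  refine Nat.eq_of_mul_eq_mul_right hpos ?_
  rw [hquotient, ← card_PSL_two_mul_two hF]
  ring

theorem commProb_PSL_two (hF : ringChar F ≠ 2) :
    commProb PSL(2, F) = ((Nat.card F : ℚ) + 5) / (((Nat.card F : ℚ) ^ 2 - 1) * Nat.card F) := by
  have hk : 2 * (Nat.card (ConjClasses PSL(2, F)) : ℚ) = Nat.card F + 5 :=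
    mod_cast two_mul_card_conjClasses_PSL_two hF
  have hcard : 2 * (Nat.card PSL(2, F) : ℚ) = (Nat.card F ^ 2 - 1) * Nat.card F := by
    have hPSL : (Nat.card PSL(2, F) : ℤ) * 2 = Nat.card F ^ 3 - Nat.card F := by
      rw [← card_SL_two hF]
      exact_mod_cast card_PSL_two_mul_two hF
    qify at hPSL
    linear_combination hPSL
  rw [commProb_def', ← hk, ← hcard, mul_div_mul_left _ _ two_ne_zero]

end CommutingPairs

section PrimeDivisors

theorem le_of_prime_dvd_cube_sub_self {p q : ℕ} (hp : p.Prime) (hq : Odd q) (hq1 : 1 < q)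
    (hpq : (p : ℤ) ∣ q ^ 3 - q) : p ≤ q := by
  obtain ⟨m, rfl⟩ := hq
  have hfactor : ((2 * m + 1 : ℕ) ^ 3 - (2 * m + 1 : ℕ) : ℤ) =
      (2 * (2 * (m * ((m + 1) * (2 * m + 1)))) : ℕ) := by
    push_cast
    ring
  rw [hfactor, Int.natCast_dvd_natCast] at hpq
  simp only [hp.dvd_mul] at hpq
  rcases hpq with h | h | h | h | h <;> have := Nat.le_of_dvd (by lia) h <;> lia

theorem add_five_div_lt_three_div_sq {K : Type*} [Field K] [LinearOrder K] [IsStrictOrderedRing K]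
    {p q : K} (hp : 0 < p) (hpq : p ≤ q) (hq : 3 < q) :
    (q + 5) / ((q ^ 2 - 1) * q) < 3 / p ^ 2 := by
  have hq0 : 0 < q := hp.trans_le hpq
  have hpos : 0 < (q ^ 2 - 1) * q := mul_pos (by nlinarith) hq0
  calc (q + 5) / ((q ^ 2 - 1) * q) < 3 / q ^ 2 := by
        have hfactor : 0 < q * (q - 3) * (2 * q + 1) := by
          have := sub_pos.mpr hq
          positivity
        rw [div_lt_div_iff₀ hpos (by positivity)]
        linear_combination hfactor
    _ ≤ 3 / p ^ 2 := by gcongr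

end PrimeDivisors

end PSLTwo

/-- For `q ≥ 5` an odd prime power and `G = PSL(2,q)`, the commuting probability satisfies
`d(G) = (q+5)/((q²−1)q)` and `d(G) < 3/p²` for every prime `p` dividing `|G|`. -/
theorem commProb_PSL_two_odd (q : ℕ) (hq : 5 ≤ q) (hq2 : Odd q)
    (F : Type*) [Field F] [Fintype F] (hF : Fintype.card F = q) :
    commProb (Matrix.ProjectiveSpecialLinearGroup (Fin 2) F) =
      ((q : ℚ) + 5) / (((q : ℚ) ^ 2 - 1) * q) ∧
    ∀ p : ℕ, p.Prime → p ∣ Nat.card (Matrix.ProjectiveSpecialLinearGroup (Fin 2) F) →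
      commProb (Matrix.ProjectiveSpecialLinearGroup (Fin 2) F) < 3 / (p : ℚ) ^ 2 := by
  have hcard : Nat.card F = q := Nat.card_eq_fintype_card.trans hF
  have hchar : ringChar F ≠ 2 := fun h ↦
    Nat.not_even_iff_odd.mpr hq2 (hF ▸ Nat.even_iff.mpr (FiniteField.even_card_of_char_two h))
  have hcommProb := hcard ▸ PSLTwo.commProb_PSL_two hchar
  refine ⟨hcommProb, fun p hp hdvd ↦ ?_⟩
  have hdvdSL : (p : ℤ) ∣ q ^ 3 - q := by
    rw [← hcard, ← PSLTwo.card_SL_two hchar, ← PSLTwo.card_PSL_two_mul_two hchar]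
    exact_mod_cast hdvd.mul_right 2
  have hpq : p ≤ q := PSLTwo.le_of_prime_dvd_cube_sub_self hp hq2 (by lia) hdvdSL
  rw [hcommProb]
  exact PSLTwo.add_five_div_lt_three_div_sq (mod_cast hp.pos) (mod_cast hpq) (by norm_cast; lia)
end

section
/- Let q be a prime power and let G = PSL(3,q) be the projective special linear group of degree 3 over the field with q elements. If q ≥ 4, then d(G) ≤ (q²+3q)/((1/3)·q³(q²−1)(q³−1)) and d(G) < 3/p² for every prime p dividing |G|. Moreover, d(PSL(3,3)) = 1/468 < 3/169. -/
/-!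
A matrix in `SL(3, q)` either has minimal polynomial of degree three, hence is conjugate to
`cyclicForm β γ t`, or is a scalar plus a matrix of rank one, hence is scalar or conjugate to
`rankOneForm a`. In `PSL(3, q)` the class of `cyclicForm β γ t` does not change when `t` is
multiplied by a cube, nor when `(β, γ)` is replaced by `(ω² β, ω γ)` with `ω ^ 3 = 1`. These moves
are free on the parameters with `(β, γ) ≠ 0` and there are `q - 1` of them, because the kernel and
the range of cubing on `Fˣ` have orders multiplying to `q - 1`. With `d = gcd(3, q - 1)`, this
leaves at most `q² - 1` classes from `(β, γ) ≠ 0`, at most `d` from `(β, γ) = 0`, and at most `q`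
others.

If `d = 1`, then `PSL(3, q) = SL(3, q)`, and the classes of `cyclicForm β γ 1`, `rankOneForm a` and
`1` are told apart by the traces of a matrix and its inverse and by the rank of its difference with
a scalar, so there are exactly `q² + q` of them. For the bound on primes, `d ≤ q - 1` and every
prime dividing `q³(q² - 1)(q³ - 1)` is at most `q² + q + 1`.
-/

open scoped MatrixGroups

namespace PSLThree

open Matrix Polynomial

section LinearAlgebra

lemma exists_linearIndependent_pow_apply {K V : Type*} [Field K] [AddCommGroup V] [Module K V]
    [FiniteDimensional K V] (f : Module.End K V) :
    ∃ v, LinearIndependent K fun i : Fin (minpoly K f).natDegree ↦ (f ^ (i : ℕ)) v := by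
  obtain ⟨x, hx⟩ := Module.exists_ker_toSpanSingleton_eq_annihilator K[X] (Module.AEval' f)
  obtain ⟨v, rfl⟩ := (Module.AEval'.of f).surjective x
  have minpoly_dvd (p : K[X]) (hp : aeval f p v = 0) : minpoly K f ∣ p := by
    rw [← Ideal.mem_span_singleton, span_minpoly_eq_annihilator, ← hx, LinearMap.mem_ker,
      LinearMap.toSpanSingleton_apply, ← Module.AEval.of_aeval_smul, Module.End.smul_def, hp,
      map_zero]
  refine ⟨v, Fintype.linearIndependent_iff.2 fun g hg i ↦ ?_⟩
  have hsum : ∑ i, C (g i) * X ^ (i : ℕ) = 0 := by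
    refine eq_zero_of_dvd_of_degree_lt (minpoly_dvd _ ?_) ?_
    · simpa [LinearMap.sum_apply] using hg
    · rw [degree_eq_natDegree (minpoly.ne_zero (Algebra.IsIntegral.isIntegral f))]
      exact degree_sum_fin_lt g
  simpa [Fin.val_inj] using congrArg (coeff · i) hsum

variable {F : Type*} [Field F]

lemma exists_mul_eq_mul_of_linearIndependent {n : Type*} [Fintype n] [DecidableEq n]
    {A M : Matrix n n F} {b : n → n → F} (hb : LinearIndependent F b)
    (hA : ∀ j, A *ᵥ b j = ∑ i, M i j • b i) :
    ∃ P : Matrix n n F, P.det ≠ 0 ∧ A * P = P * M := by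
  refine ⟨(of b)ᵀ, ?_, ?_⟩
  · rw [det_transpose]
    exact ((isUnit_iff_isUnit_det _).1 (linearIndependent_rows_iff_isUnit.1 hb)).ne_zero
  · ext i j
    simpa [Matrix.mul_apply, mulVec, dotProduct, mul_comm] using congrFun (hA j) i

lemma exists_eq_vecMulVec_of_rank_le_one {m n : Type*} [Finite m] [Fintype n]
    {M : Matrix m n F} (hM : M.rank ≤ 1) : ∃ u w, M = vecMulVec u w := by
  classical
  obtain ⟨u, hu⟩ := finrank_le_one_iff.1 hM
  choose w hw using fun j ↦ hu ⟨M *ᵥ Pi.single j 1, LinearMap.mem_range_self M.mulVecLin _⟩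
  refine ⟨u, w, ext fun i j ↦ ?_⟩
  simpa [mul_comm, vecMulVec_apply] using (congrFun (congrArg Subtype.val (hw j)) i).symm

lemma mul_eq_mul_of_rank_le_one {m n : Type*} [Finite m] [Fintype n]
    {M : Matrix m n F} (hM : M.rank ≤ 1) (i k : m) (j l : n) :
    M i j * M k l = M i l * M k j := by
  obtain ⟨u, w, rfl⟩ := exists_eq_vecMulVec_of_rank_le_one hM
  simp only [vecMulVec_apply]
  ring

lemma rank_eq_of_mul_eq_mul {n : Type*} [Fintype n] [DecidableEq n] {A B P : Matrix n n F}
    (hP : P.det ≠ 0) (h : P * A = B * P) : A.rank = B.rank := by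
  rw [← rank_mul_eq_right_of_det_ne_zero P A hP, h, rank_mul_eq_left_of_det_ne_zero P B hP]

lemma isRoot_minpoly_iff_isRoot_charpoly {n : Type*} [Fintype n] [DecidableEq n]
    {A : Matrix n n F} {a : F} : (minpoly F A).IsRoot a ↔ A.charpoly.IsRoot a := by
  rw [← minpoly_toLin', ← Module.End.hasEigenvalue_iff_isRoot,
    Module.End.hasEigenvalue_iff_isRoot_charpoly, charpoly_toLin']

lemma exists_linearIndependent_pair_mulVec {n : Type*} [Fintype n] [DecidableEq n]
    {A : Matrix n n F} (hA : ∀ a, A ≠ scalar n a) : ∃ v, LinearIndependent F ![v, A *ᵥ v] := by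
  by_contra! h
  obtain ⟨a, ha⟩ := LinearMap.exists_eq_smul_id_of_forall_notLinearIndependent (f := toLin' A) h
  exact hA a (toLin'.injective (by ext; simp [ha, Pi.single_apply]))

end LinearAlgebra

section Classification

variable {F : Type*} [Field F] {A : Matrix (Fin 3) (Fin 3) F}

lemma exists_mul_eq_mul_cyclic (hA : (minpoly F A).natDegree = 3) :
    ∃ P : Matrix (Fin 3) (Fin 3) F, P.det ≠ 0 ∧
      ∃ c β γ, A * P = P * !![0, 0, c; 1, 0, β; 0, 1, γ] := by
  obtain ⟨v, hv⟩ := exists_linearIndependent_pow_apply (toLin' A)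
  rw [minpoly_toLin', hA] at hv
  obtain ⟨x, hx⟩ : ∃ x : Fin 3 → F, ∑ i, x i • (toLin' A ^ (i : ℕ)) v = (toLin' A ^ 3) v :=
    (Submodule.mem_span_range_iff_exists_fun F).1 <| by
      rw [hv.span_eq_top_of_card_eq_finrank' (by simp)]
      exact Submodule.mem_top
  obtain ⟨P, hP, hAP⟩ := exists_mul_eq_mul_of_linearIndependent (A := A)
    (M := !![0, 0, x 0; 1, 0, x 1; 0, 1, x 2]) hv fun j ↦ by
      fin_cases j <;> simp_all [Fin.sum_univ_three, pow_succ']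
  exact ⟨P, hP, x 0, x 1, x 2, hAP⟩

-- If the minimal polynomial has degree two, the linear cofactor of the characteristic polynomial
-- supplies the root.
lemma exists_isRoot_minpoly (hA : (minpoly F A).natDegree ≠ 3) : ∃ a, (minpoly F A).IsRoot a := by
  have hint : IsIntegral F A := Algebra.IsIntegral.isIntegral A
  obtain ⟨r, hr⟩ := minpoly_dvd_charpoly A
  have hrm : r.Monic := (minpoly.monic hint).of_mul_monic_left (hr ▸ A.charpoly_monic)
  have hdeg : (minpoly F A).natDegree + r.natDegree = 3 := by
    rw [← (minpoly.monic hint).natDegree_mul hrm, ← hr, charpoly_natDegree_eq_dim, Fintype.card_fin]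
  have hpos := minpoly.natDegree_pos hint
  obtain h | h : (minpoly F A).natDegree = 1 ∨ r.natDegree = 1 := by omega
  · exact exists_root_of_degree_eq_one ((degree_eq_iff_natDegree_eq_of_pos one_pos).2 h)
  · obtain ⟨a, ha⟩ := exists_root_of_degree_eq_one
      ((degree_eq_iff_natDegree_eq_of_pos one_pos).2 h)
    exact ⟨a, isRoot_minpoly_iff_isRoot_charpoly.2 (hr ▸ root_mul_left_of_isRoot _ ha)⟩

lemma exists_sub_mul_sub_eq_zero (hA : (minpoly F A).natDegree ≠ 3) :
    ∃ a b : F, (A - scalar (Fin 3) a) * (A - scalar (Fin 3) b) = 0 := by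
  have hmonic : (minpoly F A).Monic := minpoly.monic (Algebra.IsIntegral.isIntegral A)
  obtain ⟨a, ha⟩ := exists_isRoot_minpoly hA
  obtain ⟨t, ht⟩ := dvd_iff_isRoot.2 ha
  have htm : t.Monic := (monic_X_sub_C a).of_mul_monic_left (ht ▸ hmonic)
  have hdeg : (minpoly F A).natDegree = 1 + t.natDegree := by
    rw [ht, (monic_X_sub_C a).natDegree_mul htm, natDegree_X_sub_C]
  have hle : (minpoly F A).natDegree ≤ 3 := by
    simpa using natDegree_le_of_dvd (minpoly_dvd_charpoly A) A.charpoly_monic.ne_zero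
  obtain ⟨b, s, hs⟩ : ∃ b s, (X - C a) * (X - C b) = minpoly F A * s := by
    obtain h | h : t.natDegree = 0 ∨ t.natDegree = 1 := by omega
    · exact ⟨a, X - C a, by rw [ht, htm.natDegree_eq_zero.1 h, mul_one]⟩
    · exact ⟨-t.coeff 0, 1, by rw [ht, htm.eq_X_add_C h]; simp⟩
  refine ⟨a, b, ?_⟩
  simpa [Algebra.algebraMap_eq_smul_one, scalar_apply, smul_one_eq_diagonal]
    using congrArg (aeval A) hs

lemma exists_rank_sub_scalar_le_one (hA : (minpoly F A).natDegree ≠ 3) :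
    ∃ a : F, (A - scalar (Fin 3) a).rank ≤ 1 := by
  obtain ⟨a, b, hab⟩ := exists_sub_mul_sub_eq_zero hA
  have := rank_add_rank_le_card_of_mul_eq_zero hab
  rw [Fintype.card_fin] at this
  obtain h | h : (A - scalar (Fin 3) a).rank ≤ 1 ∨ (A - scalar (Fin 3) b).rank ≤ 1 := by omega
  exacts [⟨a, h⟩, ⟨b, h⟩]

lemma exists_mul_eq_mul_of_rank_sub_scalar_le_one {a : F}
    (hA : (A - scalar (Fin 3) a).rank ≤ 1) (hne : ∀ b, A ≠ scalar (Fin 3) b) :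
    ∃ P : Matrix (Fin 3) (Fin 3) F, P.det ≠ 0 ∧
      ∃ e, A * P = P * !![a, 0, 0; 0, e, 1; 0, 0, a] := by
  obtain ⟨u, w, huw⟩ := exists_eq_vecMulVec_of_rank_le_one hA
  have mulVec_eq (x) : A *ᵥ x = a • x + (w ⬝ᵥ x) • u := by
    rw [← sub_eq_iff_eq_add', ← op_smul_eq_smul (w ⬝ᵥ x), ← vecMulVec_mulVec, ← huw, sub_mulVec]
    simp
  obtain ⟨v, hv⟩ := exists_linearIndependent_pair_mulVec hne
  rw [mulVec_eq, LinearIndependent.pair_add_smul_right_iff, LinearIndependent.pair_symm_iff] at hv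
  have hwv : w ⬝ᵥ v ≠ 0 := fun h ↦ hv.ne_zero 0 (by simp [h])
  obtain ⟨z, hz⟩ := exists_linearIndependent_cons_of_lt_finrank hv (by simp)
  -- `A - a = u wᵀ` kills the first basis vector, maps the last to the middle one, and has the
  -- middle one as an eigenvector.
  have hb : LinearIndependent F ![z - (w ⬝ᵥ z / w ⬝ᵥ v) • v, (w ⬝ᵥ v) • u, v] := by
    refine linearIndependent_finCons.2 ⟨hv, ?_⟩
    rw [Submodule.sub_mem_iff_left _ (Submodule.smul_mem _ _ (Submodule.subset_span (by simp)))]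
    exact (linearIndependent_finCons.1 hz).2
  have hker : w ⬝ᵥ (z - (w ⬝ᵥ z / w ⬝ᵥ v) • v) = 0 := by
    rw [dotProduct_sub, dotProduct_smul, smul_eq_mul, div_mul_cancel₀ _ hwv, sub_self]
  obtain ⟨P, hP, hAP⟩ := exists_mul_eq_mul_of_linearIndependent (A := A)
    (M := !![a, 0, 0; 0, a + w ⬝ᵥ u, 1; 0, 0, a]) hb fun j ↦ by
      fin_cases j <;> simp [Fin.sum_univ_three, mulVec_eq, hker] <;> module
  exact ⟨P, hP, _, hAP⟩

end Classification

section NormalForms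

variable {F : Type*} [Field F]

/-- The companion matrix of `X ^ 3 - γ X ^ 2 - β X - 1`, conjugated by `diag(t, 1, 1)`. Over `GL`
the parameter `t` could be dropped; over `SL` it records the determinant of the base change. -/
def cyclicForm (β γ : F) (t : Fˣ) : SL(3, F) :=
  ⟨!![0, 0, t; ↑t⁻¹, 0, β; 0, 1, γ], by simp [det_fin_three]⟩

/-- The representative of the conjugacy class of the noncentral determinant-one matrices that differ
from the scalar matrix `a` by a matrix of rank one. -/
def rankOneForm (a : Fˣ) : SL(3, F) :=
  ⟨!![a, 0, 0; 0, ↑a⁻¹ ^ 2, 1; 0, 0, a], by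
    simpa [det_fin_three] using show (a : F) * ((a : F) ^ 2)⁻¹ * a = 1 by field_simp⟩

lemma isConj_iff_exists_mul_eq_mul {n R : Type*} [Fintype n] [DecidableEq n] [CommRing R]
    {A B : Matrix.SpecialLinearGroup n R} :
    IsConj A B ↔ ∃ P : Matrix n n R, P.det = 1 ∧ P * A = B * P := by
  simp only [isConj_iff, mul_inv_eq_iff_eq_mul]
  exact ⟨fun ⟨P, h⟩ ↦ ⟨P, P.2, congrArg Subtype.val h⟩,
    fun ⟨P, hP, h⟩ ↦ ⟨⟨P, hP⟩, Subtype.ext h⟩⟩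

lemma det_eq_of_mul_eq_mul {n R : Type*} [Fintype n] [DecidableEq n] [CommRing R] [IsDomain R]
    {A M P : Matrix n n R} (hP : P.det ≠ 0) (h : A * P = P * M) : A.det = M.det := by
  apply mul_right_cancel₀ hP
  rw [← det_mul, h, det_mul, mul_comm]

variable {A : SL(3, F)}

lemma exists_isConj_cyclicForm (hA : (minpoly F A.1).natDegree = 3) :
    ∃ β γ t, IsConj (cyclicForm β γ t) A := by
  obtain ⟨P, hP, c, β, γ, h⟩ := exists_mul_eq_mul_cyclic hA
  have hc : c = 1 := by
    simpa [det_fin_three] using (det_eq_of_mul_eq_mul hP h).symm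
  refine ⟨β, γ, .mk0 P.det hP,
    isConj_iff_exists_mul_eq_mul.2 ⟨P * diagonal ![P.det⁻¹, 1, 1], ?_, ?_⟩⟩
  · simp [Fin.prod_univ_three, hP]
  · rw [← Matrix.mul_assoc, h, Matrix.mul_assoc, Matrix.mul_assoc]
    congr 1
    ext i j
    fin_cases i <;> fin_cases j <;> simp [cyclicForm, hc, hP]

lemma exists_isConj_rankOneForm {a : F} (hA : (A.1 - scalar (Fin 3) a).rank ≤ 1)
    (hne : ∀ b, A.1 ≠ scalar (Fin 3) b) : ∃ a, IsConj (rankOneForm a) A := by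
  obtain ⟨P, hP, e, h⟩ := exists_mul_eq_mul_of_rank_sub_scalar_le_one hA hne
  have hdet : a * e * a = 1 := by
    simpa [det_fin_three] using (det_eq_of_mul_eq_mul hP h).symm
  have ha : a ≠ 0 := by
    rintro rfl
    simp at hdet
  have he : a⁻¹ ^ 2 = e := by
    field_simp
    linear_combination -hdet
  refine ⟨.mk0 a ha,
    isConj_iff_exists_mul_eq_mul.2 ⟨P * diagonal ![P.det⁻¹, 1, 1], ?_, ?_⟩⟩
  · simp [Fin.prod_univ_three, hP]
  · rw [← Matrix.mul_assoc, h, Matrix.mul_assoc, Matrix.mul_assoc]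
    congr 1
    ext i j
    fin_cases i <;> fin_cases j <;> simp [rankOneForm, he, mul_comm]

lemma exists_isConj_or_mem_center (A : SL(3, F)) :
    (∃ β γ t, IsConj (cyclicForm β γ t) A) ∨ (∃ a, IsConj (rankOneForm a) A) ∨
      A ∈ Subgroup.center SL(3, F) := by
  by_cases hdeg : (minpoly F A.1).natDegree = 3
  · exact .inl (exists_isConj_cyclicForm hdeg)
  by_cases hscalar : ∃ b, A.1 = scalar (Fin 3) b
  · obtain ⟨b, hb⟩ := hscalar
    have hb3 : b ^ Fintype.card (Fin 3) = 1 := by simpa [hb] using A.det_coe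
    exact .inr (.inr (Matrix.SpecialLinearGroup.mem_center_iff.2 ⟨b, hb3, hb.symm⟩))
  · obtain ⟨a, ha⟩ := exists_rank_sub_scalar_le_one hdeg
    exact .inr (.inl (exists_isConj_rankOneForm ha (not_exists.1 hscalar)))

lemma isConj_cyclicForm_mul_pow_three (β γ : F) (t c : Fˣ) :
    IsConj (cyclicForm β γ t) (cyclicForm β γ (t * c ^ 3)) := by
  refine isConj_iff_exists_mul_eq_mul.2 ⟨diagonal ![(c : F) ^ 2, ↑c⁻¹, ↑c⁻¹], ?_, ?_⟩
  · simpa [Fin.prod_univ_three] using show (c : F) ^ 2 * (c : F)⁻¹ * (c : F)⁻¹ = 1 by field_simp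
  · ext i j
    fin_cases i <;> fin_cases j <;> simp [cyclicForm] <;> field_simp

lemma isConj_cyclicForm_mul_scalar (β γ : F) (t : Fˣ) {ω : F} (hω : ω ^ 3 = 1)
    {Z : SL(3, F)} (hZ : Z.1 = scalar (Fin 3) ω) :
    IsConj (cyclicForm (ω ^ 2 * β) (ω * γ) t) (cyclicForm β γ t * Z) := by
  refine isConj_iff_exists_mul_eq_mul.2 ⟨diagonal ![1, ω, ω ^ 2], ?_, ?_⟩
  · simpa [Fin.prod_univ_three, pow_succ'] using hω
  · rw [Matrix.SpecialLinearGroup.coe_mul, hZ]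
    ext i j
    fin_cases i <;> fin_cases j <;> simp [cyclicForm] <;> grind

end NormalForms

section Cardinalities

lemma card_mul_card_range_le {X Y K : Type*} [Finite X] {f : X → K}
    (hf : ∀ x, ∃ g : Y → X, g.Injective ∧ ∀ y, f (g y) = f x) :
    Nat.card Y * Nat.card (Set.range f) ≤ Nat.card X := by
  choose g hg hfg using hf
  choose x hx using fun k : Set.range f ↦ k.2
  rw [← Nat.card_prod]
  refine Nat.card_le_card_of_injective (fun p : Y × Set.range f ↦ g (x p.2) p.1) ?_
  rintro ⟨y, k⟩ ⟨y', k'⟩ h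
  obtain rfl : k = k' := by
    simpa [hfg, hx, Subtype.ext_iff] using congrArg f h
  exact congrArg (·, k) (hg _ h)

lemma card_ker_mul_card_range {G H : Type*} [Group G] [Group H] (f : G →* H) :
    Nat.card f.ker * Nat.card f.range = Nat.card G := by
  rw [← Subgroup.index_ker, Subgroup.card_mul_index]

lemma card_SL_mul_card_units (F : Type*) [Field F] (n : ℕ) [NeZero n] :
    Nat.card SL(n, F) * Nat.card Fˣ = Nat.card (GL (Fin n) F) := by
  have hker : Nat.card SL(n, F) = Nat.card (GeneralLinearGroup.det : GL (Fin n) F →* Fˣ).ker := by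
    rw [Nat.card_congr (Equiv.ofInjective _ Matrix.SpecialLinearGroup.toGL_injective),
      Matrix.SpecialLinearGroup.range_toGL]
    rfl
  rw [hker, ← card_ker_mul_card_range GeneralLinearGroup.det,
    MonoidHom.range_eq_top.2 GeneralLinearGroup.det_surjective, Subgroup.card_top]

variable (F : Type*) [Field F] [Finite F]

lemma card_ker_pow (n : ℕ) :
    Nat.card (powMonoidHom n : Fˣ →* Fˣ).ker = n.gcd (Nat.card F - 1) := by
  rw [IsCyclic.card_powMonoidHom_ker, Nat.card_units, Nat.gcd_comm]

lemma card_center_SL (n : ℕ) [NeZero n] :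
    Nat.card (Subgroup.center SL(n, F)) = n.gcd (Nat.card F - 1) := by
  rw [Nat.card_congr (Matrix.SpecialLinearGroup.center_equiv_rootsOfUnity' 0).toEquiv,
    rootsOfUnity_eq_ker, card_ker_pow, Fintype.card_fin]

lemma card_PSL_mul_gcd (n : ℕ) [NeZero n] :
    Nat.card PSL(n, F) * n.gcd (Nat.card F - 1) = Nat.card SL(n, F) := by
  rw [← card_center_SL, ← Subgroup.card_eq_card_quotient_mul_card_subgroup]

lemma card_SL_three :
    Nat.card SL(3, F) = Nat.card F ^ 3 * (Nat.card F ^ 2 - 1) * (Nat.card F ^ 3 - 1) := by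
  have := Fintype.ofFinite F
  have hone (q : ℕ) : q ^ 3 - q ^ 1 = q * (q ^ 2 - 1) := by rw [Nat.mul_sub]; ring_nf
  have htwo (q : ℕ) : q ^ 3 - q ^ 2 = q ^ 2 * (q - 1) := by rw [Nat.mul_sub]; ring_nf
  apply Nat.eq_of_mul_eq_mul_right (Nat.card_pos (α := Fˣ))
  rw [card_SL_mul_card_units, card_GL_field, Fin.prod_univ_three, ← Nat.card_eq_fintype_card,
    Nat.card_units, Fin.val_zero, Fin.val_one, Fin.val_two, pow_zero, hone, htwo]
  ring

end Cardinalities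

section UpperBound

/-- The conjugacy class in the projective special linear group of the image of a matrix of
determinant one, through which the classes of the quotient are counted. -/
def projClass {n R : Type*} [Fintype n] [DecidableEq n] [CommRing R]
    (A : Matrix.SpecialLinearGroup n R) : ConjClasses (ProjectiveSpecialLinearGroup n R) :=
  ConjClasses.mk (QuotientGroup.mk' _ A)

section General

variable {n R : Type*} [Fintype n] [DecidableEq n] [CommRing R]
  {A B : Matrix.SpecialLinearGroup n R}

lemma projClass_surjective : (projClass (n := n) (R := R)).Surjective :=
  ConjClasses.mk_surjective.comp (QuotientGroup.mk'_surjective _)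

lemma projClass_eq_of_isConj (h : IsConj A B) : projClass A = projClass B :=
  ConjClasses.mk_eq_mk_iff_isConj.2 ((QuotientGroup.mk' _).map_isConj h)

lemma projClass_mul_of_mem_center (hB : B ∈ Subgroup.center (Matrix.SpecialLinearGroup n R)) :
    projClass (A * B) = projClass A :=
  congrArg ConjClasses.mk (QuotientGroup.mk_mul_of_mem A hB)

lemma projClass_eq_one_of_mem_center
    (hA : A ∈ Subgroup.center (Matrix.SpecialLinearGroup n R)) : projClass A = projClass 1 := by
  simpa using projClass_mul_of_mem_center (A := 1) hA

end General

variable {F : Type*} [Field F]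

lemma projClass_cyclicForm_mul_mul (β γ : F) (t c ω : Fˣ) (hω : ω ^ 3 = 1) :
    projClass (cyclicForm (ω ^ 2 * β) (ω * γ) (t * c ^ 3)) = projClass (cyclicForm β γ t) := by
  have hω' : (ω : F) ^ 3 = 1 := by simpa using congrArg Units.val hω
  let Z : SL(3, F) := ⟨scalar (Fin 3) (ω : F), by simpa using hω'⟩
  have hZ : Z ∈ Subgroup.center SL(3, F) :=
    Matrix.SpecialLinearGroup.mem_center_iff.2 ⟨ω, by simpa using hω', rfl⟩
  rw [← projClass_eq_of_isConj (isConj_cyclicForm_mul_pow_three _ _ t c),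
    projClass_eq_of_isConj (isConj_cyclicForm_mul_scalar β γ t hω' (Z := Z) rfl),
    projClass_mul_of_mem_center hZ]

lemma projClass_eq_cyclicForm_or_rankOneForm_or_one (A : SL(3, F)) :
    (∃ β γ t, projClass (cyclicForm β γ t) = projClass A) ∨
      (∃ a, projClass (rankOneForm a) = projClass A) ∨ projClass 1 = projClass A := by
  obtain ⟨β, γ, t, h⟩ | ⟨a, h⟩ | h := exists_isConj_or_mem_center A
  · exact .inl ⟨β, γ, t, projClass_eq_of_isConj h⟩
  · exact .inr (.inl ⟨a, projClass_eq_of_isConj h⟩)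
  · exact .inr (.inr (projClass_eq_one_of_mem_center h).symm)

lemma eq_of_sq_mul_eq_of_mul_eq {β γ ω ω' : F} (hv : (β, γ) ≠ 0) (hω : ω ^ 3 = 1)
    (hω' : ω' ^ 3 = 1) (hβ : ω ^ 2 * β = ω' ^ 2 * β) (hγ : ω * γ = ω' * γ) : ω = ω' := by
  by_cases hγ0 : γ = 0
  · have hβ0 : β ≠ 0 := fun h ↦ hv (by rw [h, hγ0, Prod.mk_zero_zero])
    have hsq : ω ^ 2 = ω' ^ 2 := mul_right_cancel₀ hβ0 hβ
    linear_combination (ω ^ 2 + ω' ^ 2) * hsq - ω * hω + ω' * hω'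
  · exact mul_right_cancel₀ hγ0 hγ

variable (F) [Finite F]

lemma card_range_projClass_cyclicForm_le :
    Nat.card (Set.range fun x : {v : F × F // v ≠ 0} × Fˣ ↦
      projClass (cyclicForm x.1.1.1 x.1.1.2 x.2)) ≤ Nat.card F ^ 2 - 1 := by
  set f := fun x : {v : F × F // v ≠ 0} × Fˣ ↦ projClass (cyclicForm x.1.1.1 x.1.1.2 x.2)
  have hfree (x) : ∃ g : (powMonoidHom 3 : Fˣ →* Fˣ).ker × (powMonoidHom 3 : Fˣ →* Fˣ).range →
      {v : F × F // v ≠ 0} × Fˣ, g.Injective ∧ ∀ y, f (g y) = f x := by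
    obtain ⟨⟨⟨β, γ⟩, hv⟩, t⟩ := x
    refine ⟨fun y ↦ ⟨⟨(y.1.1 ^ 2 * β, y.1.1 * γ), by simpa using hv⟩, t * y.2⟩, ?_, ?_⟩
    · rintro ⟨⟨ω, hω⟩, s⟩ ⟨⟨ω', hω'⟩, s'⟩ h
      simp only [Prod.mk.injEq, Subtype.mk.injEq] at h
      obtain ⟨⟨hβ, hγ⟩, hs⟩ := h
      obtain rfl := Units.ext <| eq_of_sq_mul_eq_of_mul_eq hv (by simpa using congrArg Units.val hω)
        (by simpa using congrArg Units.val hω') hβ hγ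
      rw [Subtype.ext (mul_left_cancel hs)]
    · rintro ⟨⟨ω, hω⟩, s, c, rfl⟩
      exact projClass_cyclicForm_mul_mul β γ t c ω hω
  have hcompl : Nat.card {v : F × F // v ≠ 0} = Nat.card F ^ 2 - 1 :=
    (Set.ncard_compl {0}).trans (by simp [sq])
  have h := card_mul_card_range_le hfree
  rw [Nat.card_prod, card_ker_mul_card_range, Nat.card_prod, hcompl, mul_comm] at h
  exact Nat.le_of_mul_le_mul_right h Nat.card_pos

lemma card_range_projClass_cyclicForm_zero_le :
    Nat.card (Set.range fun t : Fˣ ↦ projClass (cyclicForm (0 : F) 0 t)) ≤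
      Nat.gcd 3 (Nat.card F - 1) := by
  have h := card_mul_card_range_le (Y := (powMonoidHom 3 : Fˣ →* Fˣ).range)
    (f := fun t : Fˣ ↦ projClass (cyclicForm (0 : F) 0 t)) fun t ↦
      ⟨fun s ↦ t * s, (mul_right_injective t).comp Subtype.val_injective, by
        rintro ⟨_, c, rfl⟩
        simpa using projClass_cyclicForm_mul_mul (0 : F) 0 t c 1 (one_pow 3)⟩
  rw [← card_ker_mul_card_range (powMonoidHom 3 : Fˣ →* Fˣ), mul_comm, card_ker_pow] at h
  exact Nat.le_of_mul_le_mul_right h Nat.card_pos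

lemma card_conjClasses_PSL_three_add_one_le :
    Nat.card (ConjClasses PSL(3, F)) + 1 ≤
      Nat.card F ^ 2 + Nat.card F + Nat.gcd 3 (Nat.card F - 1) := by
  set S₁ := Set.range fun x : {v : F × F // v ≠ 0} × Fˣ ↦
    projClass (cyclicForm x.1.1.1 x.1.1.2 x.2)
  set S₂ := Set.range fun t : Fˣ ↦ projClass (cyclicForm (0 : F) 0 t)
  set S₃ := Set.range fun x : Option Fˣ ↦ projClass (x.elim 1 rankOneForm)
  have hcover : (Set.univ : Set (ConjClasses _)) = S₁ ∪ S₂ ∪ S₃ := by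
    refine (Set.eq_univ_of_forall fun c ↦ ?_).symm
    obtain ⟨A, rfl⟩ := projClass_surjective c
    obtain ⟨β, γ, t, h⟩ | ⟨a, h⟩ | h := projClass_eq_cyclicForm_or_rankOneForm_or_one A
    · by_cases hv : (β, γ) = 0
      · obtain ⟨rfl, rfl⟩ := Prod.mk.inj hv
        exact .inl (.inr ⟨t, h⟩)
      · exact .inl (.inl ⟨⟨⟨_, hv⟩, t⟩, h⟩)
    · exact .inr ⟨some a, h⟩
    · exact .inr ⟨none, h⟩
  have h₁ : S₁.ncard ≤ Nat.card F ^ 2 - 1 := card_range_projClass_cyclicForm_le F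
  have h₂ : S₂.ncard ≤ Nat.gcd 3 (Nat.card F - 1) := card_range_projClass_cyclicForm_zero_le F
  have h₃ : S₃.ncard ≤ Nat.card F := by
    refine (Finite.card_range_le _).trans_eq ?_
    rw [Finite.card_option, Nat.card_units, Nat.sub_add_cancel Nat.card_pos]
  have hq : 0 < Nat.card F ^ 2 := pow_pos Nat.card_pos 2
  rw [← Set.ncard_univ, hcover]
  have := Set.ncard_union_le (S₁ ∪ S₂) S₃
  have := Set.ncard_union_le S₁ S₂
  omega

end UpperBound

section LowerBound

variable {n F : Type*} [Fintype n] [DecidableEq n] [Field F]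

lemma trace_eq_of_isConj {A B : Matrix.SpecialLinearGroup n F} (h : IsConj A B) :
    A.1.trace = B.1.trace := by
  obtain ⟨P, rfl⟩ := isConj_iff.1 h
  rw [Matrix.SpecialLinearGroup.coe_mul, trace_mul_comm, ← Matrix.SpecialLinearGroup.coe_mul,
    inv_mul_cancel_left]

lemma rank_sub_scalar_eq_of_isConj {A B : Matrix.SpecialLinearGroup n F} (h : IsConj A B) (a : F) :
    (A.1 - scalar n a).rank = (B.1 - scalar n a).rank := by
  obtain ⟨P, hP, hPA⟩ := isConj_iff_exists_mul_eq_mul.1 h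
  refine rank_eq_of_mul_eq_mul (P := P) (hP ▸ one_ne_zero) ?_
  rw [Matrix.mul_sub, Matrix.sub_mul, hPA, (scalar_commute a (mul_comm a) P).eq]

lemma trace_cyclicForm (β γ : F) (t : Fˣ) : (cyclicForm β γ t).1.trace = γ := by
  simp [cyclicForm, trace_fin_three]

lemma trace_cyclicForm_inv (β γ : F) (t : Fˣ) : (cyclicForm β γ t)⁻¹.1.trace = -β := by
  rw [Matrix.SpecialLinearGroup.coe_inv]
  simp [cyclicForm, adjugate_fin_three, trace_fin_three]

lemma eq_and_eq_of_isConj_cyclicForm {β γ β' γ' : F} {t t' : Fˣ}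
    (h : IsConj (cyclicForm β γ t) (cyclicForm β' γ' t')) : β = β' ∧ γ = γ' := by
  have hinv : IsConj (cyclicForm β γ t)⁻¹ (cyclicForm β' γ' t')⁻¹ := by
    obtain ⟨P, hP⟩ := isConj_iff.1 h
    exact isConj_iff.2 ⟨P, by rw [← hP, conj_inv]⟩
  constructor
  · simpa only [trace_cyclicForm_inv, neg_inj] using trace_eq_of_isConj hinv
  · simpa only [trace_cyclicForm] using trace_eq_of_isConj h

lemma one_lt_rank_cyclicForm_sub_scalar (β γ a : F) (t : Fˣ) :
    1 < ((cyclicForm β γ t).1 - scalar (Fin 3) a).rank := by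
  by_contra! h
  simpa [cyclicForm] using mul_eq_mul_of_rank_le_one h 1 2 0 1

lemma rank_rankOneForm_sub_scalar_le_one_iff {a : Fˣ} {b : F} :
    ((rankOneForm a).1 - scalar (Fin 3) b).rank ≤ 1 ↔ (a : F) = b := by
  constructor
  · intro h
    simpa [rankOneForm, sub_eq_zero] using mul_eq_mul_of_rank_le_one h 0 1 0 2
  · rintro rfl
    have : (rankOneForm a).1 - scalar (Fin 3) (a : F) =
        vecMulVec ![0, 1, 0] ![0, (a : F)⁻¹ ^ 2 - a, 1] := by
      ext i j
      fin_cases i <;> fin_cases j <;> simp [rankOneForm, vecMulVec_apply]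
    exact this ▸ rank_vecMulVec_le _ _

lemma rankOneForm_ne_one (a : Fˣ) : rankOneForm a ≠ 1 := fun h ↦ by
  simpa [rankOneForm] using congrArg (fun A : SL(3, F) ↦ A.1 1 2) h

lemma eq_of_isConj_rankOneForm {a b : Fˣ} (h : IsConj (rankOneForm a) (rankOneForm b)) :
    a = b := by
  refine Units.ext (rank_rankOneForm_sub_scalar_le_one_iff.1 ?_)
  rw [rank_sub_scalar_eq_of_isConj h, rank_rankOneForm_sub_scalar_le_one_iff]

lemma exists_rank_elim_rankOneForm_sub_scalar_le_one (x : Option Fˣ) :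
    ∃ a : F, ((x.elim 1 rankOneForm : SL(3, F)).1 - scalar (Fin 3) a).rank ≤ 1 := by
  obtain _ | a := x
  · exact ⟨1, by simp⟩
  · exact ⟨a, rank_rankOneForm_sub_scalar_le_one_iff.2 rfl⟩

variable (F) [Finite F]

lemma le_card_conjClasses_SL_three :
    Nat.card F ^ 2 + Nat.card F ≤ Nat.card (ConjClasses SL(3, F)) := by
  have hcyclic : Function.Injective fun v : F × F ↦ ConjClasses.mk (cyclicForm v.1 v.2 1) :=
    fun v v' h ↦ Prod.ext_iff.2 <|
      eq_and_eq_of_isConj_cyclicForm (ConjClasses.mk_eq_mk_iff_isConj.1 h)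
  have hrankOne : Function.Injective fun x : Option Fˣ ↦
      ConjClasses.mk (x.elim 1 rankOneForm : SL(3, F)) := by
    rintro (_ | a) (_ | b) h <;> have h := ConjClasses.mk_eq_mk_iff_isConj.1 h
    · rfl
    · exact (rankOneForm_ne_one b (isConj_one_right.1 h)).elim
    · exact (rankOneForm_ne_one a (isConj_one_left.1 h)).elim
    · rw [eq_of_isConj_rankOneForm h]
  have hne (v : F × F) (x : Option Fˣ) :
      ConjClasses.mk (cyclicForm v.1 v.2 1) ≠ ConjClasses.mk (x.elim 1 rankOneForm) := by
    intro h
    obtain ⟨a, ha⟩ := exists_rank_elim_rankOneForm_sub_scalar_le_one x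
    rw [← rank_sub_scalar_eq_of_isConj (ConjClasses.mk_eq_mk_iff_isConj.1 h)] at ha
    exact (one_lt_rank_cyclicForm_sub_scalar v.1 v.2 a 1).not_ge ha
  have h := Nat.card_le_card_of_injective _ (hcyclic.sumElim hrankOne hne)
  rwa [Nat.card_sum, Nat.card_prod, ← sq, Finite.card_option, Nat.card_units,
    Nat.sub_add_cancel Nat.card_pos] at h

lemma card_conjClasses_PSL_three (h : Nat.gcd 3 (Nat.card F - 1) = 1) :
    Nat.card (ConjClasses PSL(3, F)) = Nat.card F ^ 2 + Nat.card F := by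
  refine le_antisymm ?_ ((le_card_conjClasses_SL_three F).trans ?_)
  · simpa [h] using card_conjClasses_PSL_three_add_one_le F
  · have hbot : Subgroup.center SL(3, F) = ⊥ := by
      rw [← Subgroup.card_eq_one, card_center_SL, h]
    let e : PSL(3, F) ≃* SL(3, F) :=
      (QuotientGroup.quotientMulEquivOfEq hbot).trans QuotientGroup.quotientBot
    exact Nat.card_le_card_of_surjective (ConjClasses.map e.toMonoidHom)
      (ConjClasses.map_surjective e.surjective)

end LowerBound

section CommutingProbability

variable (F : Type*) [Field F] [Finite F]

lemma prime_le_of_dvd_card_PSL_three {p : ℕ} (hp : p.Prime) (hdvd : p ∣ Nat.card PSL(3, F)) :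
    p ≤ Nat.card F ^ 2 + Nat.card F + 1 := by
  have hcard : p ∣ Nat.card F ^ 3 * (Nat.card F ^ 2 - 1) * (Nat.card F ^ 3 - 1) := by
    rw [← card_SL_three, ← card_PSL_mul_gcd]
    exact hdvd.mul_right _
  have hq : 1 < Nat.card F := Finite.one_lt_card
  generalize Nat.card F = q at hq hcard ⊢
  have hsq : q ^ 2 - 1 = (q + 1) * (q - 1) := by simpa using Nat.sq_sub_sq q 1
  have hcube : q ^ 3 - 1 = (q - 1) * (q ^ 2 + q + 1) := by
    zify [Nat.one_le_pow 3 q (by omega), hq.le]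
    ring
  simp only [hsq, hcube, hp.dvd_mul] at hcard
  obtain (h | h | h) | h | h := hcard
  · have := Nat.le_of_dvd (by omega) (hp.dvd_of_dvd_pow h)
    omega
  all_goals
    have := Nat.le_of_dvd (by omega) h
    omega

lemma commProb_PSL_three_eq :
    commProb PSL(3, F) =
      Nat.card (ConjClasses PSL(3, F)) * Nat.gcd 3 (Nat.card F - 1) /
        ((Nat.card F : ℚ) ^ 3 * ((Nat.card F : ℚ) ^ 2 - 1) * ((Nat.card F : ℚ) ^ 3 - 1)) := by
  have hgcd : (Nat.gcd 3 (Nat.card F - 1) : ℚ) ≠ 0 := by simp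
  have hcard := congrArg (Nat.cast : ℕ → ℚ) ((card_PSL_mul_gcd F 3).trans (card_SL_three F))
  push_cast [Nat.one_le_pow _ _ Nat.card_pos] at hcard
  rw [commProb_def', ← hcard, mul_div_mul_right _ _ hgcd]

lemma commProb_PSL_three_of_gcd_eq_one (h : Nat.gcd 3 (Nat.card F - 1) = 1) :
    commProb PSL(3, F) =
      ((Nat.card F : ℚ) ^ 2 + Nat.card F) /
        ((Nat.card F : ℚ) ^ 3 * ((Nat.card F : ℚ) ^ 2 - 1) * ((Nat.card F : ℚ) ^ 3 - 1)) := by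
  rw [commProb_PSL_three_eq, card_conjClasses_PSL_three F h, h]
  simp

lemma commProb_PSL_three_le :
    commProb PSL(3, F) ≤
      ((Nat.card F : ℚ) ^ 2 + 3 * Nat.card F) /
        ((1 / 3 : ℚ) * (Nat.card F : ℚ) ^ 3 * ((Nat.card F : ℚ) ^ 2 - 1) *
          ((Nat.card F : ℚ) ^ 3 - 1)) := by
  have hnum : Nat.card (ConjClasses PSL(3, F)) * Nat.gcd 3 (Nat.card F - 1) ≤
      3 * (Nat.card F ^ 2 + 3 * Nat.card F) := by
    have hk := card_conjClasses_PSL_three_add_one_le F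
    have hgcd : Nat.gcd 3 (Nat.card F - 1) ≤ 3 := Nat.gcd_le_left _ three_pos
    have hq : 1 < Nat.card F := Finite.one_lt_card
    rw [mul_comm]
    exact Nat.mul_le_mul hgcd (by omega)
  have hq : (1 : ℚ) < Nat.card F := mod_cast Finite.one_lt_card
  have hsq : 0 < (Nat.card F : ℚ) ^ 2 - 1 := sub_pos.2 (one_lt_pow₀ hq two_ne_zero)
  have hcube : 0 < (Nat.card F : ℚ) ^ 3 - 1 := sub_pos.2 (one_lt_pow₀ hq three_ne_zero)
  calc
    _ = _ := commProb_PSL_three_eq F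
    _ ≤ 3 * ((Nat.card F : ℚ) ^ 2 + 3 * Nat.card F) /
        ((Nat.card F : ℚ) ^ 3 * ((Nat.card F : ℚ) ^ 2 - 1) * ((Nat.card F : ℚ) ^ 3 - 1)) := by
      refine div_le_div_of_nonneg_right ?_ (by positivity)
      exact_mod_cast hnum
    _ = _ := by field_simp

lemma card_conjClasses_PSL_three_mul_gcd_le :
    Nat.card (ConjClasses PSL(3, F)) * (Nat.gcd 3 (Nat.card F - 1) : ℚ) ≤
      ((Nat.card F : ℚ) ^ 2 + 2 * Nat.card F - 2) * (Nat.card F - 1) := by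
  have hk := card_conjClasses_PSL_three_add_one_le F
  have hq : 1 < Nat.card F := Finite.one_lt_card
  have hgcd : Nat.gcd 3 (Nat.card F - 1) + 1 ≤ Nat.card F := by
    have := Nat.gcd_le_right 3 (Nat.sub_pos_of_lt hq)
    omega
  qify at hk hgcd hq
  exact mul_le_mul (by linarith) (by linarith) (by positivity) (by nlinarith)

lemma div_lt_three_div_sq {x : ℚ} (hx : 2 ≤ x) :
    (x ^ 2 + 2 * x - 2) * (x - 1) / (x ^ 3 * (x ^ 2 - 1) * (x ^ 3 - 1)) <
      3 / (x ^ 2 + x + 1) ^ 2 := by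
  have hpoly : (x ^ 2 + 2 * x - 2) * (x ^ 2 + x + 1) < 3 * (x ^ 3 * (x ^ 2 - 1)) := by
    obtain ⟨y, hy, rfl⟩ : ∃ y, 0 ≤ y ∧ x = y + 2 := ⟨x - 2, by linarith, by ring⟩
    rw [← sub_pos]
    ring_nf
    positivity
  have hone : 0 < x - 1 := by linarith
  have hsq : 0 < x ^ 2 - 1 := sub_pos.2 (one_lt_pow₀ (by linarith) two_ne_zero)
  have hcube : 0 < x ^ 3 - 1 := sub_pos.2 (one_lt_pow₀ (by linarith) three_ne_zero)
  rw [div_lt_div_iff₀ (by positivity) (by positivity)]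
  calc
    _ = (x ^ 2 + 2 * x - 2) * (x ^ 2 + x + 1) * ((x - 1) * (x ^ 2 + x + 1)) := by ring
    _ < 3 * (x ^ 3 * (x ^ 2 - 1)) * ((x - 1) * (x ^ 2 + x + 1)) := by gcongr
    _ = _ := by ring

lemma commProb_PSL_three_lt_of_prime_dvd {p : ℕ} (hp : p.Prime)
    (hdvd : p ∣ Nat.card PSL(3, F)) : commProb PSL(3, F) < 3 / (p : ℚ) ^ 2 := by
  have hq : (1 : ℚ) < Nat.card F := mod_cast Finite.one_lt_card
  have hsq : 0 < (Nat.card F : ℚ) ^ 2 - 1 := sub_pos.2 (one_lt_pow₀ hq two_ne_zero)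
  have hcube : 0 < (Nat.card F : ℚ) ^ 3 - 1 := sub_pos.2 (one_lt_pow₀ hq three_ne_zero)
  have hp0 : (0 : ℚ) < p := mod_cast hp.pos
  calc
    _ = _ := commProb_PSL_three_eq F
    _ ≤ _ := div_le_div_of_nonneg_right (card_conjClasses_PSL_three_mul_gcd_le F) (by positivity)
    _ < 3 / ((Nat.card F : ℚ) ^ 2 + Nat.card F + 1) ^ 2 :=
      div_lt_three_div_sq (mod_cast Finite.one_lt_card)
    _ ≤ _ := by
      gcongr
      exact_mod_cast prime_le_of_dvd_card_PSL_three F hp hdvd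

end CommutingProbability

end PSLThree

open PSLThree in
theorem commProb_PSL_three_general (F : Type*) [Field F] [Finite F] (q : ℕ) (hq : Nat.card F = q) :
    commProb PSL(3, F) ≤
        ((q : ℚ) ^ 2 + 3 * q) /
          ((1 / 3 : ℚ) * (q : ℚ) ^ 3 * ((q : ℚ) ^ 2 - 1) * ((q : ℚ) ^ 3 - 1)) ∧
      (∀ p : ℕ, p.Prime → p ∣ Nat.card PSL(3, F) → commProb PSL(3, F) < 3 / (p : ℚ) ^ 2) ∧
      (Nat.gcd 3 (q - 1) = 1 → commProb PSL(3, F) =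
        ((q : ℚ) ^ 2 + q) / ((q : ℚ) ^ 3 * ((q : ℚ) ^ 2 - 1) * ((q : ℚ) ^ 3 - 1))) := by
  subst hq
  exact ⟨commProb_PSL_three_le F, fun p hp ↦ commProb_PSL_three_lt_of_prime_dvd F hp,
    commProb_PSL_three_of_gcd_eq_one F⟩

/-- For `q ≥ 4` a prime power and `G = PSL(3,q)`, one has
`d(G) ≤ (q²+3q)/((1/3)·q³(q²−1)(q³−1))` and `d(G) < 3/p²` for every prime `p` dividing
`|G|`; moreover `d(PSL(3,3)) = 1/468 < 3/169`. -/
theorem commProb_PSL_three :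
    (∀ (q : ℕ) (F : Type) [Field F] [Fintype F], Fintype.card F = q → 4 ≤ q →
      commProb (Matrix.ProjectiveSpecialLinearGroup (Fin 3) F) ≤
        ((q : ℚ) ^ 2 + 3 * q) /
          ((1 / 3 : ℚ) * (q : ℚ) ^ 3 * ((q : ℚ) ^ 2 - 1) * ((q : ℚ) ^ 3 - 1)) ∧
      ∀ p : ℕ, p.Prime → p ∣ Nat.card (Matrix.ProjectiveSpecialLinearGroup (Fin 3) F) →
        commProb (Matrix.ProjectiveSpecialLinearGroup (Fin 3) F) < 3 / (p : ℚ) ^ 2) ∧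
    commProb (Matrix.ProjectiveSpecialLinearGroup (Fin 3) (ZMod 3)) = 1 / 468 ∧
    (1 / 468 : ℚ) < 3 / 169 := by
  refine ⟨fun q F _ _ hq _ ↦ ?_, ?_, by norm_num⟩
  · obtain ⟨hle, hlt, -⟩ := commProb_PSL_three_general F q (Nat.card_eq_fintype_card.trans hq)
    exact ⟨hle, hlt⟩
  · rw [(commProb_PSL_three_general (ZMod 3) 3 (Nat.card_zmod 3)).2.2 rfl]
    norm_num
end

section
/- Let G be a finite group and let N be a normal subgroup of G that is contained in the Frattini subgroup of G. If G/N is supersolvable, then G is supersolvable. -/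
/-! By induction on `|G|` it is enough to find a nontrivial cyclic normal subgroup of `G`. Let `M`
be a minimal normal subgroup of `G` inside the Frattini subgroup, so that `M` is a `p`-group, and
let `V` be the subgroup of `G ⧸ M` generated by all commutators and `(p - 1)`-th powers. As `G ⧸ M`
is supersolvable, either `V` is a `p`-group, or `G ⧸ M` has a normal subgroup `R` of prime order
`r ≠ p`. In the first case the preimage of `V` is a normal `p`-subgroup and so centralizes `M`;
thus `G` acts on `M` through an abelian group of exponent dividing `p - 1`, which is diagonalizable
over `𝔽_p`, and `M` is cyclic. In the second case the Frattini argument, applied to the preimage of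
`R`, shows that the Sylow `r`-subgroup of this preimage, which has order `r`, is normal in `G`. -/

open Subgroup
open scoped commutatorElement

lemma card_quotient_lt_card {G : Type*} [Group G] [Finite G] {N : Subgroup G} (hN : N ≠ ⊥) :
    Nat.card (G ⧸ N) < Nat.card G := by
  rw [N.card_eq_card_quotient_mul_card_subgroup]
  exact lt_mul_of_one_lt_right Nat.card_pos ((one_lt_card_iff_ne_bot N).mpr hN)

lemma ne_bot_of_prime_card {G : Type*} [Group G] {Q : Subgroup G} (h : (Nat.card Q).Prime) :
    Q ≠ ⊥ := by
  rintro rfl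
  exact Nat.not_prime_one (card_bot (G := G) ▸ h)

section CyclicSections

variable {G G' : Type*} [Group G] [Group G']

lemma isCyclic_section_map (f : G →* G') (K L : Subgroup G) [(K.subgroupOf L).Normal]
    [((K.map f).subgroupOf (L.map f)).Normal] [IsCyclic (L ⧸ K.subgroupOf L)] :
    IsCyclic (L.map f ⧸ (K.map f).subgroupOf (L.map f)) :=
  isCyclic_of_surjective
    (QuotientGroup.map (K.subgroupOf L) ((K.map f).subgroupOf (L.map f)) (f.subgroupMap L)
      fun _ hx ↦ mem_map_of_mem f hx)
    (QuotientGroup.map_surjective_of_surjective _ _ _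
      ((QuotientGroup.mk'_surjective _).comp (f.subgroupMap_surjective L)) _)

lemma isCyclic_section_comap (f : G →* G') (K L : Subgroup G') [(K.subgroupOf L).Normal]
    [((K.comap f).subgroupOf (L.comap f)).Normal] [IsCyclic (L ⧸ K.subgroupOf L)] :
    IsCyclic (L.comap f ⧸ (K.comap f).subgroupOf (L.comap f)) := by
  have hcomap : (K.comap f).subgroupOf (L.comap f) = (K.subgroupOf L).comap (f.subgroupComap L) :=
    rfl
  refine isCyclic_of_injective (QuotientGroup.map _ (K.subgroupOf L) _ hcomap.le)
    ((MonoidHom.ker_eq_bot_iff _).mp ?_)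
  rw [QuotientGroup.ker_map, ← hcomap, QuotientGroup.map_mk'_self]

lemma isCyclic_of_isCyclic_quotient_of_disjoint {K L N : Subgroup G} [(K.subgroupOf L).Normal]
    [IsCyclic (L ⧸ K.subgroupOf L)] (hNL : N ≤ L) (hKN : Disjoint K N) : IsCyclic N := by
  refine isCyclic_of_injective ((QuotientGroup.mk' (K.subgroupOf L)).comp (inclusion hNL))
    ((injective_iff_map_eq_one _).mpr fun x hx ↦ ?_)
  have hxK : (x : G) ∈ K := (QuotientGroup.eq_one_iff (inclusion hNL x)).mp hx
  exact Subtype.ext (disjoint_def.mp hKN hxK x.2)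

lemma normal_of_le_of_isCyclic {C K : Subgroup G} [C.Normal] [IsCyclic C] (hKC : K ≤ C) :
    K.Normal where
  conj_mem x hx g := by
    obtain ⟨m, hm⟩ := MonoidHom.map_cyclic (MulAut.conjNormal g : MulAut C).toMonoidHom
    have hconj : g * x * g⁻¹ = x ^ m := congrArg Subtype.val (hm ⟨x, hKC hx⟩)
    exact hconj ▸ zpow_mem hx m

end CyclicSections

namespace IsSupersolvable

variable {G G' : Type*} [Group G] [Group G']

theorem of_surjective (hG : IsSupersolvable G) {f : G →* G'} (hf : Function.Surjective f) :
    IsSupersolvable G' := by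
  obtain ⟨n, H, h0, hn, hle, hnormal, hcyclic⟩ := hG
  have hnormal' (i) : ((H i).map f).Normal := (hnormal i).map f hf
  refine ⟨n, fun i ↦ (H i).map f, ?_, ?_, fun i ↦ map_mono (hle i), hnormal', fun i ↦ ?_⟩
  · simp only [h0, Subgroup.map_bot]
  · simp only [hn, map_top_of_surjective f hf]
  · obtain ⟨_, _⟩ := hcyclic i
    exact ⟨inferInstance, isCyclic_section_map f _ _⟩

theorem quotient_map {N : Subgroup G} [N.Normal] (h : IsSupersolvable (G ⧸ N)) {f : G →* G'}
    (hf : Function.Surjective f) [(N.map f).Normal] : IsSupersolvable (G' ⧸ N.map f) :=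
  h.of_surjective (f := QuotientGroup.map N _ f (le_comap_map f N))
    (QuotientGroup.map_surjective_of_surjective _ _ _
      ((QuotientGroup.mk'_surjective _).comp hf) _)

theorem of_quotient_of_isCyclic {C : Subgroup G} [C.Normal] [IsCyclic C]
    (h : IsSupersolvable (G ⧸ C)) : IsSupersolvable G := by
  obtain ⟨n, H, h0, hn, hle, hnormal, hcyclic⟩ := h
  let π := QuotientGroup.mk' C
  have hπ0 : (H 0).comap π = C := by rw [h0, MonoidHom.comap_bot, QuotientGroup.ker_mk']
  refine ⟨n + 1, Fin.cons ⊥ fun i ↦ (H i).comap π, rfl, ?_, ?_, ?_, ?_⟩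
  · rw [← Fin.succ_last, Fin.cons_succ, hn, comap_top]
  · exact Fin.cases bot_le fun i ↦ comap_mono (hle i)
  · exact Fin.cases (inferInstanceAs (⊥ : Subgroup G).Normal) fun i ↦ (hnormal i).comap π
  · refine Fin.cases ?_ fun i ↦ ?_
    · rw [Fin.castSucc_zero, Fin.cons_zero, Fin.cons_succ, hπ0]
      exact ⟨inferInstance, isCyclic_of_surjective _ (QuotientGroup.mk'_surjective _)⟩
    · obtain ⟨_, _⟩ := hcyclic i
      rw [← Fin.succ_castSucc, Fin.cons_succ, Fin.cons_succ]
      exact ⟨((hnormal i.castSucc).comap π).subgroupOf _, isCyclic_section_comap π _ _⟩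

theorem exists_normal_isCyclic_le (hG : IsSupersolvable G) {N : Subgroup G} [N.Normal]
    (hN : N ≠ ⊥) : ∃ C : Subgroup G, C.Normal ∧ C ≤ N ∧ C ≠ ⊥ ∧ IsCyclic C := by
  obtain ⟨n, H, h0, hn, -, hnormal, hcyclic⟩ := hG
  obtain ⟨i, hi, hi'⟩ : ∃ i : Fin n, Disjoint (H i.castSucc) N ∧ ¬ Disjoint (H i.succ) N := by
    by_contra! hstep
    have hdisj (i) : Disjoint (H i) N :=
      Fin.induction (h0 ▸ disjoint_bot_left) (fun i ↦ hstep i) i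
    exact hN (top_disjoint.mp (hn ▸ hdisj (Fin.last n)))
  obtain ⟨_, _⟩ := hcyclic i
  exact ⟨H i.succ ⊓ N, inferInstance, inf_le_right, disjoint_iff.not.mp hi',
    isCyclic_of_isCyclic_quotient_of_disjoint inf_le_left (hi.mono_right inf_le_right)⟩

theorem exists_normal_prime_card_le [Finite G] (hG : IsSupersolvable G) {N : Subgroup G}
    [N.Normal] (hN : N ≠ ⊥) :
    ∃ Q : Subgroup G, Q.Normal ∧ Q ≤ N ∧ (Nat.card Q).Prime := by
  obtain ⟨C, _, hCN, hC, _⟩ := hG.exists_normal_isCyclic_le hN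
  obtain ⟨p, hp, hpC⟩ := Nat.exists_prime_and_dvd (mt card_eq_one.mp hC)
  have : Fact p.Prime := ⟨hp⟩
  obtain ⟨x, hx⟩ := exists_prime_orderOf_dvd_card' p hpC
  have hxC : zpowers (x : G) ≤ C := zpowers_le.mpr x.2
  refine ⟨zpowers x, normal_of_le_of_isCyclic hxC, hxC.trans hCN, ?_⟩
  rwa [Nat.card_zpowers, orderOf_coe, hx]

end IsSupersolvable

/-- The smallest normal subgroup of `G` whose quotient is abelian of exponent dividing `n`. -/
def abelianPowerResidual (G : Type*) [Group G] (n : ℕ) : Subgroup G :=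
  commutator G ⊔ closure (Set.range fun g : G ↦ g ^ n)

section AbelianPowerResidual

variable {G G' : Type*} [Group G] [Group G'] {n : ℕ}

instance : (abelianPowerResidual G n).Normal :=
  Normal.of_commutator_le G le_sup_left

lemma commutatorElement_mem_abelianPowerResidual (g h : G) : ⁅g, h⁆ ∈ abelianPowerResidual G n :=
  mem_sup_left (commutator_mem_commutator (mem_top g) (mem_top h))

lemma pow_mem_abelianPowerResidual (g : G) : g ^ n ∈ abelianPowerResidual G n :=
  mem_sup_right (subset_closure ⟨g, rfl⟩)

lemma abelianPowerResidual_le_ker {A : Type*} [CommGroup A] (φ : G →* A) (h : ∀ a : A, a ^ n = 1) :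
    abelianPowerResidual G n ≤ φ.ker := by
  refine sup_le (Abelianization.commutator_subset_ker φ) ((closure_le _).mpr ?_)
  rintro _ ⟨g, rfl⟩
  rw [SetLike.mem_coe, MonoidHom.mem_ker, map_pow, h]

lemma map_abelianPowerResidual {f : G →* G'} (hf : Function.Surjective f) :
    (abelianPowerResidual G n).map f = abelianPowerResidual G' n := by
  have hrange : f '' Set.range (fun g : G ↦ g ^ n) = Set.range fun g : G' ↦ g ^ n := by
    rw [← Set.range_comp, ← hf.range_comp]
    simp only [Function.comp_def, map_pow]
  rw [abelianPowerResidual, Subgroup.map_sup, map_commutator_eq, MonoidHom.range_eq_top.mpr hf,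
    MonoidHom.map_closure, hrange]
  rfl

lemma ker_conjNormal (M : Subgroup G) [M.Normal] :
    (MulAut.conjNormal : G →* MulAut M).ker = centralizer (M : Set G) := by
  ext g
  simp only [MonoidHom.mem_ker, MulEquiv.ext_iff, Subtype.ext_iff, MulAut.conjNormal_apply,
    MulAut.one_apply, mem_centralizer_iff, SetLike.mem_coe, Subtype.forall, mul_inv_eq_iff_eq_mul]
  exact forall₂_congr fun _ _ ↦ eq_comm

lemma abelianPowerResidual_le_centralizer {M : Subgroup G} [M.Normal] (hM : (Nat.card M).Prime) :
    abelianPowerResidual G (Nat.card M - 1) ≤ centralizer (M : Set G) := by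
  have : Fact (Nat.card M).Prime := ⟨hM⟩
  have : IsCyclic M := isCyclic_of_prime_card rfl
  let e := IsCyclic.mulAutMulEquiv M
  have hker : (e.toMonoidHom.comp MulAut.conjNormal).ker = centralizer (M : Set G) := by
    rw [← ker_conjNormal]
    exact Subgroup.ext fun _ ↦ e.map_eq_one_iff
  exact hker ▸ abelianPowerResidual_le_ker _ (ZMod.units_pow_card_sub_one_eq_one _)

end AbelianPowerResidual

open Polynomial in
lemma exists_hasEigenvalue_of_pow_card_eq {K V : Type*} [Field K] [Fintype K] [AddCommGroup V]
    [Module K V] [Module.Finite K V] [Nontrivial V] {f : Module.End K V}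
    (hf : f ^ Fintype.card K = f) : ∃ a, f.HasEigenvalue a := by
  have hne : (X ^ Fintype.card K - X : K[X]) ≠ 0 :=
    FiniteField.X_pow_card_sub_X_ne_zero K Fintype.one_lt_card
  have hsplits : (X ^ Fintype.card K - X : K[X]).Splits := by
    rw [splits_iff_card_roots, FiniteField.roots_X_pow_card_sub_X,
      FiniteField.X_pow_card_sub_X_natDegree_eq K Fintype.one_lt_card]
    rfl
  have hdvd : minpoly K f ∣ X ^ Fintype.card K - X := minpoly.dvd K f (by simp [hf])
  obtain ⟨a, ha⟩ := (hsplits.of_dvd hne hdvd).exists_eval_eq_zero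
    (minpoly.degree_pos (Algebra.IsIntegral.isIntegral f)).ne'
  exact ⟨a, Module.End.hasEigenvalue_of_isRoot ha⟩

lemma exists_ne_one_apply_eq_pow {p : ℕ} [Fact p.Prime] {V : Type*} [CommGroup V] [Finite V]
    [Nontrivial V] (hV : ∀ v : V, v ^ p = 1) {f : MulAut V} (hf : f ^ (p - 1) = 1) :
    ∃ (k : ℕ) (v : V), v ≠ 1 ∧ f v = v ^ k := by
  let := AddCommGroup.zmodModule (n := p) (G := Additive V) hV
  let T : Additive V →ₗ[ZMod p] Additive V := f.toMonoidHom.toAdditive.toZModLinearMap p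
  have hfp : f^[p] = f := by
    rw [← hom_coe_pow (fun f : MulAut V ↦ ⇑f) rfl (fun _ _ ↦ rfl),
      ← pow_sub_one_mul (Fact.out : p.Prime).ne_zero, hf, one_mul]
  have hT : T ^ Fintype.card (ZMod p) = T := by
    ext v
    rw [Module.End.pow_apply, ZMod.card]
    exact congrFun hfp v.toMul
  obtain ⟨a, ha⟩ := exists_hasEigenvalue_of_pow_card_eq hT
  obtain ⟨w, hw⟩ := ha.exists_hasEigenvector
  refine ⟨a.val, w.toMul, hw.2, ?_⟩
  have hTw : T w = a.val • w := by
    rw [hw.apply_eq_smul, ← Nat.cast_smul_eq_nsmul (ZMod p), ZMod.natCast_zmod_val]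
  exact hTw

/-- `M` is a minimal normal subgroup of `G`: minimal among the nontrivial normal subgroups. -/
def IsMinimalNormal {G : Type*} [Group G] (M : Subgroup G) : Prop :=
  Minimal (fun K : Subgroup G ↦ K.Normal ∧ K ≠ ⊥) M

lemma exists_isMinimalNormal_le {G : Type*} [Group G] [Finite G] {N : Subgroup G} [N.Normal]
    (hN : N ≠ ⊥) : ∃ M ≤ N, IsMinimalNormal M :=
  exists_minimal_le_of_wellFoundedLT _ N ⟨‹_›, hN⟩

/-- The Frattini argument: the normalizer of `P` supplements `E`, hence supplements
the Frattini subgroup. -/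
lemma normal_map_sylow_of_le_sup_frattini {G : Type*} [Group G] [Finite G] {p : ℕ} [Fact p.Prime]
    {E : Subgroup G} [E.Normal] {P : Sylow p E}
    (hE : E ≤ P.map E.subtype ⊔ frattini G) : (P.map E.subtype).Normal := by
  refine normalizer_eq_top_iff.mp (frattini_nongenerating (top_le_iff.mp ?_))
  rw [← P.normalizer_sup_eq_top]
  exact sup_le le_sup_left (hE.trans (sup_le_sup_right le_normalizer _))

namespace IsMinimalNormal

variable {G : Type*} [Group G] {M : Subgroup G}

lemma nontrivial (hM : IsMinimalNormal M) : Nontrivial M :=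
  M.nontrivial_iff_ne_bot.mpr hM.prop.2

lemma eq_top_of_forall_conjNormal_mem [M.Normal] (hM : IsMinimalNormal M) {E : Subgroup M}
    (hE : E ≠ ⊥) (hconj : ∀ g : G, ∀ x ∈ E, MulAut.conjNormal g x ∈ E) : E = ⊤ := by
  have hnormal : (E.map M.subtype).Normal := by
    refine ⟨?_⟩
    rintro _ ⟨x, hx, rfl⟩ g
    exact ⟨MulAut.conjNormal g x, hconj g x hx, MulAut.conjNormal_apply g x⟩
  have hbot : E.map M.subtype ≠ ⊥ := by
    rwa [Ne, map_eq_bot_iff_of_injective _ M.subtype_injective]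
  rw [← map_subtype_inj, hM.eq_of_le ⟨hnormal, hbot⟩ (map_subtype_le E), ← MonoidHom.range_eq_map,
    range_subtype]

lemma exists_isPGroup_of_le_frattini [Finite G] (hM : IsMinimalNormal M) (hfr : M ≤ frattini G) :
    ∃ p : ℕ, p.Prime ∧ IsPGroup p M := by
  have := hM.prop.1
  obtain ⟨p, hp, hpM⟩ := Nat.exists_prime_and_dvd (mt card_eq_one.mp hM.prop.2)
  have : Fact p.Prime := ⟨hp⟩
  let P : Sylow p M := default
  have hP : (P.map M.subtype).Normal :=
    normal_map_sylow_of_le_sup_frattini (hfr.trans le_sup_right)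
  have hbot : P.map M.subtype ≠ ⊥ := by
    rw [Ne, map_eq_bot_iff_of_injective _ M.subtype_injective]
    exact P.ne_bot_of_dvd_card hpM
  have hPM : P.map M.subtype = M := hM.eq_of_le ⟨hP, hbot⟩ (map_subtype_le _)
  have hPp : IsPGroup p (P.map M.subtype) := P.2.map M.subtype
  exact ⟨p, hp, hPM ▸ hPp⟩

lemma dvd_card_of_isPGroup [Finite M] (hM : IsMinimalNormal M) {p : ℕ} [Fact p.Prime]
    (hpM : IsPGroup p M) : p ∣ Nat.card M := by
  obtain ⟨n, hn, hcard⟩ := hpM.nontrivial_iff_card.mp hM.nontrivial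
  exact hcard ▸ dvd_pow_self p hn.ne'

lemma le_centralizer_of_isPGroup [Finite M] (hM : IsMinimalNormal M) {p : ℕ} [Fact p.Prime]
    (hpM : IsPGroup p M) {T : Subgroup G} [T.Normal] (hT : IsPGroup p T) :
    T ≤ centralizer (M : Set G) := by
  have := hM.prop.1
  let _ : MulAction T M := .compHom M ((MulAut.conjNormal : G →* MulAut M).comp T.subtype)
  have hsmul (t : T) (x : M) : ((t • x : M) : G) = t * x * (t : G)⁻¹ := rfl
  obtain ⟨b, hb, hb1⟩ := hT.exists_fixed_point_of_prime_dvd_card_of_fixed_point M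
    (hM.dvd_card_of_isPGroup hpM) (a := 1) fun t ↦
      Subtype.ext (by rw [hsmul, coe_one, mul_one, mul_inv_cancel])
  have hbT : (b : G) ∈ centralizer (T : Set G) := mem_centralizer_iff.mpr fun t ht ↦
    mul_inv_eq_iff_eq_mul.mp (congrArg Subtype.val (hb ⟨t, ht⟩))
  have hbot : M ⊓ centralizer (T : Set G) ≠ ⊥ := fun hbot ↦
    hb1 (Subtype.ext (mem_bot.mp (hbot ▸ mem_inf.mpr ⟨b.2, hbT⟩)).symm)
  rw [le_centralizer_iff, ← inf_eq_left]
  exact hM.eq_of_le ⟨inferInstance, hbot⟩ inf_le_left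

open scoped IsMulCommutative in
lemma pow_eq_one_of_isPGroup [Finite M] (hM : IsMinimalNormal M) [IsMulCommutative M] {p : ℕ}
    [Fact p.Prime] (hpM : IsPGroup p M) (x : M) : x ^ p = 1 := by
  have := hM.prop.1
  obtain ⟨y, hy⟩ := exists_prime_orderOf_dvd_card' p (hM.dvd_card_of_isPGroup hpM)
  have hker : (powMonoidHom p : M →* M).ker = ⊤ := by
    refine hM.eq_top_of_forall_conjNormal_mem (fun hbot ↦ ?_) fun g x hx ↦ ?_
    · have hy1 : y = 1 := mem_bot.mp (hbot ▸ hy ▸ pow_orderOf_eq_one y)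
      rw [hy1, orderOf_one] at hy
      exact (Fact.out : p.Prime).ne_one hy.symm
    · have hx' : x ^ p = 1 := hx
      rw [MonoidHom.mem_ker, powMonoidHom_apply, ← map_pow, hx', map_one]
  exact (hker ▸ mem_top x : x ∈ (powMonoidHom p : M →* M).ker)

open scoped IsMulCommutative in
/-- The elements of `G` act on `M` by commuting automorphisms, so an eigenspace of `g` is normal in
`G`. Hence `g` acts on `M` by a power map and every cyclic subgroup of `M` is normal in `G`. -/
theorem isCyclic_of_abelianPowerResidual_le_centralizer [Finite M] (hM : IsMinimalNormal M)
    [IsMulCommutative M] {p : ℕ} [Fact p.Prime] (hpM : IsPGroup p M)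
    (hres : abelianPowerResidual G (p - 1) ≤ centralizer (M : Set G)) : IsCyclic M := by
  have := hM.prop.1
  have := hM.nontrivial
  let φ : G →* MulAut M := MulAut.conjNormal
  rw [← ker_conjNormal] at hres
  have hcomm (g h : G) : Commute (φ g) (φ h) := by
    rw [← commutatorElement_eq_one_iff_commute, ← map_commutatorElement]
    exact hres (commutatorElement_mem_abelianPowerResidual g h)
  have hpow (g : G) : φ g ^ (p - 1) = 1 := by
    rw [← map_pow]
    exact hres (pow_mem_abelianPowerResidual g)
  have hscalar (g : G) : ∃ k : ℕ, ∀ x : M, φ g x = x ^ k := by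
    obtain ⟨k, w, hw, hgw⟩ :=
      exists_ne_one_apply_eq_pow (hM.pow_eq_one_of_isPGroup hpM) (hpow g)
    let E : Subgroup M := (φ g).toMonoidHom.eqLocus (powMonoidHom k)
    have hwE : w ∈ E := hgw
    have hE : E = ⊤ := by
      refine hM.eq_top_of_forall_conjNormal_mem (fun hbot ↦ hw (mem_bot.mp (hbot ▸ hwE)))
        fun h x hx ↦ ?_
      have hx' : φ g x = x ^ k := hx
      change φ g (φ h x) = φ h x ^ k
      rw [← MulAut.mul_apply, hcomm, MulAut.mul_apply, hx', map_pow]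
    exact ⟨k, fun x ↦ (hE ▸ mem_top x : x ∈ E)⟩
  obtain ⟨x, hx⟩ := exists_ne (1 : M)
  refine isCyclic_iff_exists_zpowers_eq_top.mpr ⟨x,
    hM.eq_top_of_forall_conjNormal_mem (zpowers_ne_bot.mpr hx) fun g y hy ↦ ?_⟩
  obtain ⟨k, hk⟩ := hscalar g
  exact (hk y).symm ▸ pow_mem hy k

end IsMinimalNormal

section SylowLift

lemma bijective_comp_sylow_subtype {G G' : Type*} [Group G] [Group G'] {p q : ℕ} [Finite G]
    [Fact p.Prime] [Fact q.Prime] (hpq : p ≠ q) {f : G →* G'} (hf : Function.Surjective f)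
    (hker : IsPGroup p f.ker) (hG' : IsPGroup q G') (P : Sylow q G) :
    Function.Bijective (f.comp (P : Subgroup G).subtype) := by
  have hdisj : Disjoint f.ker P := IsPGroup.disjoint_of_ne p q hpq _ _ hker P.2
  have htop : (P.mapSurjective hf : Subgroup G') = ⊤ :=
    ((P.mapSurjective hf).is_maximal' (hG'.to_subgroup ⊤) le_top).symm
  refine ⟨(injective_iff_map_eq_one _).mpr fun x hx ↦
    Subtype.ext (disjoint_def.mp hdisj hx x.2), ?_⟩
  rw [← MonoidHom.range_eq_top, MonoidHom.range_comp, range_subtype]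
  exact htop

variable {G : Type*} [Group G] [Finite G] {p q : ℕ} [Fact p.Prime] [Fact q.Prime]
  {M : Subgroup G} [M.Normal] {R : Subgroup (G ⧸ M)}

lemma bijective_subgroupComap_mk'_comp_sylow_subtype (hpq : p ≠ q) (hM : IsPGroup p M)
    (hR : IsPGroup q R) (P : Sylow q (R.comap (QuotientGroup.mk' M))) :
    Function.Bijective (((QuotientGroup.mk' M).subgroupComap R).comp (P : Subgroup _).subtype) := by
  refine bijective_comp_sylow_subtype hpq (MonoidHom.subgroupComap_surjective_of_surjective _ _
    (QuotientGroup.mk'_surjective M)) ?_ hR P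
  have hker : ((QuotientGroup.mk' M).subgroupComap R).ker = M.subgroupOf _ := by
    ext x
    rw [MonoidHom.mem_ker, Subtype.ext_iff, mem_subgroupOf]
    exact QuotientGroup.eq_one_iff _
  exact hker ▸ hM.comap_subtype

lemma card_map_sylow_comap_mk' (hpq : p ≠ q) (hM : IsPGroup p M) (hR : IsPGroup q R)
    (P : Sylow q (R.comap (QuotientGroup.mk' M))) :
    Nat.card (P.map (R.comap (QuotientGroup.mk' M)).subtype) = Nat.card R := by
  rw [card_map_of_injective (subtype_injective _)]
  exact Nat.card_congr
    (.ofBijective _ (bijective_subgroupComap_mk'_comp_sylow_subtype hpq hM hR P))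

lemma map_sylow_comap_mk'_sup (hpq : p ≠ q) (hM : IsPGroup p M) (hR : IsPGroup q R)
    (P : Sylow q (R.comap (QuotientGroup.mk' M))) :
    P.map (R.comap (QuotientGroup.mk' M)).subtype ⊔ M = R.comap (QuotientGroup.mk' M) := by
  have hsurj := (bijective_subgroupComap_mk'_comp_sylow_subtype hpq hM hR P).surjective
  have hmap : (P.map (R.comap (QuotientGroup.mk' M)).subtype).map (QuotientGroup.mk' M) = R := by
    apply le_antisymm
    · rw [map_le_iff_le_comap]
      exact map_subtype_le _
    · intro r hr
      obtain ⟨x, hx⟩ := hsurj ⟨r, hr⟩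
      exact ⟨x, ⟨x, x.2, rfl⟩, congrArg Subtype.val hx⟩
  conv_rhs => rw [← hmap, comap_map_eq, QuotientGroup.ker_mk']

end SylowLift

lemma isMulCommutative_comap_mk' {G : Type*} [Group G] {M : Subgroup G} [M.Normal]
    {R : Subgroup (G ⧸ M)} [IsCyclic R]
    (hcent : R.comap (QuotientGroup.mk' M) ≤ centralizer (M : Set G)) :
    IsMulCommutative (R.comap (QuotientGroup.mk' M)) := by
  refine ((QuotientGroup.mk' M).subgroupComap R).isMulCommutative_of_isCyclic_of_ker_le_center
    fun x hx ↦ ?_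
  have hxM : (x : G) ∈ M := (QuotientGroup.eq_one_iff _).mp (congrArg Subtype.val hx)
  exact mem_center_iff.mpr fun y ↦ Subtype.ext (mem_centralizer_iff.mp (hcent y.2) _ hxM).symm

/-- If `M` is normal of order `p`, then the residual centralizes `M`; hence a normal subgroup of
order `r ≠ p` in the image of the residual in `G ⧸ M` has abelian preimage, whose Sylow
`r`-subgroup is normal in `G`. -/
theorem IsSupersolvable.isPGroup_abelianPowerResidual_or_exists_normal_prime_card {G : Type*}
    [Group G] [Finite G] (hG : IsSupersolvable G) (p : ℕ) :
    IsPGroup p (abelianPowerResidual G (p - 1)) ∨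
      ∃ R : Subgroup G, R.Normal ∧ R ≤ abelianPowerResidual G (p - 1) ∧
        (Nat.card R).Prime ∧ Nat.card R ≠ p := by
  induction hn : Nat.card G using Nat.strong_induction_on generalizing G with | _ n ih => ?_
  subst hn
  obtain hV | hV := eq_or_ne (abelianPowerResidual G (p - 1)) ⊥
  · exact .inl (hV ▸ IsPGroup.of_bot)
  obtain ⟨M, _, hMV, hM⟩ := hG.exists_normal_prime_card_le hV
  obtain hMp | hMp := ne_or_eq (Nat.card M) p
  · exact .inr ⟨M, ‹_›, hMV, hM, hMp⟩
  have : Fact p.Prime := ⟨hMp ▸ hM⟩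
  have hMp' : IsPGroup p M := .of_card (n := 1) (hMp.trans (pow_one p).symm)
  have hcent : abelianPowerResidual G (p - 1) ≤ centralizer (M : Set G) :=
    hMp ▸ abelianPowerResidual_le_centralizer hM
  let π := QuotientGroup.mk' M
  have hπ : Function.Surjective π := QuotientGroup.mk'_surjective M
  have hcomap :
      (abelianPowerResidual (G ⧸ M) (p - 1)).comap π = abelianPowerResidual G (p - 1) := by
    rw [← map_abelianPowerResidual hπ, comap_map_eq, QuotientGroup.ker_mk', sup_eq_left.mpr hMV]
  have hlt : Nat.card (G ⧸ M) < Nat.card G := card_quotient_lt_card (ne_bot_of_prime_card hM)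
  obtain hp | ⟨R, _, hRV, hR, hRp⟩ := ih _ hlt (hG.of_surjective hπ) rfl
  · refine .inl (hcomap ▸ hp.comap_of_ker_isPGroup π ?_)
    rwa [QuotientGroup.ker_mk']
  · have : Fact (Nat.card R).Prime := ⟨hR⟩
    have : IsCyclic R := isCyclic_of_prime_card rfl
    have hE : R.comap π ≤ abelianPowerResidual G (p - 1) := hcomap ▸ comap_mono hRV
    have := isMulCommutative_comap_mk' (hE.trans hcent)
    let P : Sylow (Nat.card R) (R.comap π) := default
    have : (P : Subgroup (R.comap π)).Characteristic := P.characteristic_of_normal inferInstance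
    have hcard := card_map_sylow_comap_mk' hRp.symm hMp' (.of_card (pow_one _).symm) P
    exact .inr ⟨P.map (R.comap π).subtype, inferInstance,
      (map_subtype_le _).trans hE, by rwa [hcard], by rwa [hcard]⟩

theorem IsSupersolvable.of_forall_quotient_of_frattini_ne_bot {G : Type*} [Group G] [Finite G]
    (hΦ : frattini G ≠ ⊥)
    (h : ∀ (Q : Subgroup G) [Q.Normal], Q ≠ ⊥ → IsSupersolvable (G ⧸ Q)) : IsSupersolvable G := by
  suffices ∃ Q : Subgroup G, Q.Normal ∧ Q ≠ ⊥ ∧ IsCyclic Q by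
    obtain ⟨Q, _, hQ, _⟩ := this
    exact .of_quotient_of_isCyclic (h Q hQ)
  obtain ⟨M, hMΦ, hM⟩ := exists_isMinimalNormal_le hΦ
  have := hM.prop.1
  obtain ⟨p, hp, hMp⟩ := hM.exists_isPGroup_of_le_frattini hMΦ
  have : Fact p.Prime := ⟨hp⟩
  let π := QuotientGroup.mk' M
  obtain hpV | ⟨R, _, -, hR, hRp⟩ :=
    (h M hM.prop.2).isPGroup_abelianPowerResidual_or_exists_normal_prime_card p
  · have hV : IsPGroup p (abelianPowerResidual G (p - 1)) := by
      refine (hpV.comap_of_ker_isPGroup π (by rwa [QuotientGroup.ker_mk'])).to_le ?_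
      exact map_le_iff_le_comap.mp (map_abelianPowerResidual (QuotientGroup.mk'_surjective M)).le
    have : IsMulCommutative M :=
      le_centralizer_iff_isMulCommutative.mp (hM.le_centralizer_of_isPGroup hMp hMp)
    exact ⟨M, ‹_›, hM.prop.2,
      hM.isCyclic_of_abelianPowerResidual_le_centralizer hMp (hM.le_centralizer_of_isPGroup hMp hV)⟩
  · have : Fact (Nat.card R).Prime := ⟨hR⟩
    have hRq : IsPGroup (Nat.card R) R := .of_card (pow_one _).symm
    let P : Sylow (Nat.card R) (R.comap π) := default
    have hcard := card_map_sylow_comap_mk' hRp.symm hMp hRq P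
    have hE : R.comap π ≤ P.map (R.comap π).subtype ⊔ frattini G :=
      (map_sylow_comap_mk'_sup hRp.symm hMp hRq P).ge.trans (sup_le_sup_left hMΦ _)
    exact ⟨_, normal_map_sylow_of_le_sup_frattini hE, ne_bot_of_prime_card (by rwa [hcard]),
      isCyclic_of_prime_card hcard⟩

/-- If `N` is a normal subgroup of a finite group `G` contained in the Frattini subgroup
and `G/N` is supersolvable, then `G` is supersolvable. -/
theorem supersolvable_of_quotient_frattini (G : Type*) [Group G] [Fintype G]
    (N : Subgroup G) [N.Normal] (hN : N ≤ frattini G)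
    (h : IsSupersolvable (G ⧸ N)) : IsSupersolvable G := by
  induction hn : Nat.card G using Nat.strong_induction_on generalizing G with | _ n ih => ?_
  subst hn
  obtain rfl | hbot := eq_or_ne N ⊥
  · exact h.of_quotient_of_isCyclic
  refine .of_forall_quotient_of_frattini_ne_bot (ne_bot_of_le_ne_bot hbot hN) fun Q _ hQ ↦ ?_
  let π := QuotientGroup.mk' Q
  have hπ : Function.Surjective π := QuotientGroup.mk'_surjective Q
  have : (N.map π).Normal := .map ‹_› π hπ
  have hNπ : N.map π ≤ frattini (G ⧸ Q) :=
    map_le_iff_le_comap.mpr (hN.trans (frattini_le_comap_frattini_of_surjective hπ))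
  have hlt : Nat.card (G ⧸ Q) < Nat.card G := card_quotient_lt_card hQ
  have := Fintype.ofFinite (G ⧸ Q)
  exact ih _ hlt (G ⧸ Q) (N.map π) hNπ (h.quotient_map hπ) rfl
end
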